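/- Let M be a compact, connected topological 2-manifold without boundary. Then M is simply connected if and only if for every subset C ⊆ M that is homeomorphic to the circle S¹, the complement M \ C has exactly two connected components. -/

import Mathlib

/-! Circles in `M` are ranges of continuous 1-periodic maps `ℝ → M` injective modulo `ℤ`
(`IsCircle`), and the manifold structure is used only through open embeddings `ℂ → M` (`HasCharts`).

**Simply connected ⇒ every circle has two complementary components.** A circle is locally
two-sided. In the plane this is a winding number argument with logarithms of products of the
functions `z - y`, all of whose topological content is in `no_log_frontier`. Near an interior point
of an arc, three points off the arc cannot be pairwise separated (`planar_three`), and there is a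
locally constant function off the arc that takes at least two values near every point of the arc
(`planar_two`). Together they give a local side function (`planar_sides`, `two_sided`). So every
complementary component is adherent to the whole circle, and there are at most two of them
(`three_points`). Two local side functions differ locally by a constant of `Bool`, so they are the
trivializations of a double cover of `M`; for simply connected `M` this cover has a section, which
turns them into a global side function (`exists_sides`), and there are at least two components.

**Every circle separates ⇒ simply connected.** The main step is that any two paths with the same
endpoints inside one circle are homotopic in `M` (`Null`, `all_null`). By the theta lemma
(`theta`), an arc crossing a side `P` of a circle `C` replaces `C` by two circles having disjoint
sides inside `P`, and if `C` is not null then one of the two is not null (`null_of_arcs`).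
Let `C` be a circle that is not null and that meets the half disc of a chart. The unit circle of the
chart cuts `P` along crosscuts. Those shorter than some constant cut off only a part of `P`
contained in an annulus of the chart (`thin_uniform`), so finitely many replacements along long
crosscuts suffice to reach a circle that is not null, with a side that either misses the half disc
or has only thin crosscuts. The latter would make the side, and hence the circle, lie in the chart
(`small_of_thin`), where everything is null. Thus the side can be shrunk to miss the half disc
(`reduction`). A finite cover of `M` by half discs makes this a finite descent: at the end the side
contains every half disc that it meets, so it is open and closed, which is absurd.

Finally, every path is homotopic to a simple arc (`tame_path`). A simple arc followed by a path in a
chart is replaced by a shorter simple arc followed by a straight segment of the chart. The part of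
the arc that is dropped returns to the segment along excursions, and each excursion closes up to a
circle, which is null. A simple arc from a point to itself is constant, so all loops are
null-homotopic. -/

/-- A topological space is locally Euclidean of dimension `n` if every point has an
open neighborhood homeomorphic to `ℝⁿ`. -/
def IsLocEuclidean (n : ℕ) (M : Type*) [TopologicalSpace M] : Prop :=
  ∀ x : M, ∃ U : Set M, IsOpen U ∧ x ∈ U ∧ Nonempty (U ≃ₜ EuclideanSpace ℝ (Fin n))

open Set Filter Topology

/-! ### Logarithms of nonvanishing plane functions and winding numbers -/

/-- A continuous logarithm of the constant `1` is constant on connected sets. -/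
theorem exp_one_const {X : Type*} [TopologicalSpace X] {s : Set X} (hs : IsPreconnected s)
    {g : X → ℂ} (hg : ContinuousOn g s) (h1 : ∀ x ∈ s, Complex.exp (g x) = 1)
    {x y : X} (hx : x ∈ s) (hy : y ∈ s) : g x = g y := by
  let T : Set ℂ := {w | Complex.exp w = 1}
  have hT : DiscreteTopology T := by
    refine DiscreteTopology.of_forall_le_dist (r := 2 * Real.pi) (by positivity) ?_
    rintro ⟨u, hu⟩ ⟨v, hv⟩ huv
    obtain ⟨n, hn⟩ := Complex.exp_eq_one_iff.1 (show Complex.exp (u - v) = 1 by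
      rw [Complex.exp_sub, show Complex.exp u = 1 from hu, show Complex.exp v = 1 from hv, div_one])
    rw [Subtype.dist_eq, dist_eq_norm]
    change _ ≤ ‖u - v‖
    have hn0 : n ≠ 0 := by
      rintro rfl
      apply huv
      ext1
      simpa [sub_eq_zero] using hn
    have : (1 : ℝ) ≤ |(n : ℝ)| := by exact_mod_cast Int.one_le_abs hn0
    rw [hn]
    simp only [norm_mul, Complex.norm_intCast, Complex.norm_ofNat, Complex.norm_real,
      Complex.norm_I, mul_one, Real.norm_eq_abs, abs_of_pos Real.pi_pos]
    nlinarith [Real.pi_pos]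
  exact hs.constant_of_mapsTo (T := T) ⟨hT⟩ hg (fun z hz => h1 z hz) hx hy

/-- If `(z - y) ^ n` has a continuous logarithm on a circle around `y`, its winding number `n`
vanishes. -/
theorem winding_zero {L : ℂ → ℂ} (hL : Continuous L) {y : ℂ} {R : ℝ} (hR : 0 < R) {n : ℤ}
    (h : ∀ z, ‖z - y‖ = R → Complex.exp (L z) = (z - y) ^ n) : n = 0 := by
  let e : ℝ → ℂ := fun θ => Real.log R + θ * Complex.I
  have he : ∀ θ, Complex.exp (e θ) = R * Complex.exp (θ * Complex.I) := by
    intro θ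
    simp only [e, Complex.exp_add, ← Complex.ofReal_exp, Real.exp_log hR]
  have key : ∀ θ : ℝ, Complex.exp (L (y + Complex.exp (e θ)) - n * e θ) = 1 := by
    intro θ
    rw [Complex.exp_sub, h, Complex.exp_int_mul]
    · rw [add_sub_cancel_left]
      exact div_self (zpow_ne_zero _ (Complex.exp_ne_zero _))
    · simp [he, abs_of_pos hR, Complex.norm_exp_ofReal_mul_I]
  have hc : Continuous fun θ : ℝ => L (y + Complex.exp (e θ)) - n * e θ := by
    simp only [e]; fun_prop
  have := exp_one_const isPreconnected_univ hc.continuousOn (fun θ _ => key θ)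
    (mem_univ (0 : ℝ)) (mem_univ (2 * Real.pi))
  simp only [he] at this
  simp [e, Complex.exp_two_pi_mul_I] at this
  exact this

theorem exists_log_complex {h : ℂ → ℂ} (hc : Continuous h) (h0 : ∀ z, h z ≠ 0) :
    ∃ L : ℂ → ℂ, Continuous L ∧ ∀ z, Complex.exp (L z) = h z := by
  obtain ⟨F, ⟨-, hF⟩, -⟩ := Complex.isCoveringMapOn_exp.existsUnique_continuousMap_lifts
    (⟨h, hc⟩ : C(ℂ, ℂ)) (a₀ := 0) (e₀ := Complex.log (h 0)) (Complex.exp_log (h0 0)) h0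
  exact ⟨F, F.continuous, fun z => congr_fun hF z⟩

/-- The function `(z - y) ^ a * Φ z`, with `Φ` nonvanishing on the closure of a bounded open set
`V` containing `y`, has no continuous logarithm on the frontier of `V` unless `a = 0`. Indeed,
extend a logarithm to a continuous function `G` on the plane, and glue `Φ * exp (-G)` on `V` with
`(z - y) ^ (-a)` outside `V`. The result is continuous and nonvanishing on the plane, so it has a
logarithm, and therefore `(z - y) ^ (-a)` has one on a large circle. -/
theorem no_log_frontier {V : Set ℂ} (hV : IsOpen V) (hb : Bornology.IsBounded V) {y : ℂ}
    (hy : y ∈ V) {a : ℤ} {Φ g : ℂ → ℂ} (hΦ : ContinuousOn Φ (closure V))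
    (hΦ0 : ∀ z ∈ closure V, Φ z ≠ 0) (hg : ContinuousOn g (frontier V))
    (h : ∀ z ∈ frontier V, Complex.exp (g z) = (z - y) ^ a * Φ z) : a = 0 := by
  obtain ⟨G, hG⟩ := ContinuousMap.exists_restrict_eq (Y := ℂ) (isClosed_frontier (s := V))
    ⟨(frontier V).domRestrict g, continuousOn_iff_continuous_domRestrict.1 hg⟩
  have hG' : ∀ z ∈ frontier V, G z = g z := fun z hz => congr_fun (congr_arg DFunLike.coe hG) ⟨z, hz⟩
  classical
  let H : ℂ → ℂ := V.piecewise (fun z => Φ z * Complex.exp (-G z)) (fun z => (z - y) ^ (-a))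
  have hyc : ∀ z ∈ Vᶜ, z - y ≠ 0 := fun z hz h => hz (by rwa [sub_eq_zero.1 h])
  have hHc : Continuous H := by
    rw [← continuousOn_univ]
    refine ContinuousOn.piecewise ?_ ?_ ?_
    · rintro z ⟨-, hz⟩
      have h0 : z - y ≠ 0 := hyc z (by rw [hV.frontier_eq] at hz; exact hz.2)
      simp only [Complex.exp_neg, zpow_neg, hG' z hz, h z hz]
      have := hΦ0 z (frontier_subset_closure hz)
      field_simp
    · simp only [univ_inter]
      exact hΦ.mul (by fun_prop)
    · simp only [univ_inter, hV.isClosed_compl.closure_eq]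
      exact ContinuousOn.zpow₀ (by fun_prop) _ fun z hz => Or.inl (hyc z hz)
  have hH0 : ∀ z, H z ≠ 0 := by
    intro z
    by_cases hz : z ∈ V
    · simp [H, hz, hΦ0 z (subset_closure hz)]
    · simp only [H, piecewise_eq_of_notMem _ _ _ hz]
      exact zpow_ne_zero _ (hyc z hz)
  obtain ⟨L, hL, hLe⟩ := exists_log_complex hHc hH0
  obtain ⟨R, hR, hVR⟩ := hb.subset_ball_lt 0 y
  have := winding_zero hL (y := y) (n := -a) hR (by
    intro z hz
    rw [hLe]
    have : z ∉ V := fun hzV => by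
      have := hVR hzV
      rw [Metric.mem_ball, dist_eq_norm] at this
      linarith
    simp [H, this])
  simpa using this

/-! ### Gluing logarithms -/

/-- The points `u` and `v` lie in a common preconnected subset of `S`. For locally connected open
`S` this says that they are in the same component. -/
def SameSide {X : Type*} [TopologicalSpace X] (S : Set X) (u v : X) : Prop :=
  ∃ T ⊆ S, IsPreconnected T ∧ u ∈ T ∧ v ∈ T

theorem exists_log_real {h : ℝ → ℂ} (hc : Continuous h) (h0 : ∀ z, h z ≠ 0) :
    ∃ L : ℝ → ℂ, Continuous L ∧ ∀ z, Complex.exp (L z) = h z := by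
  obtain ⟨F, ⟨-, hF⟩, -⟩ := Complex.isCoveringMapOn_exp.existsUnique_continuousMap_lifts
    (⟨h, hc⟩ : C(ℝ, ℂ)) (a₀ := 0) (e₀ := Complex.log (h 0)) (Complex.exp_log (h0 0)) h0
  exact ⟨F, F.continuous, fun z => congr_fun hF z⟩

theorem continuousOn_invFunOn {X Y : Type*} [TopologicalSpace X] [TopologicalSpace Y] [T2Space Y]
    [Nonempty X]
    {K : Set X} (hK : IsCompact K) {a : X → Y} (ha : ContinuousOn a K) (hi : InjOn a K) :
    ContinuousOn (Function.invFunOn a K) (a '' K) := by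
  rw [continuousOn_iff_isClosed]
  intro F hF
  refine ⟨a '' (K ∩ F), ((hK.inter_right hF).image_of_continuousOn
    (ha.mono inter_subset_left)).isClosed, ?_⟩
  ext z
  constructor
  · rintro ⟨hz, x, hx, rfl⟩
    rw [mem_preimage, hi.leftInvOn_invFunOn hx] at hz
    exact ⟨⟨x, ⟨hx, hz⟩, rfl⟩, ⟨x, hx, rfl⟩⟩
  · rintro ⟨⟨x, ⟨hx, hz⟩, rfl⟩, -⟩
    refine ⟨?_, ⟨x, hx, rfl⟩⟩
    rwa [mem_preimage, hi.leftInvOn_invFunOn hx]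

/-- The first time at which `φ` takes the value `r`. -/
theorem first_hit {φ : ℝ → ℝ} (hφ : Continuous φ) {r : ℝ} (h0 : φ 0 < r) (h1 : r < φ 1) :
    ∃ s, 0 < s ∧ s < 1 ∧ φ s = r ∧ ∀ t, 0 ≤ t → t < s → φ t < r := by
  let S := Icc (0:ℝ) 1 ∩ φ ⁻¹' {r}
  have hS : IsCompact S := isCompact_Icc.inter_right (isClosed_singleton.preimage hφ)
  have hne : S.Nonempty := by
    obtain ⟨s, hs, hsr⟩ := intermediate_value_Icc zero_le_one hφ.continuousOn ⟨h0.le, h1.le⟩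
    exact ⟨s, hs, hsr⟩
  obtain ⟨s, ⟨hs, hsr⟩, hmin⟩ := hS.exists_isLeast hne
  have hsr' : φ s = r := hsr
  refine ⟨s, lt_of_le_of_ne hs.1 ?_, lt_of_le_of_ne hs.2 ?_, hsr, ?_⟩
  · rintro rfl; linarith
  · rintro rfl; linarith
  · intro t ht hts
    by_contra! hle
    obtain ⟨u, hu, hur⟩ := intermediate_value_Icc ht hφ.continuousOn ⟨h0.le, hle⟩
    have := hmin ⟨⟨hu.1, by linarith [hu.2, hs.2]⟩, hur⟩
    linarith [hu.2]

theorem frontier_component {X : Type*} [TopologicalSpace X] [LocallyConnectedSpace X] {U : Set X}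
    (hU : IsOpen U) (y : X) : Disjoint (frontier (connectedComponentIn U y)) U := by
  rw [Set.disjoint_left]
  intro z hz hzU
  have ho : IsOpen (connectedComponentIn U z) := hU.connectedComponentIn
  obtain ⟨w, hw1, hw2⟩ := mem_closure_iff.1 (frontier_subset_closure hz) _ ho
    (mem_connectedComponentIn hzU)
  have h1 := connectedComponentIn_eq hw1
  have h2 := connectedComponentIn_eq hw2
  rw [hU.connectedComponentIn.frontier_eq] at hz
  apply hz.2
  rw [h2, ← h1]
  exact mem_connectedComponentIn hzU

/-- A logarithm `μ` of `F` along a simple arc `Γ` and a logarithm `m` of `F` on a closed set `K₂`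
that meets `Γ` only in its endpoints, equal at these endpoints, glue to a logarithm of `F` on `Γ ∪
K₂`. -/
theorem log_glue {Γ K₂ : Set ℂ} {a : ℝ → ℂ} (ha : Continuous a) {s₁ s₂ : ℝ} (hs : s₁ ≤ s₂)
    (hinj : InjOn a (Icc s₁ s₂)) (hΓ : Γ = a '' Icc s₁ s₂)
    (hK₂ : IsClosed K₂) (hint : Γ ∩ K₂ ⊆ {a s₁, a s₂})
    {μ : ℝ → ℂ} (hμ : Continuous μ) {m : ℂ → ℂ} (hm : ContinuousOn m K₂)
    (h1 : μ s₁ = m (a s₁)) (h2 : μ s₂ = m (a s₂)) {F : ℂ → ℂ}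
    (hFμ : ∀ s ∈ Icc s₁ s₂, Complex.exp (μ s) = F (a s))
    (hFm : ∀ z ∈ K₂, Complex.exp (m z) = F z) :
    ∃ g : ℂ → ℂ, ContinuousOn g (Γ ∪ K₂) ∧ ∀ z ∈ Γ ∪ K₂, Complex.exp (g z) = F z := by
  classical
  let g : ℂ → ℂ := fun z => if z ∈ Γ then μ (Function.invFunOn a (Icc s₁ s₂) z) else m z
  have hleft := hinj.leftInvOn_invFunOn
  have hgΓ : ∀ s ∈ Icc s₁ s₂, g (a s) = μ s := by
    intro s hs
    have : a s ∈ Γ := hΓ ▸ ⟨s, hs, rfl⟩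
    simp only [g, this, if_true, hleft hs]
  have hgK : ∀ z ∈ K₂, g z = m z := by
    intro z hz
    by_cases hzΓ : z ∈ Γ
    · rcases hint ⟨hzΓ, hz⟩ with rfl | rfl
      · rw [hgΓ _ ⟨le_rfl, hs⟩, h1]
      · rw [hgΓ _ ⟨hs, le_rfl⟩, h2]
    · simp [g, hzΓ]
  have hΓc : IsClosed Γ := by
    rw [hΓ]; exact (isCompact_Icc.image ha).isClosed
  refine ⟨g, ContinuousOn.union_of_isClosed ?_ ?_ hΓc hK₂, ?_⟩
  · have : ContinuousOn (fun z => μ (Function.invFunOn a (Icc s₁ s₂) z)) Γ := by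
      refine hμ.comp_continuousOn ?_
      rw [hΓ]
      exact continuousOn_invFunOn isCompact_Icc ha.continuousOn hinj
    refine this.congr fun z hz => ?_
    simp [g, hz]
  · exact hm.congr hgK
  · rintro z (hz | hz)
    · rw [hΓ] at hz
      obtain ⟨s, hs, rfl⟩ := hz
      rw [hgΓ s hs, hFμ s hs]
    · rw [hgK z hz, hFm z hz]

theorem exists_int_rel (n₁ n₂ : ℤ) : ∃ c₁ c₂ : ℤ, (c₁ ≠ 0 ∨ c₂ ≠ 0) ∧ c₁ * n₁ + c₂ * n₂ = 0 := by
  by_cases h : n₁ = 0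
  · exact ⟨1, 0, by simp, by simp [h]⟩
  · exact ⟨-n₂, n₁, Or.inr h, by ring⟩

/-! ### An arc has locally at most two sides -/

/-- An arc has locally at most two sides: of three points close to the interior point `x` of the
arc, two can be joined off the arc inside `N`. Let `K` consist of a sphere around `x` and the part
of the arc in the closed ball. For points `y₀, y₁, y₂` pairwise separated by `K`, the sub-arc `Γ`
of `K` through `x` meets the rest `K₂` of `K` only in its two endpoints, so the obstruction to
gluing a logarithm of `(z - yᵢ) / (z - y₀)` on `Γ` with one on `K₂` is a single integer. Two such
integers satisfy a nontrivial relation `c₁, c₂`, which makes `((z - y₁) / (z - y₀)) ^ c₁ * ((z -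
y₂) / (z - y₀)) ^ c₂` have a logarithm on `K`. By `no_log_frontier` on the components of `y₁` and
`y₂`, both exponents vanish. -/
theorem planar_three {a : ℝ → ℂ} (ha : Continuous a) (hinj : InjOn a (Icc (-1) 1)) {x : ℂ}
    (hx : a 0 = x) {N : Set ℂ} (hN : N ∈ 𝓝 x) :
    ∃ N' ∈ 𝓝 x, ∀ y₀ ∈ N' \ a '' Icc (-1) 1, ∀ y₁ ∈ N' \ a '' Icc (-1) 1,
      ∀ y₂ ∈ N' \ a '' Icc (-1) 1, SameSide (N \ a '' Icc (-1) 1) y₀ y₁ ∨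
        SameSide (N \ a '' Icc (-1) 1) y₀ y₂ ∨ SameSide (N \ a '' Icc (-1) 1) y₁ y₂ := by
  set A := a '' Icc (-1) 1 with hA
  have hm1 : a (-1) ≠ x := fun h => by
    have := hinj (by simp) (by simp) (h.trans hx.symm); norm_num at this
  have hp1 : a 1 ≠ x := fun h => by
    have := hinj (by simp) (by simp) (h.trans hx.symm); norm_num at this
  obtain ⟨r, hr, hrN, hrm, hrp⟩ : ∃ r > 0, Metric.closedBall x r ⊆ N ∧ r < ‖a (-1) - x‖ ∧
      r < ‖a 1 - x‖ := by
    obtain ⟨ε, hε, hεN⟩ := Metric.nhds_basis_closedBall.mem_iff.1 hN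
    have h1 : 0 < ‖a (-1) - x‖ := norm_pos_iff.2 (sub_ne_zero.2 hm1)
    have h2 : 0 < ‖a 1 - x‖ := norm_pos_iff.2 (sub_ne_zero.2 hp1)
    refine ⟨min ε (min (‖a (-1) - x‖ / 2) (‖a 1 - x‖ / 2)), by positivity,
      (Metric.closedBall_subset_closedBall (min_le_left _ _)).trans hεN, ?_, ?_⟩
    · refine lt_of_le_of_lt ((min_le_right _ _).trans (min_le_left _ _)) (by linarith)
    · refine lt_of_le_of_lt ((min_le_right _ _).trans (min_le_right _ _)) (by linarith)
  obtain ⟨s₂, hs20, hs21, hs2r, hs2⟩ := first_hit (φ := fun s => ‖a s - x‖) (by fun_prop) (r := r)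
    (by simp [hx, hr]) hrp
  obtain ⟨s₁', hs10, hs11, hs1r, hs1⟩ := first_hit (φ := fun s => ‖a (-s) - x‖)
    ((ha.comp continuous_neg).sub continuous_const).norm (r := r)
    (by simp [hx, hr]) hrm
  obtain ⟨s₁, rfl⟩ : ∃ s₁, s₁' = -s₁ := ⟨-s₁', by simp⟩
  simp only [neg_neg] at hs1r
  have hlt : ∀ s, s₁ < s → s < s₂ → ‖a s - x‖ < r := by
    intro s h1 h2
    rcases le_total 0 s with h | h
    · exact hs2 s h h2
    · have := hs1 (-s) (by linarith) (by linarith)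
      simpa using this
  have hs12 : s₁ ≤ s₂ := by linarith
  have hsub : Icc s₁ s₂ ⊆ Icc (-1) 1 := Icc_subset_Icc (by linarith) (by linarith)
  set J : Set ℝ := Icc (-1) s₁ ∪ Icc s₂ 1 with hJ
  have hJsub : J ⊆ Icc (-1) 1 := by
    rintro s (hs | hs)
    · exact ⟨hs.1, by linarith [hs.2]⟩
    · exact ⟨by linarith [hs.1], hs.2⟩
  set A' := a '' J with hA'
  have hA'c : IsClosed A' := ((isCompact_Icc.union isCompact_Icc).image ha).isClosed
  have hxA' : x ∉ A' := by
    rintro ⟨s, hs, hsx⟩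
    have : s = 0 := hinj (hJsub hs) (by simp) (hsx.trans hx.symm)
    subst this
    rcases hs with hs | hs
    · linarith [hs.2]
    · linarith [hs.1]
  obtain ⟨ρ, hρ, hρr, hρA⟩ : ∃ ρ > 0, ρ ≤ r ∧ Disjoint (Metric.ball x ρ) A' := by
    obtain ⟨ε, hε, h⟩ := Metric.mem_nhds_iff.1 (hA'c.isOpen_compl.mem_nhds hxA')
    exact ⟨min ε r, by positivity, min_le_right _ _,
      (disjoint_compl_left.mono_left h).mono_left (Metric.ball_subset_ball (min_le_left _ _))⟩
  -- the compact set `K` of the proof is split into the sub-arc `Γ` through `x` and the rest `K₂`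
  set Γ := a '' Icc s₁ s₂ with hΓ
  set K₂ := Metric.sphere x r ∪ (A' ∩ Metric.closedBall x r) with hK₂
  have hK₂c : IsClosed K₂ := Metric.isClosed_sphere.union (hA'c.inter Metric.isClosed_closedBall)
  have hint : Γ ∩ K₂ ⊆ {a s₁, a s₂} := by
    rintro _ ⟨⟨s, hs, rfl⟩, hz⟩
    have : s = s₁ ∨ s = s₂ := by
      by_contra! hne
      have h1 : s₁ < s := lt_of_le_of_ne hs.1 hne.1.symm
      have h2 : s < s₂ := lt_of_le_of_ne hs.2 hne.2
      rcases hz with hz | ⟨⟨t, ht, hta⟩, -⟩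
      · have := hlt s h1 h2
        rw [mem_sphere_iff_norm] at hz
        linarith
      · have := hinj (hJsub ht) (hsub hs) hta
        subst this
        rcases ht with ht | ht
        · linarith [ht.2]
        · linarith [ht.1]
    rcases this with rfl | rfl <;> simp
  have hK₂far : ∀ z ∈ K₂, ρ ≤ ‖z - x‖ := by
    rintro z (hz | hz)
    · rw [mem_sphere_iff_norm] at hz; linarith
    · by_contra! h
      exact Set.disjoint_left.1 hρA (mem_ball_iff_norm.2 h) hz.1
  have hs1K : a s₁ ∈ K₂ := Or.inl (mem_sphere_iff_norm.2 hs1r)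
  have hs2K : a s₂ ∈ K₂ := Or.inl (mem_sphere_iff_norm.2 hs2r)
  set K := Γ ∪ K₂ with hK
  have hKc : IsClosed K := (isCompact_Icc.image ha).isClosed.union hK₂c
  have hAK : A ∩ Metric.closedBall x r ⊆ K := by
    rintro _ ⟨⟨s, hs, rfl⟩, hz⟩
    by_cases h1 : s ≤ s₁
    · exact Or.inr (Or.inr ⟨⟨s, Or.inl ⟨hs.1, h1⟩, rfl⟩, hz⟩)
    by_cases h2 : s₂ ≤ s
    · exact Or.inr (Or.inr ⟨⟨s, Or.inr ⟨h2, hs.2⟩, rfl⟩, hz⟩)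
    exact Or.inl ⟨s, ⟨by linarith, by linarith⟩, rfl⟩
  have hKA : K ⊆ Metric.sphere x r ∪ A := by
    rintro z (⟨s, hs, rfl⟩ | hz | ⟨⟨s, hs, rfl⟩, -⟩)
    · exact Or.inr ⟨s, hsub hs, rfl⟩
    · exact Or.inl hz
    · exact Or.inr ⟨s, hJsub hs, rfl⟩
  refine ⟨Metric.ball x ρ, Metric.ball_mem_nhds _ hρ, ?_⟩
  have hyK : ∀ y ∈ Metric.ball x ρ \ A, y ∈ Kᶜ := by
    rintro y ⟨hy, hyA⟩ hyK
    rcases hKA hyK with h | h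
    · rw [mem_sphere_iff_norm] at h
      rw [mem_ball_iff_norm] at hy
      linarith
    · exact hyA h
  have hVball : ∀ y ∈ Metric.ball x ρ \ A, connectedComponentIn Kᶜ y ⊆ Metric.ball x r \ A := by
    intro y hy
    have hb : connectedComponentIn Kᶜ y ⊆ Metric.ball x r := by
      refine isPreconnected_connectedComponentIn.subset_left_of_subset_union Metric.isOpen_ball
        (v := (Metric.closedBall x r)ᶜ) Metric.isClosed_closedBall.isOpen_compl
        (disjoint_compl_right.mono_left Metric.ball_subset_closedBall) ?_
        ⟨y, mem_connectedComponentIn (hyK y hy), Metric.ball_subset_ball hρr hy.1⟩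
      intro z hz
      have hz' : z ∉ K := connectedComponentIn_subset _ _ hz
      by_contra! h
      simp only [mem_union, mem_compl_iff, not_or, not_not, Metric.mem_ball,
        Metric.mem_closedBall, not_lt] at h
      exact hz' (Or.inr (Or.inl (le_antisymm h.2 h.1)))
    intro z hz
    refine ⟨hb hz, fun hzA => ?_⟩
    exact connectedComponentIn_subset _ _ hz (hAK ⟨hzA, Metric.ball_subset_closedBall (hb hz)⟩)
  have hVN : ∀ y ∈ Metric.ball x ρ \ A, connectedComponentIn Kᶜ y ⊆ N \ A := fun y hy z hz =>
    ⟨hrN (Metric.ball_subset_closedBall (hVball y hy hz).1), (hVball y hy hz).2⟩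
  intro y₀ hy₀ y₁ hy₁ y₂ hy₂
  by_contra! hcon
  obtain ⟨h01, h02, h12⟩ := hcon
  -- on `K₂`, the quotient `(z - y) / (z - x)` has distance less than `1` from `1`,
  -- so the principal branch of the logarithm applies
  let ℓ : ℂ → ℂ → ℂ := fun y z => Complex.log ((z - y) / (z - x))
  have hslit : ∀ y ∈ Metric.ball x ρ, ∀ z ∈ K₂, (z - y) / (z - x) ∈ Complex.slitPlane := by
    intro y hy z hz
    have h1 := hK₂far z hz
    have h2 : z - x ≠ 0 := norm_pos_iff.1 (by linarith)
    rw [mem_ball_iff_norm] at hy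
    have : (z - y) / (z - x) = 1 + (x - y) / (z - x) := by field_simp; ring
    rw [this]
    apply Complex.mem_slitPlane_of_norm_lt_one
    rw [norm_div, div_lt_one (by linarith), norm_sub_rev]
    linarith
  have hzx : ∀ z ∈ K₂, z - x ≠ 0 := fun z hz => norm_pos_iff.1 (by linarith [hK₂far z hz])
  have hℓc : ∀ y ∈ Metric.ball x ρ, ContinuousOn (ℓ y) K₂ := by
    intro y hy
    refine ContinuousOn.clog ?_ (hslit y hy)
    exact ContinuousOn.div (by fun_prop) (by fun_prop) hzx
  have hℓe : ∀ y ∈ Metric.ball x ρ, ∀ z ∈ K₂, Complex.exp (ℓ y z) = (z - y) / (z - x) :=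
    fun y hy z hz => Complex.exp_log (Complex.slitPlane_ne_zero (hslit y hy z hz))
  -- along the sub-arc, logarithms of `(z - y) / (z - y₀)` in the parameter; at an endpoint they
  -- differ from those on `K₂` by an integer multiple of `2 π i`
  let b : ℝ → ℂ := fun t => a (projIcc s₁ s₂ hs12 t)
  have hb : Continuous b := ha.comp (continuous_subtype_val.comp continuous_projIcc)
  have hbA : ∀ t, b t ∈ A := fun t => ⟨_, hsub (projIcc s₁ s₂ hs12 t).2, rfl⟩
  have hba : ∀ t ∈ Icc s₁ s₂, b t = a t := fun t ht => by simp [b, projIcc_of_mem hs12 ht]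
  have hby : ∀ y ∈ Metric.ball x ρ \ A, ∀ t, b t - y ≠ 0 := fun y hy t h => by
    apply hy.2; rw [← sub_eq_zero.1 h]; exact hbA t
  have hlam : ∀ y ∈ Metric.ball x ρ \ A, ∃ L : ℝ → ℂ, Continuous L ∧
      ∀ t, Complex.exp (L t) = (b t - y) / (b t - y₀) := fun y hy =>
    exists_log_real (h := fun t => (b t - y) / (b t - y₀))
      (Continuous.div (by fun_prop) (by fun_prop) (hby y₀ hy₀))
      (fun t => div_ne_zero (hby y hy t) (hby y₀ hy₀ t))
  have hmis : ∀ y ∈ Metric.ball x ρ \ A, ∀ L : ℝ → ℂ,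
      (∀ t, Complex.exp (L t) = (b t - y) / (b t - y₀)) → ∀ s ∈ Icc s₁ s₂, a s ∈ K₂ →
      ∃ k : ℤ, L s = ℓ y (a s) - ℓ y₀ (a s) + k * (2 * Real.pi * Complex.I) := by
    intro y hy L hL s hs hsK
    apply Complex.exp_eq_exp_iff_exists_int.1
    have := hzx _ hsK
    have h3 := hby y₀ hy₀ s
    rw [hba s hs] at h3
    rw [hL, Complex.exp_sub, hℓe y hy.1 _ hsK, hℓe y₀ hy₀.1 _ hsK, hba s hs]
    field_simp
  obtain ⟨L₁, hL₁c, hL₁⟩ := hlam y₁ hy₁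
  obtain ⟨L₂, hL₂c, hL₂⟩ := hlam y₂ hy₂
  obtain ⟨k₁₁, hk₁₁⟩ := hmis y₁ hy₁ L₁ hL₁ s₁ ⟨le_rfl, hs12⟩ hs1K
  obtain ⟨k₁₂, hk₁₂⟩ := hmis y₁ hy₁ L₁ hL₁ s₂ ⟨hs12, le_rfl⟩ hs2K
  obtain ⟨k₂₁, hk₂₁⟩ := hmis y₂ hy₂ L₂ hL₂ s₁ ⟨le_rfl, hs12⟩ hs1K
  obtain ⟨k₂₂, hk₂₂⟩ := hmis y₂ hy₂ L₂ hL₂ s₂ ⟨hs12, le_rfl⟩ hs2K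
  obtain ⟨c₁, c₂, hc, hrel⟩ := exists_int_rel (k₁₂ - k₁₁) (k₂₂ - k₂₁)
  have hrel' : (c₁ : ℂ) * (k₁₂ - k₁₁) + c₂ * (k₂₂ - k₂₁) = 0 := by exact_mod_cast hrel
  let F : ℂ → ℂ := fun z => ((z - y₁) / (z - y₀)) ^ c₁ * ((z - y₂) / (z - y₀)) ^ c₂
  have hexp2 : ∀ k : ℤ, Complex.exp (k * (2 * Real.pi * Complex.I)) = 1 :=
    fun k => Complex.exp_int_mul_two_pi_mul_I k
  obtain ⟨g, hgc, hg⟩ := log_glue (Γ := Γ) (K₂ := K₂) ha hs12 (hinj.mono hsub) rfl hK₂c hint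
    (μ := fun t => c₁ * L₁ t + c₂ * L₂ t
      - ((c₁ * k₁₁ + c₂ * k₂₁ : ℤ) : ℂ) * (2 * Real.pi * Complex.I)) (by fun_prop)
    (m := fun z => c₁ * (ℓ y₁ z - ℓ y₀ z) + c₂ * (ℓ y₂ z - ℓ y₀ z))
    (by
      have := hℓc y₁ hy₁.1
      have := hℓc y₂ hy₂.1
      have := hℓc y₀ hy₀.1
      fun_prop)
    (by simp only [hk₁₁, hk₂₁]; push_cast; ring)
    (by
      simp only [hk₁₂, hk₂₂]; push_cast
      linear_combination (2 * Real.pi * Complex.I) * hrel')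
    (F := F)
    (by
      intro s hs
      rw [Complex.exp_sub, Complex.exp_add, hexp2, Complex.exp_int_mul, Complex.exp_int_mul,
        hL₁, hL₂, hba s hs, div_one])
    (by
      intro z hz
      have h1 := hzx z hz
      rw [Complex.exp_add, Complex.exp_int_mul, Complex.exp_int_mul, Complex.exp_sub,
        Complex.exp_sub, hℓe y₁ hy₁.1 z hz, hℓe y₂ hy₂.1 z hz, hℓe y₀ hy₀.1 z hz]
      simp only [F]
      rw [div_div_div_cancel_right₀ h1, div_div_div_cancel_right₀ h1])
  -- the components of `y₁` and `y₂` in the complement of `K` are bounded with frontier in `K`, and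
  -- their closures do not contain the other two points
  have hfr : ∀ y, frontier (connectedComponentIn Kᶜ y) ⊆ K := fun y z hz => by
    by_contra h
    exact Set.disjoint_left.1 (frontier_component hKc.isOpen_compl y) hz h
  have hbd : ∀ y ∈ Metric.ball x ρ \ A, Bornology.IsBounded (connectedComponentIn Kᶜ y) :=
    fun y hy => Metric.isBounded_ball.subset ((hVball y hy).trans sdiff_subset)
  have hncl : ∀ y ∈ Metric.ball x ρ \ A, ∀ y' ∈ Metric.ball x ρ \ A,
      ¬ SameSide (N \ A) y y' → ∀ z ∈ closure (connectedComponentIn Kᶜ y), z - y' ≠ 0 := by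
    intro y hy y' hy' hns z hz h
    rw [sub_eq_zero] at h
    subst h
    obtain ⟨w, hw1, hw2⟩ := mem_closure_iff.1 hz _ hKc.isOpen_compl.connectedComponentIn
      (mem_connectedComponentIn (hyK z hy'))
    refine hns ⟨connectedComponentIn Kᶜ y, hVN y hy, isPreconnected_connectedComponentIn,
      mem_connectedComponentIn (hyK y hy), ?_⟩
    rw [connectedComponentIn_eq hw2, ← connectedComponentIn_eq hw1]
    exact mem_connectedComponentIn (hyK z hy')
  have hsymm : ∀ {u v}, ¬ SameSide (N \ A) u v → ¬ SameSide (N \ A) v u := by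
    rintro u v h ⟨T, h1, h2, h3, h4⟩
    exact h ⟨T, h1, h2, h4, h3⟩
  have hfrne : ∀ y ∈ Metric.ball x ρ \ A, ∀ z ∈ K, z - y ≠ 0 := by
    intro y hy z hz h
    rw [sub_eq_zero] at h
    subst h
    exact hyK z hy hz
  have hΦ : ∀ y ∈ Metric.ball x ρ \ A, ∀ y' ∈ Metric.ball x ρ \ A, ¬ SameSide (N \ A) y y' →
      ¬ SameSide (N \ A) y y₀ → ∀ c c' : ℤ, (∀ z ∈ K, Complex.exp (g z) =
        ((z - y) / (z - y₀)) ^ c * ((z - y') / (z - y₀)) ^ c') → c = 0 := by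
    intro y hy y' hy' h1 h2 c c' hgF
    have e1 := hncl y hy y' hy' h1
    have e2 := hncl y hy y₀ hy₀ h2
    refine no_log_frontier hKc.isOpen_compl.connectedComponentIn (hbd y hy)
      (mem_connectedComponentIn (hyK y hy)) (g := g)
      (Φ := fun z => (z - y') ^ c' * (z - y₀) ^ (-c - c')) ?_ ?_ (hgc.mono (hfr y)) ?_
    · refine ContinuousOn.mul ?_ ?_
      · exact ContinuousOn.zpow₀ (by fun_prop) _ fun z hz => Or.inl (e1 z hz)
      · exact ContinuousOn.zpow₀ (by fun_prop) _ fun z hz => Or.inl (e2 z hz)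
    · intro z hz
      exact mul_ne_zero (zpow_ne_zero _ (e1 z hz)) (zpow_ne_zero _ (e2 z hz))
    · intro z hz
      have e3 := e2 z (frontier_subset_closure hz)
      rw [hgF z (hfr y hz), div_zpow, div_zpow, sub_eq_add_neg (-c), zpow_add₀ e3, zpow_neg,
        zpow_neg]
      have := zpow_ne_zero c e3
      have := zpow_ne_zero c' e3
      field_simp
  have hc1 := hΦ y₁ hy₁ y₂ hy₂ h12 (hsymm h01) c₁ c₂ (fun z hz => hg z hz)
  have hc2 := hΦ y₂ hy₂ y₁ hy₁ (hsymm h12) (hsymm h02) c₂ c₁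
    (fun z hz => (hg z hz).trans (mul_comm _ _))
  tauto

/-! ### An arc has locally at least two sides -/

/-- Off an arc, the quotient `(z - a (-1)) / (z - a 1)` has a continuous logarithm: sliding the
point `a (-1)` along the arc to `a 1` is a homotopy to the constant `1` that avoids zero and lifts
through `exp`. -/
theorem log_off_arc {a : ℝ → ℂ} (ha : Continuous a) :
    ∃ L : ℂ → ℂ, ContinuousOn L (a '' Icc (-1) 1)ᶜ ∧ ∀ z ∈ (a '' Icc (-1) 1)ᶜ,
      Complex.exp (L z) = (z - a (-1)) / (z - a 1) := by
  classical
  set A := a '' Icc (-1) 1 with hA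
  have hne : ∀ (t : unitInterval) (z : ↥Aᶜ), (z : ℂ) - a (2 * t - 1) ≠ 0 := by
    intro t z h
    apply z.2
    rw [sub_eq_zero.1 h]
    exact ⟨_, ⟨by linarith [t.2.1], by linarith [t.2.2]⟩, rfl⟩
  have hne0 : ∀ z : ↥Aᶜ, (z : ℂ) - a (-1) ≠ 0 := by
    intro z; have := hne 0 z; simpa using this
  let H : C(unitInterval × ↥Aᶜ, {z : ℂ // z ≠ 0}) :=
    ⟨fun q => ⟨((q.2 : ℂ) - a (-1)) / (q.2 - a (2 * q.1 - 1)),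
      div_ne_zero (hne0 _) (hne _ _)⟩, by
      refine Continuous.subtype_mk ?_ _
      exact Continuous.div (by fun_prop) (by fun_prop) fun q => hne _ _⟩
  let F : C(↥Aᶜ, ℂ) := ContinuousMap.const _ 0
  have h0 : ∀ z, H (0, z) = (fun z : ℂ ↦ (⟨_, z.exp_ne_zero⟩ : {z : ℂ // z ≠ 0})) (F z) := by
    intro z
    apply Subtype.ext
    simp only [H, F, ContinuousMap.coe_mk, ContinuousMap.const_apply, Complex.exp_zero]
    norm_num
    exact hne0 z
  let Lt := Complex.isCoveringMap_exp.liftHomotopy H F h0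
  have hL : ∀ z : ↥Aᶜ, Complex.exp (Lt (1, z)) = (z - a (-1)) / (z - a 1) := by
    intro z
    have := congr_fun (Complex.isCoveringMap_exp.liftHomotopy_lifts H F h0) (1, z)
    have := congr_arg Subtype.val this
    simp only [Function.comp_apply] at this
    rw [this]
    simp only [H, ContinuousMap.coe_mk]
    norm_num
  refine ⟨fun z => if h : z ∈ Aᶜ then Lt (1, ⟨z, h⟩) else 0, ?_, ?_⟩
  · rw [continuousOn_iff_continuous_domRestrict]
    refine (Lt.continuous.comp (by fun_prop : Continuous fun z : ↥Aᶜ => ((1 : unitInterval), z))).congr ?_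
    intro z
    have := z.2
    simp only [domRestrict_apply, Function.comp_apply]
    rw [dif_pos this]
  · intro z hz
    simp only
    rw [dif_pos hz, hL ⟨z, hz⟩]

/-- An arc has locally at least two sides: off the arc near `x` there is a continuous function `f`
with values in `2 π i ℤ` which is not constant near any point of the arc. It is the difference of the
logarithm of `(z - a (-1)) / (z - a 1)` off the arc and a branch of it on a ball around `x`. If it
were constant near a point of the arc, the logarithm would extend across the arc there, to the
complement of two disjoint arcs, one containing `a (-1)` and the other `a 1`; a neighbourhood of
the first arc then contradicts `no_log_frontier`. -/
theorem planar_two {a : ℝ → ℂ} (ha : Continuous a) (hinj : InjOn a (Icc (-1) 1)) {x : ℂ}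
    (hx : a 0 = x) :
    ∃ r > 0, ∃ f : ℂ → ℂ, ContinuousOn f (Metric.ball x r \ a '' Icc (-1) 1) ∧
      (∀ z ∈ Metric.ball x r \ a '' Icc (-1) 1, Complex.exp (f z) = 1) ∧
      ∀ y ∈ a '' Icc (-1) 1 ∩ Metric.ball x r, ∀ W ∈ 𝓝 y, ∀ c,
        ∃ w ∈ W \ a '' Icc (-1) 1, f w ≠ c := by
  classical
  set A := a '' Icc (-1) 1 with hA
  set p := a (-1) with hp
  set q := a 1 with hq
  have hm1 : p ≠ x := fun h => by
    have := hinj (by simp) (by simp) (h.trans hx.symm); norm_num at this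
  have hp1 : q ≠ x := fun h => by
    have := hinj (by simp) (by simp) (h.trans hx.symm); norm_num at this
  have hAc : IsClosed A := (isCompact_Icc.image ha).isClosed
  obtain ⟨r, hr, hrp, hrq⟩ : ∃ r > 0, p ∉ Metric.ball x r ∧ q ∉ Metric.ball x r := by
    refine ⟨min (dist p x) (dist q x), ?_, ?_, ?_⟩
    · exact lt_min (dist_pos.2 hm1) (dist_pos.2 hp1)
    · simp
    · simp
  obtain ⟨L, hLc, hL⟩ := log_off_arc ha
  have hsc : IsSimplyConnected (Metric.ball x r) := by
    have := (convex_ball x r).contractibleSpace ⟨x, Metric.mem_ball_self hr⟩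
    exact (inferInstance : SimplyConnectedSpace (Metric.ball x r))
  have hpz : ∀ z ∈ Metric.ball x r, z - p ≠ 0 := fun z hz h => hrp (by rwa [← sub_eq_zero.1 h])
  have hqz : ∀ z ∈ Metric.ball x r, z - q ≠ 0 := fun z hz h => hrq (by rwa [← sub_eq_zero.1 h])
  obtain ⟨Mf, hMc, hM⟩ := Complex.exists_continuousOn_eqOn_exp_comp hsc Metric.isOpen_ball
    (g := fun z => (z - p) / (z - q)) (ContinuousOn.div (by fun_prop) (by fun_prop) hqz) (by
      rintro ⟨z, hz, h⟩
      exact div_ne_zero (hpz z hz) (hqz z hz) h)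
  have hf1 : ∀ z ∈ Metric.ball x r \ A, Complex.exp (L z - Mf z) = 1 := by
    intro z hz
    have h2 : Complex.exp (Mf z) = _ := hM hz.1
    rw [Complex.exp_sub, hL z hz.2, h2]
    exact div_self (div_ne_zero (hpz z hz.1) (hqz z hz.1))
  refine ⟨r, hr, fun z => L z - Mf z, (hLc.mono fun z hz => hz.2).sub
    (hMc.mono sdiff_subset), hf1, ?_⟩
  rintro _ ⟨⟨t₀, ht₀, rfl⟩, hyb⟩ W₀ hW₀ c₀
  by_contra! hcon₀
  obtain ⟨W, hWo, hyW, hWb, c, hc1, hcon⟩ : ∃ W, IsOpen W ∧ a t₀ ∈ W ∧ W ⊆ Metric.ball x r ∧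
      ∃ c, Complex.exp c = 1 ∧ ∀ w ∈ W \ A, L w - Mf w = c := by
    refine ⟨interior W₀ ∩ Metric.ball x r, isOpen_interior.inter Metric.isOpen_ball,
      ⟨mem_interior_iff_mem_nhds.2 hW₀, hyb⟩, inter_subset_right, ?_⟩
    by_cases hne : ((interior W₀ ∩ Metric.ball x r) \ A).Nonempty
    · obtain ⟨w, hw⟩ := hne
      refine ⟨c₀, ?_, fun w hw => hcon₀ w ⟨interior_subset hw.1.1, hw.2⟩⟩
      rw [← hcon₀ w ⟨interior_subset hw.1.1, hw.2⟩]
      exact hf1 w ⟨hw.1.2, hw.2⟩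
    · exact ⟨0, by simp, fun w hw => (hne ⟨w, hw⟩).elim⟩
  have h1 : t₀ ≠ -1 := by rintro rfl; exact hrp hyb
  have h2 : t₀ ≠ 1 := by rintro rfl; exact hrq hyb
  have h1' : -1 < t₀ := lt_of_le_of_ne ht₀.1 h1.symm
  have h2' : t₀ < 1 := lt_of_le_of_ne ht₀.2 h2
  obtain ⟨η, hη, hηm, hηp, hηW⟩ : ∃ η > 0, -1 ≤ t₀ - η ∧ t₀ + η ≤ 1 ∧
      ∀ t, |t - t₀| < η → a t ∈ W := by
    obtain ⟨ε, hε, h⟩ := Metric.mem_nhds_iff.1 (ha.continuousAt.preimage_mem_nhds (hWo.mem_nhds hyW))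
    refine ⟨min ε (min (t₀ + 1) (1 - t₀)), ?_, ?_, ?_, ?_⟩
    · exact lt_min hε (lt_min (by linarith) (by linarith))
    · have := (min_le_right ε (min (t₀ + 1) (1 - t₀))).trans (min_le_left _ _); linarith
    · have := (min_le_right ε (min (t₀ + 1) (1 - t₀))).trans (min_le_right _ _); linarith
    · intro t ht
      exact h (show dist t t₀ < ε from lt_of_lt_of_le ht (min_le_left _ _))
  set A₁ := a '' Icc (-1) (t₀ - η) with hA₁
  set A₂ := a '' Icc (t₀ + η) 1 with hA₂
  have hA₁k : IsCompact A₁ := isCompact_Icc.image ha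
  have hA₂k : IsCompact A₂ := isCompact_Icc.image ha
  have hdis : Disjoint A₁ A₂ := by
    rw [Set.disjoint_left]
    rintro _ ⟨s, hs, rfl⟩ ⟨t, ht, hts⟩
    have := hinj (⟨by linarith [ht.1], ht.2⟩) (⟨hs.1, by linarith [hs.2]⟩) hts
    linarith [hs.2, ht.1]
  -- the logarithm extends over the middle piece of the arc
  let L' : ℂ → ℂ := fun z => if z ∈ W then Mf z + c else L z
  have hL'A : ∀ z ∈ Aᶜ, L' z = L z := by
    intro z hz
    by_cases hW : z ∈ W
    · simp only [L', hW, if_true]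
      rw [← hcon z ⟨hW, hz⟩]; ring
    · simp [L', hW]
  have hcover : (A₁ ∪ A₂)ᶜ ⊆ W ∪ Aᶜ := by
    intro z hz
    by_contra h
    simp only [mem_union, mem_compl_iff, not_or, not_not] at h hz
    obtain ⟨hzW, s, hs, rfl⟩ := h
    by_cases h : |s - t₀| < η
    · exact hzW (hηW s h)
    · rw [abs_lt, not_and_or] at h
      rcases h with h | h
      · exact hz.1 ⟨s, ⟨hs.1, by linarith⟩, rfl⟩
      · exact hz.2 ⟨s, ⟨by linarith, hs.2⟩, rfl⟩
  have hL'c : ContinuousOn L' (A₁ ∪ A₂)ᶜ := by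
    refine ContinuousOn.mono ?_ hcover
    refine ContinuousOn.union_of_isOpen ?_ ?_ hWo hAc.isOpen_compl
    · refine ((hMc.mono hWb).add (continuousOn_const (c := c))).congr fun z hz => ?_
      simp [L', hz]
    · exact hLc.congr hL'A
  have hL'e : ∀ z ∈ (A₁ ∪ A₂)ᶜ, Complex.exp (L' z) = (z - p) / (z - q) := by
    intro z hz
    rcases hcover hz with h | h
    · simp only [L', h, if_true]
      rw [Complex.exp_add, hc1, mul_one]
      exact hM (hWb h)
    · rw [hL'A z h, hL z h]
  obtain ⟨δ, hδ, hdδ⟩ := hdis.exists_cthickenings hA₁k hA₂k.isClosed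
  set V := Metric.thickening δ A₁ with hV
  have hclV : closure V ⊆ Metric.cthickening δ A₁ := Metric.closure_thickening_subset_cthickening _ _
  have hV2 : ∀ z ∈ closure V, z ∉ A₂ := fun z hz hz2 =>
    Set.disjoint_left.1 hdδ (hclV hz) (Metric.self_subset_cthickening _ hz2)
  have hfrV : frontier V ⊆ (A₁ ∪ A₂)ᶜ := by
    rintro z hz (h | h)
    · rw [Metric.isOpen_thickening.frontier_eq] at hz
      exact hz.2 (Metric.self_subset_thickening hδ _ h)
    · exact hV2 z (frontier_subset_closure hz) h
  have hqcl : ∀ z ∈ closure V, z - q ≠ 0 := by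
    intro z hz h
    rw [sub_eq_zero] at h
    exact hV2 z hz (h ▸ ⟨1, ⟨hηp, le_rfl⟩, rfl⟩)
  have := no_log_frontier (V := V) (y := p) (a := 1) (Φ := fun z => (z - q)⁻¹) (g := L')
    Metric.isOpen_thickening (hA₁k.isBounded.thickening)
    (Metric.self_subset_thickening hδ _ ⟨-1, ⟨le_rfl, hηm⟩, rfl⟩)
    (ContinuousOn.inv₀ (by fun_prop) hqcl) (fun z hz => inv_ne_zero (hqcl z hz))
    (hL'c.mono hfrV) (fun z hz => by rw [hL'e z (hfrV hz), zpow_one, div_eq_mul_inv])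
  exact one_ne_zero this

/-! ### Circles in a surface are locally two-sided -/

theorem SameSide.mono {X : Type*} [TopologicalSpace X] {S S' : Set X} (h : S ⊆ S') {u v : X} :
    SameSide S u v → SameSide S' u v := fun ⟨T, h1, h2⟩ => ⟨T, h1.trans h, h2⟩

theorem SameSide.symm {X : Type*} [TopologicalSpace X] {S : Set X} {u v : X} :
    SameSide S u v → SameSide S v u := fun ⟨T, h1, h2, h3, h4⟩ => ⟨T, h1, h2, h4, h3⟩

/-- Near an interior point `x` of an arc there is a function `e` to `Bool`, locally constant off
the arc, taking both values near each point of the arc, and such that points with the same value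
can be joined off the arc. By `planar_three` the function of `planar_two` has exactly two values
near `x`. -/
theorem planar_sides {a : ℝ → ℂ} (ha : Continuous a) (hinj : InjOn a (Icc (-1) 1)) {x : ℂ}
    (hx : a 0 = x) {N : Set ℂ} (hN : N ∈ 𝓝 x) :
    ∃ U ⊆ N, IsOpen U ∧ x ∈ U ∧ ∃ e : ℂ → Bool,
      (∀ z ∈ U \ a '' Icc (-1) 1, ∀ᶠ w in 𝓝 z, e w = e z) ∧
      (∀ y ∈ a '' Icc (-1) 1 ∩ U, ∀ W ∈ 𝓝 y, ∀ b, ∃ w ∈ W \ a '' Icc (-1) 1, e w = b) ∧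
      ∀ u ∈ U \ a '' Icc (-1) 1, ∀ v ∈ U \ a '' Icc (-1) 1, e u = e v →
        SameSide (N \ a '' Icc (-1) 1) u v := by
  classical
  obtain ⟨r, hr, f, hfc, hf1, hfn⟩ := planar_two ha hinj hx
  obtain ⟨N', hN', h3⟩ := planar_three ha hinj hx (inter_mem hN (Metric.ball_mem_nhds x hr))
  set A := a '' Icc (-1) 1 with hA
  have hAc : IsClosed A := (isCompact_Icc.image ha).isClosed
  have hfs : ∀ u v, SameSide ((N ∩ Metric.ball x r) \ A) u v → f u = f v := by
    rintro u v ⟨T, hT, hTp, hu, hv⟩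
    have hT' : T ⊆ Metric.ball x r \ A := fun z hz => ⟨(hT hz).1.2, (hT hz).2⟩
    exact exp_one_const hTp (hfc.mono hT') (fun z hz => hf1 z (hT' hz)) hu hv
  set U := interior N' ∩ (interior N ∩ Metric.ball x r) with hU
  have hUo : IsOpen U := isOpen_interior.inter (isOpen_interior.inter Metric.isOpen_ball)
  have hxU : x ∈ U := ⟨mem_interior_iff_mem_nhds.2 hN', mem_interior_iff_mem_nhds.2 hN,
    Metric.mem_ball_self hr⟩
  have hxA : x ∈ A := ⟨0, by simp, hx⟩
  have key : ∀ u ∈ U \ A, ∀ v ∈ U \ A, ∀ w ∈ U \ A, f u ≠ f w → f v ≠ f w →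
      SameSide ((N ∩ Metric.ball x r) \ A) u v := by
    intro u hu v hv w hw h1 h2
    rcases h3 u ⟨interior_subset hu.1.1, hu.2⟩ v ⟨interior_subset hv.1.1, hv.2⟩ w
      ⟨interior_subset hw.1.1, hw.2⟩ with h | h | h
    · exact h
    · exact (h1 (hfs _ _ h)).elim
    · exact (h2 (hfs _ _ h)).elim
  obtain ⟨w₁, hw₁, -⟩ := hfn x ⟨hxA, hxU.2.2⟩ U (hUo.mem_nhds hxU) 0
  obtain ⟨w₀, hw₀, hw₀₁⟩ := hfn x ⟨hxA, hxU.2.2⟩ U (hUo.mem_nhds hxU) (f w₁)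
  have two : ∀ u ∈ U \ A, f u ≠ f w₁ → f u = f w₀ := fun u hu h =>
    hfs _ _ (key u hu w₀ hw₀ w₁ hw₁ h hw₀₁)
  have two' : ∀ u ∈ U \ A, f u ≠ f w₀ → f u = f w₁ := fun u hu h =>
    hfs _ _ (key u hu w₁ hw₁ w₀ hw₀ h hw₀₁.symm)
  refine ⟨U, fun z hz => interior_subset hz.2.1, hUo, hxU, fun z => decide (f z = f w₁), ?_, ?_, ?_⟩
  · intro z hz
    obtain ⟨ε, hε, hB⟩ := Metric.mem_nhds_iff.1 ((hUo.sdiff hAc).mem_nhds hz)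
    filter_upwards [Metric.ball_mem_nhds z hε] with w hw
    have : f w = f z := exp_one_const (convex_ball z ε).isPreconnected
      (hfc.mono fun y hy => ⟨(hB hy).1.2.2, (hB hy).2⟩)
      (fun y hy => hf1 y ⟨(hB hy).1.2.2, (hB hy).2⟩) hw (Metric.mem_ball_self hε)
    rw [this]
  · intro y hy W hW b
    have hWU : W ∩ U ∈ 𝓝 y := inter_mem hW (hUo.mem_nhds hy.2)
    cases b
    · obtain ⟨w, hw, hne⟩ := hfn y ⟨hy.1, hy.2.2.2⟩ _ hWU (f w₁)
      exact ⟨w, ⟨hw.1.1, hw.2⟩, by simpa using hne⟩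
    · obtain ⟨w, hw, hne⟩ := hfn y ⟨hy.1, hy.2.2.2⟩ _ hWU (f w₀)
      exact ⟨w, ⟨hw.1.1, hw.2⟩, by simpa using two' w ⟨hw.1.2, hw.2⟩ hne⟩
  · intro u hu v hv huv
    refine SameSide.mono (sdiff_subset_sdiff_left inter_subset_left) (S := (N ∩ Metric.ball x r) \ A) ?_
    by_cases h : f u = f w₁
    · have h' : f v = f w₁ := by simpa [h] using huv
      exact key u hu v hv w₀ hw₀ (h ▸ hw₀₁.symm) (h' ▸ hw₀₁.symm)
    · have hne : f v ≠ f w₁ := by simpa [h] using huv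
      exact key u hu v hv w₁ hw₁ h hne

/-- A circle in `M`, encoded as the range of a continuous map on `ℝ` that identifies two reals
exactly if they differ by an integer. In a Hausdorff space this is the same as being homeomorphic
to the unit circle, see `isCircle_iff`. -/
def IsCircle {M : Type*} [TopologicalSpace M] (C : Set M) : Prop :=
  ∃ φ : ℝ → M, Continuous φ ∧ (∀ s t, φ s = φ t ↔ ∃ n : ℤ, t = s + n) ∧ range φ = C

section
variable {M : Type*} [TopologicalSpace M]

theorem IsCircle.eq_image {C : Set M} {φ : ℝ → M}
    (hp : ∀ s t, φ s = φ t ↔ ∃ n : ℤ, t = s + n) (hr : range φ = C) (t₀ : ℝ) :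
    C = φ '' Ico t₀ (t₀ + 1) := by
  rw [← hr]
  apply subset_antisymm
  · rintro _ ⟨t, rfl⟩
    obtain ⟨n, hn, -⟩ := existsUnique_add_zsmul_mem_Ico (one_pos : (0:ℝ) < 1) t t₀
    refine ⟨_, hn, ?_⟩
    rw [eq_comm, hp]
    exact ⟨n, by simp⟩
  · rintro _ ⟨t, -, rfl⟩; exact ⟨t, rfl⟩

theorem IsCircle.injOn {φ : ℝ → M}
    (hp : ∀ s t, φ s = φ t ↔ ∃ n : ℤ, t = s + n) (t₀ : ℝ) : InjOn φ (Ico t₀ (t₀ + 1)) := by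
  intro s hs t ht h
  obtain ⟨n, hn⟩ := (hp s t).1 h
  have h1 : (n : ℝ) < 1 := by linarith [ht.2, hs.1]
  have h2 : (-1 : ℝ) < n := by linarith [ht.1, hs.2]
  have : n = 0 := by
    have h1' : n < 1 := by exact_mod_cast h1
    have h2' : -1 < n := by exact_mod_cast h2
    omega
  subst this
  simpa using hn.symm

theorem IsCircle.isCompact {C : Set M} (hC : IsCircle C) : IsCompact C := by
  obtain ⟨φ, hc, hp, hr⟩ := hC
  have : C = φ '' Icc 0 1 := by
    apply subset_antisymm
    · rw [IsCircle.eq_image hp hr 0]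
      exact image_mono (by rw [zero_add]; exact Ico_subset_Icc_self)
    · rw [← hr]; exact image_subset_range _ _
  rw [this]
  exact isCompact_Icc.image hc

theorem IsCircle.isClosed [T2Space M] {C : Set M} (hC : IsCircle C) : IsClosed C :=
  hC.isCompact.isClosed

theorem IsCircle.isConnected {C : Set M} (hC : IsCircle C) : IsConnected C := by
  obtain ⟨φ, hc, hp, hr⟩ := hC
  rw [← hr]
  exact isConnected_range hc

/-- In a chart around one of its points, a circle is locally equal to a simple arc with that point
in its interior. -/
theorem exists_local_arc [T2Space M] {C : Set M} (hC : IsCircle C) {j : ℂ → M}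
    (hj : IsOpenEmbedding j) {z₀ : ℂ} (hx : j z₀ ∈ C) :
    ∃ a : ℝ → ℂ, Continuous a ∧ InjOn a (Icc (-1) 1) ∧ a 0 = z₀ ∧ a '' Icc (-1) 1 ⊆ j ⁻¹' C ∧
      ∃ ρ > 0, Metric.ball z₀ ρ ∩ j ⁻¹' C ⊆ a '' Icc (-1) 1 := by
  obtain ⟨φ, hc, hp, hr⟩ := hC
  obtain ⟨t₀, ht₀⟩ : j z₀ ∈ range φ := hr ▸ hx
  obtain ⟨ε, hε, hε2, hεj⟩ : ∃ ε > 0, ε < 1 / 2 ∧ ∀ t ∈ Icc (t₀ - ε) (t₀ + ε), φ t ∈ range j := by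
    obtain ⟨ε, hε, h⟩ := Metric.nhds_basis_closedBall.mem_iff.1 (hc.continuousAt.preimage_mem_nhds
      (hj.isOpen_range.mem_nhds (show φ t₀ ∈ range j from ht₀ ▸ ⟨z₀, rfl⟩)))
    refine ⟨min ε (1/4), by positivity, lt_of_le_of_lt (min_le_right _ _) (by norm_num), ?_⟩
    intro t ht
    apply h
    rw [Real.closedBall_eq_Icc]
    have := min_le_left ε (1/4)
    exact ⟨by linarith [ht.1], by linarith [ht.2]⟩
  let τ : ℝ → ℝ := fun t => t₀ + ε * projIcc (-1 : ℝ) 1 (by norm_num) t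
  have hτc : Continuous τ := by
    have := (continuous_subtype_val.comp (continuous_projIcc (a := (-1:ℝ)) (b := 1) (h := by norm_num)))
    exact continuous_const.add (continuous_const.mul this)
  have hτ : ∀ t, τ t ∈ Icc (t₀ - ε) (t₀ + ε) := by
    intro t
    have := (projIcc (-1 : ℝ) 1 (by norm_num) t).2
    constructor
    · simp only [τ]; nlinarith [this.1]
    · simp only [τ]; nlinarith [this.2]
  have hτI : ∀ t ∈ Icc (-1 : ℝ) 1, τ t = t₀ + ε * t := by
    intro t ht; simp only [τ, projIcc_of_mem _ ht]
  choose a ha using fun t => hεj (τ t) (hτ t)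
  have hac : Continuous a := by
    rw [hj.isEmbedding.continuous_iff]
    exact (hc.comp hτc).congr fun t => (ha t).symm
  have hinj : InjOn a (Icc (-1) 1) := by
    intro s hs t ht hst
    have h1 : φ (τ s) = φ (τ t) := by rw [← ha, ← ha, hst]
    have h2 := IsCircle.injOn hp (t₀ - ε) ⟨(hτ s).1, by linarith [(hτ s).2]⟩
      ⟨(hτ t).1, by linarith [(hτ t).2]⟩ h1
    rw [hτI s hs, hτI t ht] at h2
    exact mul_left_cancel₀ hε.ne' (add_left_cancel h2)
  refine ⟨a, hac, hinj, ?_, ?_, ?_⟩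
  · apply hj.injective
    rw [ha, hτI 0 (by simp), mul_zero, add_zero, ht₀]
  · rintro _ ⟨t, ht, rfl⟩
    rw [mem_preimage, ha, ← hr]; exact ⟨_, rfl⟩
  · set K := φ '' Icc (t₀ + ε) (t₀ - ε + 1) with hK
    have hKc : IsClosed K := (isCompact_Icc.image hc).isClosed
    have hxK : j z₀ ∉ K := by
      rintro ⟨t, ht, h⟩
      rw [← ht₀] at h
      have := IsCircle.injOn hp (t₀ - ε) ⟨by linarith [ht.1], ?_⟩ ⟨by linarith, by linarith⟩ h
      · linarith [ht.1]
      · rcases ht.2.eq_or_lt with h' | h'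
        · exfalso
          rw [h'] at h
          obtain ⟨n, hn⟩ := (hp _ _).1 h
          have h1 : (n : ℝ) < 0 := by linarith
          have h2 : (-1 : ℝ) < n := by linarith
          have h1' : n < 0 := by exact_mod_cast h1
          have h2' : -1 < n := by exact_mod_cast h2
          omega
        · exact h'
    obtain ⟨ρ, hρ, hB⟩ := Metric.mem_nhds_iff.1 (hj.continuous.continuousAt.preimage_mem_nhds
      (hKc.isOpen_compl.mem_nhds hxK))
    refine ⟨ρ, hρ, ?_⟩
    rintro z ⟨hz, hzC⟩
    rw [mem_preimage, IsCircle.eq_image hp hr (t₀ - ε)] at hzC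
    obtain ⟨t, ht, htz⟩ := hzC
    have hlt : t < t₀ + ε := by
      by_contra! h
      exact hB hz ⟨t, ⟨h, ht.2.le⟩, htz⟩
    have hI : (t - t₀) / ε ∈ Icc (-1 : ℝ) 1 := by
      constructor
      · rw [le_div_iff₀ hε]; linarith [ht.1]
      · rw [div_le_iff₀ hε]; linarith
    refine ⟨(t - t₀) / ε, hI, ?_⟩
    apply hj.injective
    rw [ha, hτI _ hI, ← htz]
    congr 1
    field_simp; ring

/-- Every point of `M` is the image of `0` under an open embedding of the whole plane. -/
def HasCharts (M : Type*) [TopologicalSpace M] : Prop :=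
  ∀ x : M, ∃ j : ℂ → M, IsOpenEmbedding j ∧ j 0 = x

/-- A circle in a surface is locally two-sided, in the sense of `planar_sides`. -/
theorem two_sided [T2Space M] (hM : HasCharts M) {C : Set M} (hC : IsCircle C) {x : M}
    (hx : x ∈ C) {N : Set M} (hN : N ∈ 𝓝 x) :
    ∃ U ⊆ N, IsOpen U ∧ x ∈ U ∧ ∃ e : M → Bool,
      (∀ z ∈ U \ C, ∀ᶠ w in 𝓝 z, e w = e z) ∧
      (∀ y ∈ C ∩ U, ∀ W ∈ 𝓝 y, ∀ b, ∃ w ∈ W \ C, e w = b) ∧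
      ∀ u ∈ U \ C, ∀ v ∈ U \ C, e u = e v → SameSide (N \ C) u v := by
  classical
  obtain ⟨j, hj, hj0⟩ := hM x
  subst hj0
  obtain ⟨a, ha, hinj, ha0, hAC, ρ, hρ, hρA⟩ := exists_local_arc hC hj hx
  set A := a '' Icc (-1) 1 with hA
  obtain ⟨U, hUN, hUo, hxU, e, he1, he2, he3⟩ := planar_sides ha hinj ha0
    (inter_mem (hj.continuous.continuousAt.preimage_mem_nhds hN) (Metric.ball_mem_nhds 0 hρ))
  have hCA : ∀ z ∈ Metric.ball 0 ρ, (j z ∈ C ↔ z ∈ A) := fun z hz =>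
    ⟨fun h => hρA ⟨hz, h⟩, fun h => hAC h⟩
  let i : M → ℂ := Function.invFun j
  have hi : ∀ z, i (j z) = z := Function.leftInverse_invFun hj.injective
  have hUC : ∀ z, j z ∈ j '' U \ C → z ∈ U \ A := by
    rintro z ⟨⟨z', hz', h⟩, hzC⟩
    rw [← hj.injective h]
    rw [← h, hCA z' (hUN hz').2] at hzC
    exact ⟨hz', hzC⟩
  refine ⟨j '' U, ?_, hj.isOpenMap _ hUo, ⟨0, hxU, rfl⟩, fun m => e (i m), ?_, ?_, ?_⟩
  · rintro _ ⟨z, hz, rfl⟩; exact (hUN hz).1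
  · intro m hm
    obtain ⟨z, hz, rfl⟩ := hm.1
    rw [← hj.map_nhds_eq, eventually_map]
    simp only [hi]
    exact he1 z (hUC z hm)
  · rintro _ ⟨hy, z, hz, rfl⟩ W hW b
    obtain ⟨w, hw, hwb⟩ := he2 z ⟨(hCA z (hUN hz).2).1 hy, hz⟩ (j ⁻¹' W ∩ U)
      (inter_mem (hj.continuous.continuousAt.preimage_mem_nhds hW) (hUo.mem_nhds hz)) b
    exact ⟨j w, ⟨hw.1.1, fun h => hw.2 ((hCA w (hUN hw.1.2).2).1 h)⟩, by simpa [hi] using hwb⟩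
  · intro u hu v hv huv
    obtain ⟨z, hz, rfl⟩ := hu.1
    obtain ⟨z', hz', rfl⟩ := hv.1
    simp only [hi] at huv
    obtain ⟨T, hT, hTp, h1, h2⟩ := he3 z (hUC z hu) z' (hUC z' hv) huv
    refine ⟨j '' T, ?_, hTp.image _ hj.continuous.continuousOn, ⟨z, h1, rfl⟩, ⟨z', h2, rfl⟩⟩
    rintro _ ⟨w, hw, rfl⟩
    exact ⟨(hT hw).1.1, fun h => (hT hw).2 ((hCA w (hT hw).1.2).1 h)⟩
end

/-! ### A circle in a simply connected surface has exactly two complementary components -/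

section
variable {M : Type*} [TopologicalSpace M]

theorem HasCharts.locallyPathConnectedSpace (hM : HasCharts M) : LocallyPathConnectedSpace M where
  path_connected_basis x := by
    rw [hasBasis_self]
    intro t ht
    obtain ⟨j, hj, rfl⟩ := hM x
    obtain ⟨ε, hε, h⟩ := Metric.mem_nhds_iff.1 (hj.continuous.continuousAt.preimage_mem_nhds ht)
    refine ⟨j '' Metric.ball 0 ε, hj.isOpenMap.image_mem_nhds (Metric.ball_mem_nhds _ hε), ?_,
      image_subset_iff.2 h⟩
    exact ((convex_ball (0:ℂ) ε).isPathConnected ⟨0, Metric.mem_ball_self hε⟩).image hj.continuous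

/-- Induction over a preconnected set `S`: a condition that holds at some point and is open and
closed relative to `S` holds on `S`. -/
theorem clopen_in {S D : Set M} (hS : IsPreconnected S)
    (ho : ∀ y ∈ S, y ∈ D → ∃ U ∈ 𝓝 y, ∀ z ∈ U, z ∈ S → z ∈ D)
    (hc : ∀ y ∈ S, (∀ U ∈ 𝓝 y, ∃ z ∈ U, z ∈ S ∧ z ∈ D) → y ∈ D) (hne : (S ∩ D).Nonempty) :
    S ⊆ D := by
  let u : Set M := {y | ∃ U ∈ 𝓝 y, ∀ z ∈ U, z ∈ S → z ∈ D}
  let v : Set M := {y | ∃ U ∈ 𝓝 y, ∀ z ∈ U, z ∈ S → z ∉ D}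
  have hu : IsOpen u := by
    rw [isOpen_iff_mem_nhds]
    rintro y ⟨U, hU, h⟩
    filter_upwards [eventually_mem_nhds_iff.2 hU] with z hz using ⟨U, hz, h⟩
  have hv : IsOpen v := by
    rw [isOpen_iff_mem_nhds]
    rintro y ⟨U, hU, h⟩
    filter_upwards [eventually_mem_nhds_iff.2 hU] with z hz using ⟨U, hz, h⟩
  have hcov : S ⊆ u ∪ v := by
    intro y hy
    by_cases h : y ∈ D
    · exact Or.inl (ho y hy h)
    · right
      have := mt (hc y hy) h
      push Not at this
      obtain ⟨U, hU, h'⟩ := this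
      exact ⟨U, hU, h'⟩
  have hdis : S ∩ (u ∩ v) = ∅ := by
    ext y
    simp only [mem_inter_iff, mem_empty_iff_false, iff_false]
    rintro ⟨hy, ⟨U, hU, h⟩, ⟨U', hU', h'⟩⟩
    exact h' y (mem_of_mem_nhds hU') hy (h y (mem_of_mem_nhds hU) hy)
  rcases isPreconnected_iff_subset_of_disjoint.1 hS u v hu hv hcov hdis with h | h
  · intro y hy
    obtain ⟨U, hU, h'⟩ := h hy
    exact h' y (mem_of_mem_nhds hU) hy
  · obtain ⟨y, hy, hyD⟩ := hne
    obtain ⟨U, hU, h'⟩ := h hy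
    exact (h' y (mem_of_mem_nhds hU) hy hyD).elim

/-- A preconnected set that meets `P` and avoids its frontier lies in `P`. -/
theorem conn_subset {T P : Set M} (hT : IsPreconnected T)
    (hd : Disjoint T (frontier P)) (hne : (T ∩ P).Nonempty) : T ⊆ P := by
  have hint : ∀ y ∈ T, y ∈ closure P → y ∈ interior P := fun y hy hyP => by
    by_contra h
    exact Set.disjoint_left.1 hd hy ⟨hyP, h⟩
  refine clopen_in hT (fun y hy hyP => ?_) (fun y hy h => ?_) hne
  · exact ⟨interior P, isOpen_interior.mem_nhds (hint y hy (subset_closure hyP)),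
      fun z hz _ => interior_subset hz⟩
  · refine interior_subset (hint y hy (mem_closure_iff_nhds.2 fun U hU => ?_))
    obtain ⟨z, h1, -, h2⟩ := h U hU
    exact ⟨z, h1, h2⟩

theorem local_const {T : Set M} (hT : IsPreconnected T) {e : M → Bool}
    (he : ∀ z ∈ T, ∀ᶠ w in 𝓝 z, e w = e z) {u v : M} (hu : u ∈ T) (hv : v ∈ T) : e u = e v := by
  refine (clopen_in (D := {z | e u = e z}) hT ?_ ?_ ⟨u, hu, rfl⟩) hv
  · intro y hy hyD
    exact ⟨_, he y hy, fun z hz _ => (show e u = e y from hyD).trans (show e z = e y from hz).symm⟩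
  · intro y hy h
    obtain ⟨z, hz, -, hzD⟩ := h _ (he y hy)
    exact (show e u = e z from hzD).trans hz

theorem SameSide.trans {S : Set M} {u v w : M} (h : SameSide S u v) (h' : SameSide S v w) :
    SameSide S u w := by
  obtain ⟨T, h1, h2, h3, h4⟩ := h
  obtain ⟨T', h1', h2', h3', h4'⟩ := h'
  exact ⟨T ∪ T', union_subset h1 h1', h2.union v h4 h3' h2', Or.inl h3, Or.inr h4'⟩

theorem SameSide.mem_of_frontier {C P : Set M} (hf : frontier P ⊆ C) {u v : M}
    (h : SameSide Cᶜ u v) (hu : u ∈ P) : v ∈ P := by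
  obtain ⟨T, h1, h2, h3, h4⟩ := h
  exact conn_subset h2 (disjoint_compl_left.mono h1 hf) ⟨u, h3, hu⟩ h4

variable [T2Space M]

/-- A nonempty open set disjoint from a circle `C`, with frontier in `C`, is adherent to every
point of `C`: by local two-sidedness, the set of points of `C` adherent to it is open in `C`. -/
theorem subset_closure_of_frontier [ConnectedSpace M] (hM : HasCharts M) {C P : Set M} (hC : IsCircle C)
    (hP : IsOpen P) (hne : P.Nonempty) (hd : Disjoint P C) (hf : frontier P ⊆ C) :
    C ⊆ closure P := by
  refine clopen_in (D := closure P) hC.isConnected.isPreconnected ?_ ?_ ?_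
  · intro x hx hxP
    obtain ⟨U, hUN, hU, hxU, e, he1, he2, he3⟩ := two_sided hM hC hx (univ_mem)
    refine ⟨U, hU.mem_nhds hxU, ?_⟩
    intro y hyU hyC
    rw [mem_closure_iff_nhds]
    intro W hW
    obtain ⟨w, hwU, hwP⟩ := mem_closure_iff.1 hxP U hU hxU
    obtain ⟨z, hz, hzb⟩ := he2 y ⟨hyC, hyU⟩ (W ∩ U) (inter_mem hW (hU.mem_nhds hyU)) (e w)
    have hwC : w ∉ C := Set.disjoint_left.1 hd hwP
    have := (he3 w ⟨hwU, hwC⟩ z ⟨hz.1.2, hz.2⟩ hzb.symm).mono (S' := Cᶜ) (by intro q hq; exact hq.2)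
    exact ⟨z, hz.1.1, this.mem_of_frontier hf hwP⟩
  · intro y hy h
    rw [← closure_closure, mem_closure_iff_nhds]
    intro U hU
    obtain ⟨z, h1, -, h2⟩ := h U hU
    exact ⟨z, h1, h2⟩
  · have : (frontier P).Nonempty := by
      rw [nonempty_frontier_iff]
      refine ⟨hne, ?_⟩
      rintro rfl
      obtain ⟨c, hc⟩ := hC.isConnected.nonempty
      exact Set.disjoint_left.1 hd (mem_univ c) hc
    obtain ⟨z, hz⟩ := this
    exact ⟨z, hf hz, frontier_subset_closure hz⟩

/-- The complement of a circle has at most two components: all of them meet a neighbourhood of any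
given point of the circle, in which there are only two sides. -/
theorem three_points [ConnectedSpace M] (hM : HasCharts M) {C : Set M} (hC : IsCircle C)
    {u v w : M} (hu : u ∉ C) (hv : v ∉ C) (hw : w ∉ C) :
    SameSide Cᶜ u v ∨ SameSide Cᶜ u w ∨ SameSide Cᶜ v w := by
  have := hM.locallyPathConnectedSpace
  have hCo : IsOpen Cᶜ := hC.isClosed.isOpen_compl
  obtain ⟨x, hx⟩ := hC.isConnected.nonempty
  obtain ⟨U, -, hU, hxU, e, he1, he2, he3⟩ := two_sided hM hC hx univ_mem
  have key : ∀ u, u ∉ C → ∃ u' ∈ U \ C, SameSide Cᶜ u u' := by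
    intro u hu
    have hfr : frontier (connectedComponentIn Cᶜ u) ⊆ C := fun z hz => by
      by_contra h
      exact Set.disjoint_left.1 (frontier_component hCo u) hz h
    have hcl := subset_closure_of_frontier hM hC hCo.connectedComponentIn
      ⟨u, mem_connectedComponentIn hu⟩
      (disjoint_compl_left.mono_left (connectedComponentIn_subset _ _)) hfr hx
    obtain ⟨u', hu'U, hu'⟩ := mem_closure_iff.1 hcl U hU hxU
    exact ⟨u', ⟨hu'U, connectedComponentIn_subset _ _ hu'⟩, _, connectedComponentIn_subset _ _,
      isPreconnected_connectedComponentIn, mem_connectedComponentIn hu, hu'⟩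
  obtain ⟨u', hu', huu⟩ := key u hu
  obtain ⟨v', hv', hvv⟩ := key v hv
  obtain ⟨w', hw', hww⟩ := key w hw
  have hsub : (univ \ C : Set M) ⊆ Cᶜ := fun q hq => hq.2
  have three : ∀ a b c : Bool, a = b ∨ a = c ∨ b = c := by decide
  rcases three (e u') (e v') (e w') with h | h | h
  · exact Or.inl ((huu.trans ((he3 _ hu' _ hv' h).mono hsub)).trans hvv.symm)
  · exact Or.inr (Or.inl ((huu.trans ((he3 _ hu' _ hw' h).mono hsub)).trans hww.symm))
  · exact Or.inr (Or.inr ((hvv.trans ((he3 _ hv' _ hw' h).mono hsub)).trans hww.symm))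

/-- In a simply connected surface, a circle has a global side function. The local side functions `e
m` on the sets `U m` differ near each point by a constant `g m n` of `Bool`, although the points of
`C` itself carry no side. These constants form the cocycle of a double cover, which has a section
`σ`; in the trivialization over `U m` it becomes a locally constant function `c m`, and the sums `c
m + e m` agree on overlaps. -/
theorem exists_sides [SimplyConnectedSpace M] (hM : HasCharts M) {C : Set M} (hC : IsCircle C) :
    ∃ E : M → Bool, (∀ z ∉ C, ∀ᶠ w in 𝓝 z, E w = E z) ∧ ∀ b, ∃ z ∉ C, E z = b := by
  classical
  have := hM.locallyPathConnectedSpace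
  have hCo : IsOpen Cᶜ := hC.isClosed.isOpen_compl
  have hloc : ∀ m : M, ∃ U : Set M, IsOpen U ∧ m ∈ U ∧ ∃ e : M → Bool,
      (∀ z ∈ U \ C, ∀ᶠ w in 𝓝 z, e w = e z) ∧
      (∀ y ∈ C ∩ U, ∀ W ∈ 𝓝 y, ∀ b, ∃ w ∈ W \ C, e w = b) := by
    intro m
    by_cases hm : m ∈ C
    · obtain ⟨U, -, hU, hxU, e, he1, he2, -⟩ := two_sided hM hC hm univ_mem
      exact ⟨U, hU, hxU, e, he1, he2⟩
    · exact ⟨Cᶜ, hCo, hm, fun _ => true, fun _ _ => by simp, fun y hy => (hy.2 hy.1).elim⟩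
  choose U hU hmU e he1 he2 using hloc
  -- the complement of `C` is dense, so `g m n z` below is determined by its values off `C`
  have hdense : ∀ z, ∀ V ∈ 𝓝 z, ∃ w ∈ V, w ∉ C := by
    intro z V hV
    by_cases hz : z ∈ C
    · obtain ⟨w, hw, -⟩ := he2 z z ⟨hz, hmU z⟩ V hV true
      exact ⟨w, hw.1, hw.2⟩
    · exact ⟨z, mem_of_mem_nhds hV, hz⟩
  have hg : ∀ m n z, z ∈ U m → z ∈ U n → ∃ b : Bool, ∃ V ∈ 𝓝 z, ∀ w ∈ V, w ∉ C →
      (e m w ^^ e n w) = b := by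
    intro m n z hm hn
    by_cases hz : z ∈ C
    · obtain ⟨U', hU'N, hU', hzU', ε, hε1, hε2, hε3⟩ := two_sided hM hC hz
        (((hU m).inter (hU n)).mem_nhds ⟨hm, hn⟩)
      have hrel : ∀ k, U m ∩ U n ⊆ U k → ∃ b : Bool, ∀ w ∈ U' \ C, e k w = (ε w ^^ b) := by
        intro k hk
        have hdep : ∀ u ∈ U' \ C, ∀ v ∈ U' \ C, ε u = ε v → e k u = e k v := by
          intro u hu v hv huv
          obtain ⟨T, h1, h2, h3, h4⟩ := hε3 u hu v hv huv
          exact local_const h2 (fun q hq => he1 k q ⟨hk (h1 hq).1, (h1 hq).2⟩) h3 h4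
        obtain ⟨w₁, hw₁, hw₁b⟩ := hε2 z ⟨hz, hzU'⟩ U' (hU'.mem_nhds hzU') true
        obtain ⟨v, hv, hvb⟩ := he2 k z ⟨hz, hk ⟨hm, hn⟩⟩ U' (hU'.mem_nhds hzU') (!(e k w₁))
        refine ⟨!(e k w₁), fun u hu => ?_⟩
        have hvε : ε v = false := by
          by_contra h
          have h' : ε v = ε w₁ := by rw [hw₁b]; simpa using h
          have := hdep v hv w₁ hw₁ h'
          rw [hvb] at this
          simp at this
        cases hεu : ε u
        · rw [hdep u hu v hv (hεu.trans hvε.symm), hvb]; simp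
        · rw [hdep u hu w₁ hw₁ (hεu.trans hw₁b.symm)]; simp
      obtain ⟨b, hb⟩ := hrel m inter_subset_left
      obtain ⟨b', hb'⟩ := hrel n inter_subset_right
      refine ⟨b ^^ b', U', hU'.mem_nhds hzU', fun w hw hwC => ?_⟩
      rw [hb w ⟨hw, hwC⟩, hb' w ⟨hw, hwC⟩]
      cases ε w <;> cases b <;> cases b' <;> rfl
    · refine ⟨e m z ^^ e n z, _, (he1 m z ⟨hm, hz⟩).and (he1 n z ⟨hn, hz⟩), ?_⟩
      intro w hw _
      rw [hw.1, hw.2]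
  let g : M → M → M → Bool := fun m n z =>
    if h : z ∈ U m ∧ z ∈ U n then (hg m n z h.1 h.2).choose else false
  have hgspec : ∀ m n z, z ∈ U m → z ∈ U n → ∃ V ∈ 𝓝 z, ∀ w ∈ V, w ∉ C →
      (e m w ^^ e n w) = g m n z := by
    intro m n z hm hn
    simp only [g]
    rw [dif_pos ⟨hm, hn⟩]
    exact (hg m n z hm hn).choose_spec
  have hguniq : ∀ m n z, z ∈ U m → z ∈ U n → ∀ b, ∀ V ∈ 𝓝 z, (∀ w ∈ V, w ∉ C →
      (e m w ^^ e n w) = b) → g m n z = b := by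
    intro m n z hm hn b V hV h
    obtain ⟨V', hV', h'⟩ := hgspec m n z hm hn
    obtain ⟨w, hw, hwC⟩ := hdense z _ (inter_mem hV hV')
    rw [← h' w hw.2 hwC, h w hw.1 hwC]
  let Z : FiberBundleCore M M Bool :=
    { baseSet := U
      isOpen_baseSet := hU
      indexAt := id
      mem_baseSet_at := hmU
      coordChange := fun i j z b => b ^^ g i j z
      coordChange_self := by
        intro i z hz v
        rw [hguniq i i z hz hz false univ univ_mem (by simp)]
        simp
      continuousOn_coordChange := by
        intro i j p hp
        obtain ⟨V, hV, h⟩ := hgspec i j p.1 hp.1.1 hp.1.2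
        have hev : ∀ᶠ q in 𝓝 p, (q.2 ^^ g i j q.1) = (p.2 ^^ g i j p.1) := by
          have h2 : ∀ᶠ q in 𝓝 p, q.2 = p.2 :=
            continuous_snd.continuousAt.eventually ((isOpen_discrete {p.2}).mem_nhds rfl)
          have h1 : ∀ᶠ q in 𝓝 p, q.1 ∈ (U i ∩ U j) ∩ interior V :=
            continuous_fst.continuousAt.eventually ((((hU i).inter (hU j)).inter
              isOpen_interior).mem_nhds ⟨hp.1, mem_interior_iff_mem_nhds.2 hV⟩)
          filter_upwards [h1, h2] with q hq1 hq2
          rw [hq2, hguniq i j q.1 hq1.1.1 hq1.1.2 _ _ (isOpen_interior.mem_nhds hq1.2)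
            fun w hw hwC => h w (interior_subset hw) hwC]
        exact ((continuousAt_const (y := (p.2 ^^ g i j p.1))).congr
          (hev.mono fun q hq => hq.symm)).continuousWithinAt
      coordChange_comp := by
        rintro i j k z ⟨⟨hi, hj⟩, hk⟩ v
        obtain ⟨V, hV, h⟩ := hgspec i j z hi hj
        obtain ⟨V', hV', h'⟩ := hgspec j k z hj hk
        have := hguniq i k z hi hk (g i j z ^^ g j k z) _ (inter_mem hV hV') (by
          intro w hw hwC
          rw [← h w hw.1 hwC, ← h' w hw.2 hwC]
          cases e i w <;> cases e j w <;> cases e k w <;> rfl)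
        simp only [this, Bool.xor_assoc] }
  have hcov : IsCoveringMap Z.proj := IsFiberBundle.isCoveringMap (F := Bool)
    fun m => ⟨Z.localTriv m, hmU m⟩
  obtain ⟨m₀, hm₀⟩ := hC.isConnected.nonempty
  obtain ⟨σ, ⟨-, hσ⟩, -⟩ := hcov.existsUnique_continuousMap_lifts (ContinuousMap.id M) m₀
    (⟨m₀, true⟩ : Z.TotalSpace) rfl
  have hσz : ∀ z, (σ z).1 = z := fun z => congr_fun hσ z
  let c : M → M → Bool := fun i z => ((Z.localTriv i) (σ z)).2
  have hcc : ∀ i, ∀ z ∈ U i, ∀ᶠ w in 𝓝 z, c i w = c i z := by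
    intro i z hz
    have h1 : ContinuousAt (fun z => (Z.localTriv i) (σ z)) z := by
      refine ContinuousAt.comp (g := Z.localTriv i) (f := σ) ?_ σ.continuous.continuousAt
      refine (Z.localTriv i).continuousOn.continuousAt ((Z.localTriv i).open_source.mem_nhds ?_)
      rw [Z.mem_localTriv_source]
      change (σ z).1 ∈ U i
      rwa [hσz z]
    exact h1.snd.eventually ((isOpen_discrete {c i z}).mem_nhds rfl)
  have hct : ∀ i j z, z ∈ U i → z ∈ U j → c j z = (c i z ^^ g i j z) := by
    intro i j z hi hj
    have h := Z.coordChange_comp (Z.indexAt (σ z).1) i j (σ z).1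
      ⟨⟨Z.mem_baseSet_at _, by rw [hσz z]; exact hi⟩, by rw [hσz z]; exact hj⟩ (σ z).2
    simp only [c, Z.localTriv_apply]
    rw [← h]
    change (_ ^^ g i j (σ z).1) = _
    rw [hσz z]
  -- `c z z ^^ e z z` uses the trivialization indexed by the point `z` itself; by `hE` any other
  -- trivialization around `z` gives the same value
  let E : M → Bool := fun z => c z z ^^ e z z
  have hE : ∀ i, ∀ z ∈ U i, z ∉ C → E z = (c i z ^^ e i z) := by
    intro i z hz hzC
    obtain ⟨V, hV, h⟩ := hgspec z i z (hmU z) hz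
    simp only [E]
    rw [hct z i z (hmU z) hz, ← h z (mem_of_mem_nhds hV) hzC]
    cases c z z <;> cases e z z <;> cases e i z <;> rfl
  refine ⟨E, ?_, ?_⟩
  · intro z hz
    filter_upwards [hcc z z (hmU z), he1 z z ⟨hmU z, hz⟩, (hU z).mem_nhds (hmU z),
      hCo.mem_nhds hz] with w h1 h2 h3 h4
    rw [hE z w h3 h4, hE z z (hmU z) hz, h1, h2]
  · intro b
    obtain ⟨w, hw, hwb⟩ := he2 m₀ m₀ ⟨hm₀, hmU m₀⟩ _
      (inter_mem (hcc m₀ m₀ (hmU m₀)) ((hU m₀).mem_nhds (hmU m₀))) (c m₀ m₀ ^^ b)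
    refine ⟨w, hw.2, ?_⟩
    rw [hE m₀ w hw.1.2 hw.2, hwb, show c m₀ w = c m₀ m₀ from hw.1.1]
    cases c m₀ m₀ <;> cases b <;> rfl

theorem forward_dir [SimplyConnectedSpace M] (hM : HasCharts M) {C : Set M} (hC : IsCircle C) :
    Nat.card (ConnectedComponents ↥(Cᶜ)) = 2 := by
  obtain ⟨E, hE1, hE2⟩ := exists_sides hM hC
  have hcont : Continuous fun z : ↥Cᶜ => E z := by
    rw [continuous_iff_continuousAt]
    intro z
    refine (continuousAt_const (y := E z)).congr ?_
    have := continuous_subtype_val.continuousAt.eventually (hE1 z z.2)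
    exact this.mono fun w hw => hw.symm
  have hbij : Function.Bijective hcont.connectedComponentsLift := by
    constructor
    · intro q q'
      obtain ⟨u, rfl⟩ := ConnectedComponents.surjective_coe q
      obtain ⟨v, rfl⟩ := ConnectedComponents.surjective_coe q'
      intro huv
      simp only [Continuous.connectedComponentsLift_apply_coe] at huv
      obtain ⟨w, hw, hwb⟩ := hE2 (!(E u))
      have hsame : ∀ a b, SameSide Cᶜ a b → E a = E b := fun a b ⟨T, h1, h2, h3, h4⟩ =>
        local_const h2 (fun z hz => hE1 z (h1 hz)) h3 h4
      have : SameSide Cᶜ (u : M) v := by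
        rcases three_points hM hC u.2 v.2 hw with h | h | h
        · exact h
        · have := hsame _ _ h
          rw [hwb] at this; simp at this
        · have := hsame _ _ h
          rw [hwb, ← huv] at this; simp at this
      obtain ⟨T, h1, h2, h3, h4⟩ := this
      rw [ConnectedComponents.coe_eq_coe']
      have hT : IsPreconnected (Subtype.val ⁻¹' T : Set ↥Cᶜ) := by
        rw [← IsInducing.subtypeVal.isPreconnected_image, Subtype.image_preimage_coe,
          inter_eq_self_of_subset_right h1]
        exact h2
      exact hT.subset_connectedComponent (x := v) h4 h3
    · intro b
      obtain ⟨z, hz, hzb⟩ := hE2 b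
      exact ⟨((⟨z, hz⟩ : ↥Cᶜ) : ConnectedComponents ↥Cᶜ), hzb⟩
  rw [Nat.card_eq_of_bijective _ hbij]
  simp
end

/-! ### Homotopies inside a circle -/

section
variable {M : Type*} [TopologicalSpace M]

/-- The path along `f` from parameter `s` to parameter `t`, traversed linearly; `t < s` is allowed.
-/
noncomputable def seg {f : ℝ → M} (hf : Continuous f) (s t : ℝ) {p q : M} (hp : f s = p) (hq : f t = q) :
    Path p q where
  toFun x := f (s + x * (t - s))
  continuous_toFun := hf.comp (by fun_prop)
  source' := by simpa using hp
  target' := by simpa using hq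

theorem real_homotopic {s t : ℝ} (δ ε : Path s t) : δ.Homotopic ε :=
  SimplyConnectedSpace.paths_homotopic δ ε

/-- A path that factors through `f : ℝ → M` is homotopic to the segment of `f` between its end
parameters. -/
theorem homotopic_seg {f : ℝ → M} (hf : Continuous f) {s t : ℝ} (δ : Path s t) {p q : M}
    (hp : f s = p) (hq : f t = q) (γ : Path p q) (h : ∀ x, γ x = f (δ x)) :
    γ.Homotopic (seg hf s t hp hq) := by
  subst hp hq
  let δ' : Path s t := ⟨⟨fun x => s + x * (t - s), by fun_prop⟩, by simp, by simp⟩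
  have h1 : γ = δ.map hf := by ext x; exact h x
  have h2 : seg hf s t rfl rfl = δ'.map hf := by ext x; rfl
  rw [h1, h2]
  exact (real_homotopic δ δ').map ⟨f, hf⟩

theorem seg_trans {f : ℝ → M} (hf : Continuous f) {s t u : ℝ} {p q r : M}
    (hp : f s = p) (hq : f t = q) (hr : f u = r) :
    ((seg hf s t hp hq).trans (seg hf t u hq hr)).Homotopic (seg hf s u hp hr) := by
  let δ : ∀ s t : ℝ, Path s t := fun s t => ⟨⟨fun x => s + x * (t - s), by fun_prop⟩, by simp, by simp⟩
  refine homotopic_seg hf ((δ s t).trans (δ t u)) hp hr _ ?_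
  intro x
  simp only [Path.trans_apply]
  split_ifs <;> rfl

theorem seg_self {f : ℝ → M} (hf : Continuous f) {s : ℝ} {p : M}
    (hp : f s = p) : (seg hf s s hp hp).Homotopic (Path.refl p) := by
  have : seg hf s s hp hp = Path.refl p := by
    ext x; simp [seg, hp]
  rw [this]

/-- Any two paths in `S` with the same endpoints are homotopic in the ambient space `M`. -/
def Null (S : Set M) : Prop :=
  ∀ ⦃p q : M⦄ (γ γ' : Path p q), range γ ⊆ S → range γ' ⊆ S → γ.Homotopic γ'

theorem Null.mono {S S' : Set M} (h : Null S') (hs : S ⊆ S') : Null S :=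
  fun _ _ γ γ' h1 h2 => h γ γ' (h1.trans hs) (h2.trans hs)

theorem null_of_chart {j : ℂ → M} (hj : IsOpenEmbedding j) : Null (range j) := by
  intro p q γ γ' h h'
  have lift : ∀ γ : Path p q, range γ ⊆ range j → ∃ (u v : ℂ) (hu : j u = p) (hv : j v = q) (δ : Path u v),
      γ = (δ.map hj.continuous).cast hu.symm hv.symm := by
    intro γ h
    choose g hg using fun x => h (mem_range_self x)
    have hgc : Continuous g := by
      rw [hj.isEmbedding.continuous_iff]
      exact γ.continuous.congr fun x => (hg x).symm
    refine ⟨g 0, g 1, by simp [hg], by simp [hg], ⟨⟨g, hgc⟩, rfl, rfl⟩, ?_⟩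
    ext x; simp [hg]
  obtain ⟨u, v, hu, hv, δ, hδ⟩ := lift γ h
  obtain ⟨u', v', hu', hv', δ', hδ'⟩ := lift γ' h'
  have h1 : u' = u := hj.injective (hu'.trans hu.symm)
  have h2 : v' = v := hj.injective (hv'.trans hv.symm)
  subst h1 h2 hu hv
  rw [hδ, hδ']
  exact (SimplyConnectedSpace.paths_homotopic δ δ').map ⟨j, hj.continuous⟩

theorem exists_circle_equiv [T2Space M] {C : Set M} {φ : ℝ → M} (hc : Continuous φ)
    (hp : ∀ s t, φ s = φ t ↔ ∃ n : ℤ, t = s + n) (hr : range φ = C) :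
    ∃ e : AddCircle (1 : ℝ) ≃ₜ C, ∀ s : ℝ, (e (s : AddCircle (1:ℝ)) : M) = φ s := by
  have hper : Function.Periodic φ 1 := fun s => (hp _ _).2 ⟨-1, by simp⟩
  let e₀ : AddCircle (1 : ℝ) → C := fun z => ⟨hper.lift z, by
    induction z using QuotientAddGroup.induction_on with
    | H s => rw [Function.Periodic.lift_coe, ← hr]; exact ⟨s, rfl⟩⟩
  have hcont : Continuous e₀ := by
    refine Continuous.subtype_mk ?_ _
    exact continuous_coinduced_dom.2 hc
  have hbij : Function.Bijective e₀ := by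
    constructor
    · intro z w
      induction z using QuotientAddGroup.induction_on with
      | H s =>
      induction w using QuotientAddGroup.induction_on with
      | H t =>
      intro h
      have h' : φ s = φ t := congr_arg Subtype.val h
      obtain ⟨n, rfl⟩ := (hp s t).1 h'
      rw [QuotientAddGroup.eq]
      refine AddSubgroup.mem_zmultiples_iff.2 ⟨n, by simp⟩
    · rintro ⟨m, hm⟩
      rw [← hr] at hm
      obtain ⟨s, rfl⟩ := hm
      exact ⟨(s : AddCircle (1:ℝ)), rfl⟩
  exact ⟨Continuous.homeoOfEquivCompactToT2 (f := Equiv.ofBijective e₀ hbij) hcont, fun s => rfl⟩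

/-- A path in a circle lifts to the parameter line. -/
theorem circle_lift [T2Space M] {C : Set M} {φ : ℝ → M} (hc : Continuous φ)
    (hp : ∀ s t, φ s = φ t ↔ ∃ n : ℤ, t = s + n) (hr : range φ = C) {p q : M} (γ : Path p q)
    (hγ : range γ ⊆ C) {s₀ : ℝ} (hs : φ s₀ = p) :
    ∃ (t₀ : ℝ) (δ : Path s₀ t₀), ∀ x, γ x = φ (δ x) := by
  obtain ⟨e, he⟩ := exists_circle_equiv hc hp hr
  have : Fact ((0:ℝ) < 1) := ⟨one_pos⟩
  let g : C(unitInterval, AddCircle (1:ℝ)) := ⟨fun x => e.symm ⟨γ x, hγ (mem_range_self x)⟩, by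
    refine e.symm.continuous.comp ?_
    exact γ.continuous.subtype_mk _⟩
  obtain ⟨Γ, hΓ, hΓ0⟩ := (AddCircle.isCoveringMap_coe (1:ℝ)).exists_path_lifts g s₀ (by
    apply e.injective
    apply Subtype.ext
    simp only [g, ContinuousMap.coe_mk, e.apply_symm_apply]
    rw [he, hs]; simp)
  refine ⟨Γ 1, ⟨Γ, hΓ0, rfl⟩, fun x => ?_⟩
  change γ x = φ (Γ x)
  have h1 : (Γ x : AddCircle (1:ℝ)) = g x := congr_fun hΓ x
  rw [← he, h1]
  simp [g]

/-- A circle is null as soon as going once around it is null-homotopic: two paths in the circle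
lift to `ℝ`, with end parameters differing by an integer `n`, and so they differ by a conjugate of
the `n`-fold loop. -/
theorem null_of_loop [T2Space M] {C : Set M} {φ : ℝ → M} (hc : Continuous φ)
    (hp : ∀ s t, φ s = φ t ↔ ∃ n : ℤ, t = s + n) (hr : range φ = C)
    (h : (seg hc 0 1 rfl ((hp _ _).2 ⟨-1, by simp⟩)).Homotopic (Path.refl (φ 0))) : Null C := by
  have hsh : ∀ (n : ℤ) s t {p q : M} (h1 : φ s = p) (h2 : φ t = q) (h1' : φ (s + n) = p)
      (h2' : φ (t + n) = q), seg hc (s + n) (t + n) h1' h2' = seg hc s t h1 h2 := by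
    intro n s t p q h1 h2 h1' h2'
    ext x
    change φ _ = φ _
    rw [hp]
    exact ⟨-n, by push_cast; ring⟩
  have hz : ∀ (n : ℤ) s, φ (s + n) = φ s := fun n s => (hp _ _).2 ⟨-n, by push_cast; ring⟩
  have hz0 : ∀ n : ℤ, φ n = φ 0 := fun n => by have := hz n 0; rwa [zero_add] at this
  have hnat : ∀ n : ℕ, (seg hc 0 n rfl (hz0 n)).Homotopic (Path.refl (φ 0)) := by
    intro n
    induction n with
    | zero =>
      have : seg hc 0 ((0 : ℕ) : ℝ) rfl (hz0 (0:ℕ)) = Path.refl (φ 0) := by ext x; simp [seg]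
      rw [this]
    | succ n ih =>
      refine (seg_trans hc rfl (hz0 n) (hz0 (n + 1 : ℕ))).symm.trans ?_
      have h1 : seg hc ((n : ℤ) : ℝ) ((n + 1 : ℕ) : ℤ) (hz0 n) (hz0 (n + 1 : ℕ)) =
          seg hc 0 1 rfl ((hp _ _).2 ⟨-1, by simp⟩) := by
        ext x
        change φ _ = φ _
        rw [hp]
        exact ⟨-n, by push_cast; ring⟩
      rw [h1]
      refine (Path.Homotopic.hcomp ih h).trans ?_
      exact ⟨Path.Homotopy.transRefl _⟩
  have hint : ∀ n : ℤ, (seg hc 0 n rfl (hz0 n)).Homotopic (Path.refl (φ 0)) := by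
    intro n
    obtain ⟨k, rfl | rfl⟩ := n.eq_nat_or_neg
    · exact hnat k
    · have h1 : seg hc 0 ((-k : ℤ) : ℝ) rfl (hz0 _) = seg hc k 0 (hz0 k) rfl := by
        ext x
        change φ _ = φ _
        rw [hp]
        exact ⟨k, by push_cast; ring⟩
      rw [h1]
      have h2 := (seg_trans hc (rfl : φ 0 = φ 0) (hz0 k) (rfl : φ 0 = φ 0)).trans
        (seg_self hc (rfl : φ 0 = φ 0))
      refine Path.Homotopic.trans ?_ ((Path.Homotopic.hcomp (hnat k) (Path.Homotopic.refl _)).symm.trans h2)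
      exact ⟨(Path.Homotopy.reflTrans _).symm⟩
  intro p q γ γ' hγ hγ'
  obtain ⟨s₀, hs₀⟩ : p ∈ range φ := by rw [hr]; exact hγ ⟨0, γ.source⟩
  obtain ⟨t, δ, hδ⟩ := circle_lift hc hp hr γ hγ hs₀
  obtain ⟨t', δ', hδ'⟩ := circle_lift hc hp hr γ' hγ' hs₀
  have ht : φ t = q := by rw [← γ.target, hδ, δ.target]
  have ht' : φ t' = q := by rw [← γ'.target, hδ', δ'.target]
  refine (homotopic_seg hc δ hs₀ ht γ hδ).trans (Path.Homotopic.trans ?_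
    (homotopic_seg hc δ' hs₀ ht' γ' hδ').symm)
  have htt := ht.trans ht'.symm
  obtain ⟨n, rfl⟩ := (hp t _).1 htt
  -- the segment from `t` to `t + n` is conjugate to the `n`-fold loop at `φ 0`
  have h1 : (seg hc t (t + n) ht ht').Homotopic (Path.refl q) := by
    have hn : φ n = φ 0 := hz0 n
    have e1 := seg_trans hc ht (rfl : φ 0 = φ 0) hn
    have e2 := seg_trans hc ht hn ht'
    have e3 : seg hc n (t + n) hn ht' = seg hc 0 t rfl ht := by
      have := hsh n 0 t rfl ht (by rw [zero_add]; exact hn) ht'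
      rw [← this]
      ext x; simp [seg]
    rw [e3] at e2
    refine e2.symm.trans ((Path.Homotopic.hcomp e1.symm (Path.Homotopic.refl _)).trans ?_)
    refine (Path.Homotopic.hcomp ((Path.Homotopic.hcomp (Path.Homotopic.refl _) (hint n)).trans
      ⟨Path.Homotopy.transRefl _⟩) (Path.Homotopic.refl _)).trans ?_
    exact (seg_trans hc ht rfl ht).trans (seg_self hc ht)
  refine Path.Homotopic.trans ?_ (seg_trans hc hs₀ ht ht')
  refine Path.Homotopic.trans ?_ (Path.Homotopic.hcomp (Path.Homotopic.refl _) h1).symm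
  exact ⟨(Path.Homotopy.transRefl _).symm⟩
end

/-! ### Circles and pairs of arcs -/

section
variable {M : Type*} [TopologicalSpace M]

theorem range_seg {f : ℝ → M} (hf : Continuous f) (s t : ℝ) {p q : M} (hp : f s = p) (hq : f t = q) :
    range (seg hf s t hp hq) = f '' uIcc s t := by
  rw [← segment_eq_uIcc, segment_eq_image']
  ext m
  constructor
  · rintro ⟨x, rfl⟩
    exact ⟨_, ⟨x, x.2, rfl⟩, rfl⟩
  · rintro ⟨_, ⟨x, hx, rfl⟩, rfl⟩
    exact ⟨⟨x, hx⟩, rfl⟩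

theorem seg_injective {φ : ℝ → M} (hc : Continuous φ)
    (hp : ∀ s t, φ s = φ t ↔ ∃ n : ℤ, t = s + n) {s t : ℝ} {p q : M} (hs : φ s = p) (ht : φ t = q)
    (hne : s ≠ t) (hlt : |t - s| < 1) : Function.Injective (seg hc s t hs ht) := by
  intro x y hxy
  obtain ⟨n, hn⟩ := (hp _ _).1 (show φ (s + x * (t - s)) = φ (s + y * (t - s)) from hxy)
  have h1 : ((y : ℝ) - x) * (t - s) = n := by linarith
  have h2 : |(n : ℝ)| < 1 := by
    rw [← h1, abs_mul]
    have : |(y : ℝ) - x| ≤ 1 := by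
      rw [abs_le]; constructor <;> linarith [x.2.1, x.2.2, y.2.1, y.2.2]
    nlinarith [abs_nonneg (t - s), abs_nonneg ((y : ℝ) - x)]
  have h3 : n = 0 := by
    have : |n| < 1 := by exact_mod_cast h2
    exact Int.abs_lt_one_iff.1 this
  rw [h3, Int.cast_zero, mul_eq_zero] at h1
  rcases h1 with h1 | h1
  · exact Subtype.ext (by linarith)
  · exact absurd (by linarith) hne

/-- The parameter segment from `s` to `t`, shorter than a period, is complemented in the circle by
a second simple arc with the same endpoints. -/
theorem circle_arcs {φ : ℝ → M} (hc : Continuous φ)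
    (hp : ∀ s t, φ s = φ t ↔ ∃ n : ℤ, t = s + n) {s t : ℝ} {p q : M} (hs : φ s = p) (ht : φ t = q)
    (hne : s ≠ t) (hlt : |t - s| < 1) :
    ∃ α : Path p q, Function.Injective α ∧ range (seg hc s t hs ht) ∪ range α = range φ ∧
      range (seg hc s t hs ht) ∩ range α ⊆ {p, q} := by
  have hkey : ∀ t' : ℝ, (∃ n : ℤ, t' = t + n) → (s < t ∧ t' = t - 1 ∨ t < s ∧ t' = t + 1) →
      ∃ α : Path p q, Function.Injective α ∧ range (seg hc s t hs ht) ∪ range α = range φ ∧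
      range (seg hc s t hs ht) ∩ range α ⊆ {p, q} := by
    intro t' hn h
    have ht' : φ t' = q := by rw [← ht, eq_comm]; exact (hp _ _).2 hn
    rw [abs_lt] at hlt
    refine ⟨seg hc s t' hs ht', seg_injective hc hp hs ht' (by grind) (by rw [abs_lt]; grind), ?_, ?_⟩
    · rw [range_seg, range_seg]
      refine Subset.antisymm (union_subset (image_subset_range _ _) (image_subset_range _ _)) ?_
      rintro _ ⟨r, rfl⟩
      rcases h with ⟨h, rfl⟩ | ⟨h, rfl⟩
      · rw [uIcc_of_le h.le, uIcc_of_ge (by linarith)]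
        have hmem := toIcoMod_mem_Ico (zero_lt_one' ℝ) (t - 1) r
        have heq : φ (toIcoMod (zero_lt_one' ℝ) (t - 1) r) = φ r :=
          (hp _ _).2 ⟨toIcoDiv (zero_lt_one' ℝ) (t - 1) r, by simp [toIcoMod]⟩
        rcases le_total (toIcoMod (zero_lt_one' ℝ) (t - 1) r) s with h1 | h1
        · exact Or.inr ⟨_, ⟨hmem.1, h1⟩, heq⟩
        · exact Or.inl ⟨_, ⟨h1, by linarith [hmem.2]⟩, heq⟩
      · rw [uIcc_of_ge h.le, uIcc_of_le (by linarith)]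
        have hmem := toIcoMod_mem_Ico (zero_lt_one' ℝ) t r
        have heq : φ (toIcoMod (zero_lt_one' ℝ) t r) = φ r :=
          (hp _ _).2 ⟨toIcoDiv (zero_lt_one' ℝ) t r, by simp [toIcoMod]⟩
        rcases le_total (toIcoMod (zero_lt_one' ℝ) t r) s with h1 | h1
        · exact Or.inl ⟨_, ⟨hmem.1, h1⟩, heq⟩
        · exact Or.inr ⟨_, ⟨h1, by linarith [hmem.2]⟩, heq⟩
    · rw [range_seg, range_seg]
      rintro _ ⟨⟨a, ha, rfl⟩, ⟨b, hb, hab⟩⟩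
      obtain ⟨n, rfl⟩ := (hp b a).1 hab
      have hkey : ∀ k : ℤ, -1 < (k : ℝ) → (k : ℝ) < 2 → k = 0 ∨ k = 1 := by
        intro k h1 h2
        have h1' : -1 < k := by exact_mod_cast h1
        have h2' : k < 2 := by exact_mod_cast h2
        omega
      rcases h with ⟨h, rfl⟩ | ⟨h, rfl⟩
      · rw [uIcc_of_le h.le, mem_Icc] at ha
        rw [uIcc_of_ge (by linarith), mem_Icc] at hb
        rcases hkey n (by linarith) (by linarith) with rfl | rfl
        · left; rw [← hs]; congr 1; simp at *; linarith
        · right; rw [mem_singleton_iff, ← ht]; congr 1; simp at *; linarith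
      · rw [uIcc_of_ge h.le, mem_Icc] at ha
        rw [uIcc_of_le (by linarith), mem_Icc] at hb
        rcases hkey (-n) (by push_cast; linarith) (by push_cast; linarith) with h0 | h0
        · obtain rfl : n = 0 := by omega
          left; rw [← hs]; congr 1; simp at *; linarith
        · obtain rfl : n = -1 := by omega
          right; rw [mem_singleton_iff, ← ht]; congr 1; simp at *; linarith
  rcases lt_or_gt_of_ne hne with h | h
  · exact hkey (t - 1) ⟨-1, by push_cast; ring⟩ (Or.inl ⟨h, rfl⟩)
  · exact hkey (t + 1) ⟨1, by push_cast; ring⟩ (Or.inr ⟨h, rfl⟩)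

/-- Two points of a circle divide it into two simple arcs. -/
theorem IsCircle.arcs {C : Set M} (hC : IsCircle C) {p q : M} (hpC : p ∈ C) (hqC : q ∈ C) (hne : p ≠ q) :
    ∃ α β : Path p q, Function.Injective α ∧ Function.Injective β ∧ range α ∪ range β = C ∧
      range α ∩ range β ⊆ {p, q} := by
  obtain ⟨φ, hc, hp, rfl⟩ := hC
  obtain ⟨s, hs⟩ := hpC
  obtain ⟨t, ht⟩ := hqC
  have hmem := toIcoMod_mem_Ico (zero_lt_one' ℝ) s t
  have ht' : φ (toIcoMod (zero_lt_one' ℝ) s t) = q := by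
    rw [← ht]
    exact (hp _ _).2 ⟨toIcoDiv (zero_lt_one' ℝ) s t, by simp [toIcoMod]⟩
  have hst : s ≠ toIcoMod (zero_lt_one' ℝ) s t := by
    intro h; rw [← h] at ht'; exact hne (hs.symm.trans ht')
  have habs : |toIcoMod (zero_lt_one' ℝ) s t - s| < 1 := by
    rw [abs_lt]; constructor <;> linarith [hmem.1, hmem.2]
  obtain ⟨β, h1, h2, h3⟩ := circle_arcs hc hp hs ht' hst habs
  exact ⟨_, β, seg_injective hc hp hs ht' hst habs, h1, h2, h3⟩

/-- A simple closed path is the once-around loop of a circle. -/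
theorem circle_of_loop {p : M} (γ : Path p p)
    (hinj : ∀ s t : unitInterval, (s : ℝ) < 1 → (t : ℝ) < 1 → γ s = γ t → s = t) :
    ∃ φ : ℝ → M, ∃ hc : Continuous φ, (∀ s t, φ s = φ t ↔ ∃ n : ℤ, t = s + n) ∧ range φ = range γ ∧
      ∃ (h0 : φ 0 = p) (h1 : φ 1 = p), seg hc 0 1 h0 h1 = γ := by
  let φ : ℝ → M := fun t => γ.extend (Int.fract t)
  have hval : ∀ t, ∃ x : unitInterval, (x : ℝ) = Int.fract t ∧ φ t = γ x := fun t =>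
    ⟨⟨Int.fract t, Int.fract_nonneg t, (Int.fract_lt_one t).le⟩, rfl,
      γ.extend_apply ⟨Int.fract_nonneg t, (Int.fract_lt_one t).le⟩⟩
  have hc : Continuous φ := by
    refine ContinuousOn.comp_fract'' (f := γ.extend) γ.continuous_extend.continuousOn ?_
    simp
  have hx : ∀ x : unitInterval, φ x = γ x := by
    intro x
    rcases lt_or_eq_of_le x.2.2 with h | h
    · obtain ⟨y, hy, hy'⟩ := hval x
      rw [hy']
      congr 1
      apply Subtype.ext
      rw [hy, Int.fract_eq_self.2 ⟨x.2.1, h⟩]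
    · have : x = 1 := Subtype.ext h
      subst this
      simp [φ]
  have h0 : φ 0 = p := by simp [φ]
  have h1 : φ 1 = p := by simp [φ]
  refine ⟨φ, hc, ?_, ?_, h0, h1, ?_⟩
  · intro s t
    constructor
    · intro h
      obtain ⟨x, hx, hx'⟩ := hval s
      obtain ⟨y, hy, hy'⟩ := hval t
      have := hinj x y (by rw [hx]; exact Int.fract_lt_one s) (by rw [hy]; exact Int.fract_lt_one t)
        (by rw [← hx', ← hy', h])
      have h2 : Int.fract s = Int.fract t := by rw [← hx, ← hy, this]
      obtain ⟨n, hn⟩ := Int.fract_eq_fract.1 h2.symm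
      exact ⟨n, by linarith⟩
    · rintro ⟨n, rfl⟩
      simp [φ]
  · refine Subset.antisymm ?_ ?_
    · rintro _ ⟨t, rfl⟩
      obtain ⟨x, _, h⟩ := hval t
      rw [h]; exact mem_range_self _
    · rintro _ ⟨x, rfl⟩
      exact ⟨x, hx x⟩
  · ext x
    change φ _ = _
    rw [← hx]
    congr 1; ring

/-- Two simple arcs that meet only in their common endpoints form a circle, with the first arc
followed by the reverse of the second one as its loop. -/
theorem circle_of_arcs {p q : M} (α β : Path p q) (ha : Function.Injective α) (hb : Function.Injective β)
    (hab : range α ∩ range β ⊆ {p, q}) :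
    ∃ φ : ℝ → M, ∃ hc : Continuous φ, (∀ s t, φ s = φ t ↔ ∃ n : ℤ, t = s + n) ∧
      range φ = range α ∪ range β ∧
      ∃ (h0 : φ 0 = p) (h1 : φ 1 = p), seg hc 0 1 h0 h1 = α.trans β.symm := by
  have hα : ∀ x, α x = p → x = 0 := fun x h => ha (h.trans α.source.symm)
  have hα1 : ∀ x, α x = q → x = 1 := fun x h => ha (h.trans α.target.symm)
  have hβ : ∀ x, β x = p → x = 0 := fun x h => hb (h.trans β.source.symm)
  have hβ1 : ∀ x, β x = q → x = 1 := fun x h => hb (h.trans β.target.symm)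
  have hcross : ∀ s t : unitInterval, (s : ℝ) ≤ 1 / 2 → ¬ (t : ℝ) ≤ 1/2 → (t : ℝ) < 1 →
      (α.trans β.symm) s = (α.trans β.symm) t → False := by
    intro s t hs ht ht1 h
    rw [Path.trans_apply, Path.trans_apply, dif_pos hs, dif_neg ht, Path.symm_apply] at h
    rcases hab ⟨mem_range_self _, by rw [h]; exact mem_range_self _⟩ with h1 | h1
    · have h2 := hβ _ (h.symm.trans h1)
      have h3 := congr_arg Subtype.val h2
      simp only [unitInterval.coe_symm_eq, Icc.coe_zero] at h3
      linarith
    · have h2 := hβ1 _ (h.symm.trans h1)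
      have h3 := congr_arg Subtype.val h2
      simp only [unitInterval.coe_symm_eq, Icc.coe_one] at h3
      linarith
  obtain ⟨φ, hc, hp, hr, h⟩ := circle_of_loop (α.trans β.symm) (by
    intro s t hs ht h
    by_cases h1 : (s : ℝ) ≤ 1/2 <;> by_cases h2 : (t : ℝ) ≤ 1/2
    · rw [Path.trans_apply, Path.trans_apply, dif_pos h1, dif_pos h2] at h
      have := congr_arg Subtype.val (ha h)
      exact Subtype.ext (by simpa using this)
    · exact (hcross _ _ h1 h2 ht h).elim
    · exact (hcross _ _ h2 h1 hs h.symm).elim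
    · rw [Path.trans_apply, Path.trans_apply, dif_neg h1, dif_neg h2, Path.symm_apply, Path.symm_apply] at h
      have := congr_arg Subtype.val (hb h)
      simp only [unitInterval.coe_symm_eq] at this
      exact Subtype.ext (by linarith))
  refine ⟨φ, hc, hp, ?_, h⟩
  rw [hr, Path.trans_range, Path.symm_range]

theorem isCircle_of_arcs {p q : M} (α β : Path p q) (ha : Function.Injective α)
    (hb : Function.Injective β) (hab : range α ∩ range β ⊆ {p, q}) :
    IsCircle (range α ∪ range β) := by
  obtain ⟨φ, hc, hp, hr, _⟩ := circle_of_arcs α β ha hb hab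
  exact ⟨φ, hc, hp, hr⟩

/-- A circle that consists of two homotopic simple arcs is null. -/
theorem null_of_arcs [T2Space M] {p q : M} (α β : Path p q) (ha : Function.Injective α)
    (hb : Function.Injective β) (hab : range α ∩ range β ⊆ {p, q}) (h : α.Homotopic β) :
    Null (range α ∪ range β) := by
  obtain ⟨φ, hc, hp, hr, h0, h1, hs⟩ := circle_of_arcs α β ha hb hab
  subst h0
  refine null_of_loop hc hp hr ?_
  rw [hs]
  refine (Path.Homotopic.hcomp h (Path.Homotopic.refl _)).trans ?_
  exact ⟨(Path.Homotopy.reflTransSymm β).symm⟩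
end

/-! ### Sides of a separating circle and the theta lemma -/

section
variable {M : Type*} [TopologicalSpace M]

/-- `P` is a complementary component of `C`, for closed `C` in a locally connected space: it is
open, connected, nonempty and disjoint from `C`, with frontier in `C`. -/
structure IsSide (C P : Set M) : Prop where
  isOpen : IsOpen P
  isPreconnected : IsPreconnected P
  nonempty : P.Nonempty
  disjoint : Disjoint P C
  frontier_subset : frontier P ⊆ C

/-- Every circle in `M` has exactly two complementary components. -/
def Separating (M : Type*) [TopologicalSpace M] : Prop :=
  ∀ C : Set M, IsCircle C → Nat.card (ConnectedComponents ↥(Cᶜ)) = 2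

theorem IsSide.subset {C P T : Set M} (h : IsSide C P) (hT : IsPreconnected T) (hd : Disjoint T C)
    (hne : (T ∩ P).Nonempty) : T ⊆ P :=
  conn_subset hT (hd.mono_right h.frontier_subset) hne

theorem IsSide.closure_subset {C P : Set M} (h : IsSide C P) : closure P ⊆ P ∪ C := by
  rw [closure_eq_self_union_frontier]
  exact union_subset_union_right _ h.frontier_subset

theorem IsSide.eq_of_meet {C P P' : Set M} (h : IsSide C P) (h' : IsSide C P') (hne : (P ∩ P').Nonempty) :
    P = P' :=
  Subset.antisymm (h'.subset h.isPreconnected h.disjoint hne)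
    (h.subset h'.isPreconnected h'.disjoint (by rwa [inter_comm]))

variable [T2Space M]

theorem Separating.sides (hS : Separating M) (hM : HasCharts M) {C : Set M} (hC : IsCircle C) :
    ∃ A B, IsSide C A ∧ IsSide C B ∧ Disjoint A B ∧ A ∪ B = Cᶜ := by
  have := hM.locallyPathConnectedSpace
  have hCo : IsOpen Cᶜ := hC.isClosed.isOpen_compl
  obtain ⟨a, b, hab, hun⟩ := Nat.card_eq_two_iff.1 (hS C hC)
  obtain ⟨u, rfl⟩ := ConnectedComponents.surjective_coe a
  obtain ⟨v, rfl⟩ := ConnectedComponents.surjective_coe b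
  have hmem : ∀ w : ↥Cᶜ, ∀ z (hz : z ∈ Cᶜ), z ∈ connectedComponentIn Cᶜ (w : M) ↔
      ((⟨z, hz⟩ : ↥Cᶜ) : ConnectedComponents ↥Cᶜ) = w := by
    intro w z hz
    rw [connectedComponentIn_eq_image w.2, ConnectedComponents.coe_eq_coe']
    constructor
    · rintro ⟨x, hx, rfl⟩; exact hx
    · intro h; exact ⟨_, h, rfl⟩
  have hd : Disjoint (connectedComponentIn Cᶜ (u : M)) (connectedComponentIn Cᶜ (v : M)) := by
    rw [Set.disjoint_left]
    intro z hz hz'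
    have hzC := connectedComponentIn_subset _ _ hz
    exact hab (((hmem u z hzC).1 hz).symm.trans ((hmem v z hzC).1 hz'))
  have hU : connectedComponentIn Cᶜ (u : M) ∪ connectedComponentIn Cᶜ (v : M) = Cᶜ := by
    refine Subset.antisymm (union_subset (connectedComponentIn_subset _ _)
      (connectedComponentIn_subset _ _)) fun z hz => ?_
    have : ((⟨z, hz⟩ : ↥Cᶜ) : ConnectedComponents ↥Cᶜ) ∈ ({↑u, ↑v} : Set (ConnectedComponents ↥Cᶜ)) := by
      rw [hun]; trivial
    rcases this with h | h
    · exact Or.inl ((hmem u z hz).2 h)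
    · exact Or.inr ((hmem v z hz).2 h)
  have hside : ∀ w : ↥Cᶜ, IsSide C (connectedComponentIn Cᶜ (w : M)) := by
    intro w
    refine ⟨hCo.connectedComponentIn, isPreconnected_connectedComponentIn,
      ⟨w, mem_connectedComponentIn w.2⟩,
      disjoint_compl_left.mono_left (connectedComponentIn_subset _ _), ?_⟩
    intro z hz
    by_contra h
    exact Set.disjoint_left.1 (frontier_component hCo (w : M)) hz h
  exact ⟨_, _, hside u, hside v, hd, hU⟩

theorem Separating.other (hS : Separating M) (hM : HasCharts M) {C P : Set M} (hC : IsCircle C)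
    (hP : IsSide C P) : ∃ O, IsSide C O ∧ Disjoint P O ∧ P ∪ O = Cᶜ := by
  obtain ⟨A, B, hA, hB, hAB, hU⟩ := hS.sides hM hC
  obtain ⟨z, hz⟩ := hP.nonempty
  have : z ∈ A ∪ B := by rw [hU]; exact Set.disjoint_left.1 hP.disjoint hz
  rcases this with h | h
  · obtain rfl := hP.eq_of_meet hA ⟨z, hz, h⟩
    exact ⟨B, hB, hAB, hU⟩
  · obtain rfl := hP.eq_of_meet hB ⟨z, hz, h⟩
    exact ⟨A, hA, hAB.symm, by rwa [union_comm]⟩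

/-- One of the two sides of a circle is disjoint from a given connected set that does not meet the
circle. -/
theorem Separating.avoid (hS : Separating M) (hM : HasCharts M) {C T : Set M} (hC : IsCircle C)
    (hT : IsPreconnected T) (hd : Disjoint T C) : ∃ P, IsSide C P ∧ Disjoint P T := by
  obtain ⟨A, B, hA, hB, hAB, hU⟩ := hS.sides hM hC
  by_cases h : (T ∩ A).Nonempty
  · exact ⟨B, hB, (hAB.mono_left (hA.subset hT hd h)).symm⟩
  · exact ⟨A, hA, (Set.disjoint_iff_inter_eq_empty.2 (not_nonempty_iff_eq_empty.1 h)).symm⟩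

/-- Let the side `P` of a circle `C = α₁ ∪ α₂` be crossed by a simple arc `κ` joining the endpoints
of `α₁` and `α₂`. Then the circles `κ ∪ α₁` and `κ ∪ α₂` have disjoint sides contained in `P`. -/
theorem theta [ConnectedSpace M] (hS : Separating M) (hM : HasCharts M) {C P : Set M} (hC : IsCircle C)
    (hP : IsSide C P) {p q : M} (α₁ α₂ κ : Path p q) (h₁ : Function.Injective α₁)
    (h₂ : Function.Injective α₂) (hk : Function.Injective κ) (hU : range α₁ ∪ range α₂ = C)
    (hI : range α₁ ∩ range α₂ ⊆ {p, q}) (hkP : range κ ⊆ P ∪ {p, q}) :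
    ∃ P₁ P₂, IsSide (range κ ∪ range α₁) P₁ ∧ IsSide (range κ ∪ range α₂) P₂ ∧ P₁ ⊆ P ∧ P₂ ⊆ P ∧
      Disjoint P₁ P₂ := by
  have hpC : p ∈ C := by rw [← hU]; exact Or.inl ⟨0, α₁.source⟩
  have hqC : q ∈ C := by rw [← hU]; exact Or.inl ⟨1, α₁.target⟩
  have hkC : range κ ∩ C ⊆ {p, q} := by
    rintro z ⟨hz, hzC⟩
    exact (hkP hz).resolve_left fun h => Set.disjoint_left.1 hP.disjoint h hzC
  have hends : ∀ α : Path p q, ({p, q} : Set M) ⊆ range α := by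
    rintro α _ (rfl | rfl)
    exacts [⟨0, α.source⟩, ⟨1, α.target⟩]
  obtain ⟨O, hO, hPO, hPOU⟩ := hS.other hM hC hP
  have hCO := subset_closure_of_frontier hM hC hO.isOpen hO.nonempty hO.disjoint hO.frontier_subset
  -- the other side `O` of `C`, with the open arc opposite to `α` added, is connected and does not
  -- meet `κ ∪ α`; the side of `κ ∪ α` that avoids it lies in `P`
  have key : ∀ α β : Path p q, Function.Injective α → range α ∪ range β = C →
      range α ∩ range β ⊆ {p, q} → ∃ P₁, IsSide (range κ ∪ range α) P₁ ∧ P₁ ⊆ P := by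
    intro α β ha hab hab'
    have hcirc : IsCircle (range κ ∪ range α) := isCircle_of_arcs κ α hk ha fun z hz =>
      hkC ⟨hz.1, by rw [← hab]; exact Or.inl hz.2⟩
    have hT : IsPreconnected (O ∪ (range β \ {p, q})) :=
      hO.isPreconnected.subset_closure subset_union_left (union_subset subset_closure
        (sdiff_subset.trans ((subset_union_right.trans hab.subset).trans hCO)))
    have hd : Disjoint (O ∪ (range β \ {p, q})) (range κ ∪ range α) := by
      rw [Set.disjoint_left]
      rintro z (hz | ⟨hz, hz'⟩) (h | h)
      · rcases hkP h with h' | h'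
        · exact Set.disjoint_left.1 hPO h' hz
        · exact Set.disjoint_left.1 hO.disjoint hz (by rw [← hab]; exact Or.inl (hends α h'))
      · exact Set.disjoint_left.1 hO.disjoint hz (by rw [← hab]; exact Or.inl h)
      · exact hz' (hkC ⟨h, by rw [← hab]; exact Or.inr hz⟩)
      · exact hz' (hab' ⟨h, hz⟩)
    obtain ⟨P₁, h1, h2⟩ := hS.avoid hM hcirc hT hd
    refine ⟨P₁, h1, fun z hz => ?_⟩
    have hzC : z ∉ C := by
      rw [← hab]
      rintro (h | h)
      · exact Set.disjoint_left.1 h1.disjoint hz (Or.inr h)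
      · by_cases hpq : z ∈ ({p, q} : Set M)
        · exact Set.disjoint_left.1 h1.disjoint hz (Or.inr (hends α hpq))
        · exact Set.disjoint_left.1 h2 hz (Or.inr ⟨h, hpq⟩)
    have : z ∈ P ∪ O := by rw [hPOU]; exact hzC
    exact this.resolve_right fun h => Set.disjoint_left.1 h2 hz (Or.inl h)
  obtain ⟨P₁, hP₁, hP₁P⟩ := key α₁ α₂ h₁ hU hI
  obtain ⟨P₂, hP₂, hP₂P⟩ := key α₂ α₁ h₂ (by rwa [union_comm]) (by rwa [inter_comm])
  refine ⟨P₁, P₂, hP₁, hP₂, hP₁P, hP₂P, ?_⟩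
  have hd1 : Disjoint P₁ (range κ ∪ range α₂) := by
    refine Set.disjoint_union_right.2 ⟨hP₁.disjoint.mono_right subset_union_left, ?_⟩
    exact hP.disjoint.mono hP₁P (subset_union_right.trans hU.subset)
  have hd2 : Disjoint P₂ (range κ ∪ range α₁) := by
    refine Set.disjoint_union_right.2 ⟨hP₂.disjoint.mono_right subset_union_left, ?_⟩
    exact hP.disjoint.mono hP₂P (subset_union_left.trans hU.subset)
  by_contra hne
  rw [Set.not_disjoint_iff_nonempty_inter] at hne
  have heq : P₁ = P₂ := Subset.antisymm (hP₂.subset hP₁.isPreconnected hd1 hne)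
    (hP₁.subset hP₂.isPreconnected hd2 (by rwa [inter_comm]))
  have hcirc : IsCircle (range κ ∪ range α₁) := isCircle_of_arcs κ α₁ hk h₁ fun z hz =>
      hkC ⟨hz.1, by rw [← hU]; exact Or.inl hz.2⟩
  have h1 := subset_closure_of_frontier hM hcirc hP₁.isOpen hP₁.nonempty hP₁.disjoint hP₁.frontier_subset
  -- if the two sides were equal, an interior point of `α₁` would be adherent to `P₂`, so it would
  -- lie in `P₂` or on `κ ∪ α₂`, which is impossible
  let m : unitInterval := ⟨1/2, by norm_num, by norm_num⟩
  have hm0 : α₁ m ≠ p := fun h => by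
    have := congr_arg Subtype.val (h₁ (h.trans α₁.source.symm)); simp [m] at this
  have hm1 : α₁ m ≠ q := fun h => by
    have := congr_arg Subtype.val (h₁ (h.trans α₁.target.symm)); norm_num [m] at this
  have hmpq : α₁ m ∉ ({p, q} : Set M) := by
    rintro (h | h)
    exacts [hm0 h, hm1 h]
  have hmC : α₁ m ∈ C := by rw [← hU]; exact Or.inl (mem_range_self _)
  have h2 : α₁ m ∈ closure P₂ := by rw [← heq]; exact h1 (Or.inr (mem_range_self _))
  rcases hP₂.closure_subset h2 with h | h | h
  · exact Set.disjoint_left.1 hP.disjoint (hP₂P h) hmC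
  · exact hmpq (hkC ⟨h, hmC⟩)
  · exact hmpq (hI ⟨mem_range_self _, h⟩)

end

/-! ### Chart circles and thin crosscuts -/

section
variable {M : Type*} [TopologicalSpace M]

/-- The image in `M` of the circle with centre `c` and radius `r` of a chart `j`, parametrized with
period `1`. -/
noncomputable def loopMap (j : ℂ → M) (c : ℂ) (r : ℝ) (s : ℝ) : M :=
  j (c + r * Complex.exp ((2 * Real.pi * s : ℝ) * Complex.I))

theorem loopMap_continuous {j : ℂ → M} (hj : Continuous j) (c : ℂ) (r : ℝ) :
    Continuous (loopMap j c r) := by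
  unfold loopMap; fun_prop

theorem loopMap_eq_iff {j : ℂ → M} (hj : Function.Injective j) (c : ℂ) {r : ℝ} (hr : 0 < r) (s t : ℝ) :
    loopMap j c r s = loopMap j c r t ↔ ∃ n : ℤ, t = s + n := by
  unfold loopMap
  have hr' : (r : ℂ) ≠ 0 := by exact_mod_cast hr.ne'
  rw [hj.eq_iff, add_right_inj, mul_right_inj' hr', eq_comm, Complex.exp_eq_exp_iff_exists_int]
  refine exists_congr fun n => ?_
  have hpi : (Real.pi : ℂ) ≠ 0 := by exact_mod_cast Real.pi_ne_zero
  constructor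
  · intro h
    have h2 : (2 * Real.pi * Complex.I) * (t - (s + n)) = 0 := by
      push_cast at h; linear_combination h
    have h3 : (t : ℂ) - (s + n) = 0 := by
      refine (mul_eq_zero.1 h2).resolve_left ?_
      simp [Complex.I_ne_zero]
    have h4 : ((t - (s + n) : ℝ) : ℂ) = 0 := by push_cast; exact h3
    have : t - (s + n) = 0 := by exact_mod_cast h4
    linarith
  · rintro rfl
    push_cast; ring

theorem range_loopMap (j : ℂ → M) (c : ℂ) {r : ℝ} (hr : 0 < r) :
    range (loopMap j c r) = j '' Metric.sphere c r := by
  ext m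
  constructor
  · rintro ⟨s, rfl⟩
    refine ⟨_, ?_, rfl⟩
    rw [mem_sphere_iff_norm, add_sub_cancel_left, norm_mul, Complex.norm_exp_ofReal_mul_I]
    simp [abs_of_pos hr]
  · rintro ⟨z, hz, rfl⟩
    rw [mem_sphere_iff_norm] at hz
    refine ⟨(z - c).arg / (2 * Real.pi), ?_⟩
    have h1 : 2 * Real.pi * ((z - c).arg / (2 * Real.pi)) = (z - c).arg := by
      field_simp
    unfold loopMap
    rw [h1]
    congr 1
    have := Complex.norm_mul_exp_arg_mul_I (z - c)
    rw [hz] at this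
    rw [this]; ring

theorem isCircle_sphere {j : ℂ → M} (hj : IsOpenEmbedding j) (c : ℂ) {r : ℝ} (hr : 0 < r) :
    IsCircle (j '' Metric.sphere c r) :=
  ⟨loopMap j c r, loopMap_continuous hj.continuous c r, loopMap_eq_iff hj.injective c hr,
    range_loopMap j c hr⟩

theorem frontier_image_ball [T2Space M] {j : ℂ → M} (hj : IsOpenEmbedding j) (c : ℂ) {r : ℝ} :
    frontier (j '' Metric.ball c r) ⊆ j '' Metric.sphere c r := by
  have hcl : IsClosed (j '' Metric.closedBall c r) :=
    ((isCompact_closedBall c r).image hj.continuous).isClosed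
  have hop : IsOpen (j '' Metric.ball c r) := hj.isOpenMap _ Metric.isOpen_ball
  rintro z ⟨hz, hz'⟩
  rw [hop.interior_eq] at hz'
  obtain ⟨w, hw, rfl⟩ := closure_minimal (image_mono Metric.ball_subset_closedBall) hcl hz
  refine ⟨w, ?_, rfl⟩
  have h1 : ¬ dist w c < r := fun h => hz' ⟨w, h, rfl⟩
  exact le_antisymm hw (not_lt.1 h1)

/-- A chart disc is a side of its boundary circle. -/
theorem isSide_ball [T2Space M] {j : ℂ → M} (hj : IsOpenEmbedding j) (c : ℂ) {r : ℝ} (hr : 0 < r) :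
    IsSide (j '' Metric.sphere c r) (j '' Metric.ball c r) where
  isOpen := hj.isOpenMap _ Metric.isOpen_ball
  isPreconnected := (convex_ball c r).isPreconnected.image _ hj.continuous.continuousOn
  nonempty := ⟨j c, c, Metric.mem_ball_self hr, rfl⟩
  disjoint := (Set.disjoint_image_iff hj.injective).2 (Metric.sphere_disjoint_ball.symm)
  frontier_subset := frontier_image_ball hj c

/-- Points of a circle close to `φ t₀` have parameters close to `t₀`. -/
theorem circle_local [T2Space M] {φ : ℝ → M} (hc : Continuous φ)
    (hp : ∀ s t, φ s = φ t ↔ ∃ n : ℤ, t = s + n) (t₀ : ℝ) {ε : ℝ} (hε : 0 < ε) :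
    ∃ W ∈ 𝓝 (φ t₀), ∀ y ∈ W, y ∈ range φ → ∃ t, |t - t₀| < ε ∧ φ t = y := by
  have hK : IsClosed (φ '' Icc (t₀ + ε) (t₀ + 1 - ε)) := (isCompact_Icc.image hc).isClosed
  refine ⟨(φ '' Icc (t₀ + ε) (t₀ + 1 - ε))ᶜ, hK.isOpen_compl.mem_nhds ?_, ?_⟩
  · rintro ⟨t, ht, h⟩
    obtain ⟨n, rfl⟩ := (hp t₀ t).1 h.symm
    have h1 : (0 : ℝ) < n := by linarith [ht.1]
    have h2 : (n : ℝ) < 1 := by linarith [ht.2]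
    have h1' : 0 < n := by exact_mod_cast h1
    have h2' : n < 1 := by exact_mod_cast h2
    omega
  · rintro y hy ⟨t, rfl⟩
    have hmem := toIcoMod_mem_Ico (zero_lt_one' ℝ) t₀ t
    have heq : φ (toIcoMod (zero_lt_one' ℝ) t₀ t) = φ t :=
      (hp _ _).2 ⟨toIcoDiv (zero_lt_one' ℝ) t₀ t, by simp [toIcoMod]⟩
    by_cases h1 : toIcoMod (zero_lt_one' ℝ) t₀ t < t₀ + ε
    · exact ⟨_, by rw [abs_lt]; constructor <;> linarith [hmem.1], heq⟩
    · by_cases h2 : toIcoMod (zero_lt_one' ℝ) t₀ t ≤ t₀ + 1 - ε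
      · exact absurd ⟨_, ⟨not_lt.1 h1, h2⟩, heq⟩ hy
      · refine ⟨toIcoMod (zero_lt_one' ℝ) t₀ t - 1, by rw [abs_lt]; constructor <;> linarith [hmem.2], ?_⟩
        rw [← heq]
        exact (hp _ _).2 ⟨1, by push_cast; ring⟩

/-- The open arc of the unit circle of the chart with parameters in `(u, v)` is a crosscut of the
side `P` of `C`: it lies in `P`, and its endpoints, which are distinct, lie on `C`. -/
structure IsCross (j : ℂ → M) (C P : Set M) (u v : ℝ) : Prop where
  lt : u < v
  lt' : v < u + 1
  left : loopMap j 0 1 u ∈ C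
  right : loopMap j 0 1 v ∈ C
  mem : ∀ t ∈ Ioo u v, loopMap j 0 1 t ∈ P

/-- The crosscut `Q` of `P` is thin if it bounds in `P` an open set `X` that lies in the annulus `1
/ 2 < ‖z‖ < 2` of the chart. -/
def Thin (j : ℂ → M) (P Q : Set M) : Prop :=
  ∃ X, IsOpen X ∧ X ⊆ P ∧ X ⊆ j '' {z | 1 / 2 < ‖z‖ ∧ ‖z‖ < 2} ∧ Q ⊆ closure X ∧
    frontier X ∩ P ⊆ Q ∧ Disjoint X Q

theorem IsCross.exists_path {j : ℂ → M} (hj : IsOpenEmbedding j) {C P : Set M} {u v : ℝ}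
    (h : IsCross j C P u v) : ∃ κ : Path (loopMap j 0 1 u) (loopMap j 0 1 v), Function.Injective κ ∧
      range κ = loopMap j 0 1 '' Icc u v ∧
      range κ ⊆ P ∪ {loopMap j 0 1 u, loopMap j 0 1 v} ∧ range κ ∩ P ⊆ loopMap j 0 1 '' Ioo u v ∪
        {loopMap j 0 1 u, loopMap j 0 1 v} := by
  have hr : range (seg (loopMap_continuous hj.continuous 0 1) u v rfl rfl) = loopMap j 0 1 '' Icc u v := by
    rw [range_seg, uIcc_of_le h.lt.le]
  have hsub : loopMap j 0 1 '' Icc u v ⊆ loopMap j 0 1 '' Ioo u v ∪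
        {loopMap j 0 1 u, loopMap j 0 1 v} := by
    rintro _ ⟨t, ht, rfl⟩
    rcases eq_or_lt_of_le ht.1 with h1 | h1
    · subst h1; simp
    rcases eq_or_lt_of_le ht.2 with h2 | h2
    · subst h2; simp
    exact Or.inl ⟨t, ⟨h1, h2⟩, rfl⟩
  refine ⟨seg (loopMap_continuous hj.continuous 0 1) u v rfl rfl, ?_, hr, ?_, ?_⟩
  · exact seg_injective (loopMap_continuous hj.continuous 0 1)
      (loopMap_eq_iff hj.injective 0 one_pos) rfl rfl h.lt.ne (by
        rw [abs_lt]; constructor <;> linarith [h.lt, h.lt'])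
  · rw [hr]
    refine hsub.trans (union_subset_union_left _ ?_)
    rintro _ ⟨t, ht, rfl⟩
    exact h.mem t ht
  · rw [hr]
    exact inter_subset_left.trans hsub

variable [T2Space M]

/-- Crosscuts whose ends are close to a given point of the unit circle are thin. Such a crosscut
`κ` has its ends on a short arc `α` of `C`, so that `κ ∪ α` lies in a small disc `B`. The theta
lemma gives two disjoint pieces of `P` bounded by `κ`. At most one of them meets the exterior `Z`
of `B`: if the piece of `κ ∪ α` does, it contains `Z`, and the other piece avoids it. -/
theorem thin_local [ConnectedSpace M] (hS : Separating M) (hM : HasCharts M) {j : ℂ → M}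
    (hj : IsOpenEmbedding j) {C P : Set M} (hC : IsCircle C) (hP : IsSide C P) (u₀ : ℝ) :
    ∃ ε > 0, ∀ u v, IsCross j C P u v → |u - u₀| < ε → |v - u₀| < ε →
      Thin j P (loopMap j 0 1 '' Ioo u v) := by
  have hcs := loopMap_continuous hj.continuous 0 1
  by_cases hx : loopMap j 0 1 u₀ ∈ C
  swap
  · obtain ⟨ε, hε, h⟩ := Metric.mem_nhds_iff.1
      (hcs.continuousAt.preimage_mem_nhds (hC.isClosed.isOpen_compl.mem_nhds hx))
    exact ⟨ε, hε, fun u v huv hu _ => absurd huv.left (h hu)⟩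
  set c : ℂ := 0 + (1 : ℝ) * Complex.exp ((2 * Real.pi * u₀ : ℝ) * Complex.I) with hc
  have hcn : ‖c‖ = 1 := by rw [hc, zero_add, norm_mul, Complex.norm_exp_ofReal_mul_I]; simp
  have hxc : loopMap j 0 1 u₀ = j c := rfl
  have hη : (0 : ℝ) < 1 / 4 := by norm_num
  set B := j '' Metric.ball c (1 / 4) with hB
  have hBo : IsOpen B := (isSide_ball hj c hη).isOpen
  have hBx : B ∈ 𝓝 (loopMap j 0 1 u₀) := hBo.mem_nhds ⟨c, Metric.mem_ball_self hη, rfl⟩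
  obtain ⟨Z, hZ, hBZ, hBZU⟩ := hS.other hM (isCircle_sphere hj c hη) (isSide_ball hj c hη)
  have hnear : ∀ z, z ∉ Z → z ∈ j '' {z | 1 / 2 < ‖z‖ ∧ ‖z‖ < 2} := by
    intro z hz
    have : z ∈ j '' Metric.closedBall c (1 / 4) := by
      rw [← Metric.ball_union_sphere, image_union]
      by_cases h : z ∈ j '' Metric.sphere c (1 / 4)
      · exact Or.inr h
      · have : z ∈ B ∪ Z := by rw [hBZU]; exact h
        exact Or.inl (this.resolve_right hz)
    refine image_mono ?_ this
    intro w hw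
    rw [mem_closedBall_iff_norm] at hw
    have h1 := abs_le.1 (abs_norm_sub_norm_le w c)
    constructor <;> linarith [h1.1, h1.2]
  obtain ⟨φ, hφ, hp, rfl⟩ := id hC
  obtain ⟨t₀, ht₀⟩ := hx
  obtain ⟨ε', hε', hφB⟩ := Metric.mem_nhds_iff.1
    (hφ.continuousAt.preimage_mem_nhds (x := t₀) (by rw [ht₀]; exact hBx))
  obtain ⟨W, hW, hWφ⟩ := circle_local hφ hp t₀ (lt_min hε' (by norm_num : (0 : ℝ) < 1 / 2))
  rw [ht₀] at hW
  obtain ⟨ε, hε, h⟩ := Metric.mem_nhds_iff.1 (hcs.continuousAt.preimage_mem_nhds (inter_mem hBx hW))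
  refine ⟨ε, hε, fun u v huv hu hv => ?_⟩
  have hIcc : Icc u v ⊆ Metric.ball u₀ ε := by
    intro t ht
    rw [Metric.mem_ball, Real.dist_eq, abs_lt]
    rw [abs_lt] at hu hv
    constructor <;> linarith [ht.1, ht.2]
  obtain ⟨κ, hk, hkr, hkP, hkP'⟩ := huv.exists_path hj
  obtain ⟨s, hs, hsu⟩ := hWφ _ (h hu).2 huv.left
  obtain ⟨t, ht, htv⟩ := hWφ _ (h hv).2 huv.right
  have hst : s ≠ t := by
    rintro rfl
    obtain ⟨n, hn⟩ := (loopMap_eq_iff hj.injective 0 one_pos u v).1 (hsu.symm.trans htv)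
    have h1 : (0 : ℝ) < n := by linarith [huv.lt]
    have h2 : (n : ℝ) < 1 := by linarith [huv.lt']
    have h1' : 0 < n := by exact_mod_cast h1
    have h2' : n < 1 := by exact_mod_cast h2
    omega
  have hs1 := abs_lt.1 (hs.trans_le (min_le_right _ _))
  have ht1 := abs_lt.1 (ht.trans_le (min_le_right _ _))
  have hs2 := abs_lt.1 (hs.trans_le (min_le_left _ _))
  have ht2 := abs_lt.1 (ht.trans_le (min_le_left _ _))
  have hlt : |t - s| < 1 := by
    rw [abs_lt]; constructor <;> linarith [hs1.1, hs1.2, ht1.1, ht1.2]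
  obtain ⟨β, hβ, hU, hI⟩ := circle_arcs hφ hp hsu htv hst hlt
  set α := seg hφ s t hsu htv
  have hα : Function.Injective α := seg_injective hφ hp hsu htv hst hlt
  obtain ⟨P₁, P₂, h1, h2, h1P, h2P, h12⟩ := theta hS hM hC hP α β κ hα hβ hk hU hI hkP
  have hkB : range κ ⊆ B := by
    rw [hkr]
    rintro _ ⟨r, hr, rfl⟩
    exact (h (hIcc hr)).1
  have hαB : range α ⊆ B := by
    rw [range_seg]
    rintro _ ⟨r, hr, rfl⟩
    refine hφB ?_
    rw [Metric.mem_ball, Real.dist_eq, abs_lt]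
    rw [mem_uIcc] at hr
    constructor <;> grind
  have hends : ∀ z ∈ ({loopMap j 0 1 u, loopMap j 0 1 v} : Set M), z ∈ range φ := by
    rintro z (rfl | rfl)
    exacts [huv.left, huv.right]
  have hthin : ∀ (γ : Path (loopMap j 0 1 u) (loopMap j 0 1 v)) (X : Set M), Function.Injective γ →
      range γ ⊆ range φ →
      IsSide (range κ ∪ range γ) X → X ⊆ P → Disjoint X Z →
      Thin j P (loopMap j 0 1 '' Ioo u v) := by
    intro γ X hγi hγ hX hXP hXZ
    have hQ : loopMap j 0 1 '' Ioo u v ⊆ range κ ∪ range γ := by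
      refine Subset.trans ?_ subset_union_left
      rw [hkr]; exact image_mono Ioo_subset_Icc_self
    have hcirc : IsCircle (range κ ∪ range γ) := isCircle_of_arcs κ γ hk hγi fun z hz =>
      (hkP hz.1).resolve_left fun h => Set.disjoint_left.1 hP.disjoint h (hγ hz.2)
    refine ⟨X, hX.isOpen, hXP, fun z hz => hnear z (Set.disjoint_left.1 hXZ hz), ?_, ?_,
      hX.disjoint.mono_right hQ⟩
    · exact hQ.trans (subset_closure_of_frontier hM hcirc hX.isOpen hX.nonempty hX.disjoint
        hX.frontier_subset)
    · rintro z ⟨hz, hzP⟩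
      have hzC : z ∉ range φ := Set.disjoint_left.1 hP.disjoint hzP
      rcases hX.frontier_subset hz with h | h
      · exact (hkP' ⟨h, hzP⟩).resolve_right fun h => hzC (hends z h)
      · exact absurd (hγ h) hzC
  by_cases hZ1 : (Z ∩ P₁).Nonempty
  · have hZP : Z ⊆ P₁ := h1.subset hZ.isPreconnected
      (hBZ.symm.mono_right (union_subset hkB hαB)) hZ1
    exact hthin β P₂ hβ (subset_union_right.trans hU.subset) h2 h2P (h12.symm.mono_right hZP)
  · exact hthin α P₁ hα (subset_union_left.trans hU.subset) h1 h1P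
      (Set.disjoint_iff_inter_eq_empty.2 (by rw [inter_comm]; exact not_nonempty_iff_eq_empty.1 hZ1))

/-- All sufficiently short crosscuts are thin, by compactness of the unit circle. -/
theorem thin_uniform [ConnectedSpace M] (hS : Separating M) (hM : HasCharts M) {j : ℂ → M}
    (hj : IsOpenEmbedding j) {C P : Set M} (hC : IsCircle C) (hP : IsSide C P) :
    ∃ δ > 0, ∀ u v, IsCross j C P u v → v - u < δ → Thin j P (loopMap j 0 1 '' Ioo u v) := by
  choose ε hε h using thin_local hS hM hj hC hP
  obtain ⟨δ, hδ, hL⟩ := lebesgue_number_lemma_of_metric (isCompact_Icc (a := (0 : ℝ)) (b := 1))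
    (c := fun u : ℝ => Metric.ball u (ε u)) (fun _ => Metric.isOpen_ball)
    (fun u _ => mem_iUnion.2 ⟨u, Metric.mem_ball_self (hε u)⟩)
  refine ⟨δ, hδ, fun u v huv hlt => ?_⟩
  have hper : ∀ s (n : ℤ), loopMap j 0 1 (s - n) = loopMap j 0 1 s := fun s n =>
    (loopMap_eq_iff hj.injective 0 one_pos _ _).2 ⟨n, by ring⟩
  have h1 : IsCross j C P (u - ⌊u⌋) (v - ⌊u⌋) := by
    refine ⟨by linarith [huv.lt], by linarith [huv.lt'], by rw [hper]; exact huv.left,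
      by rw [hper]; exact huv.right, fun t ht => ?_⟩
    have := huv.mem (t + ⌊u⌋) ⟨by linarith [ht.1], by linarith [ht.2]⟩
    rw [← hper _ ⌊u⌋] at this
    simpa using this
  obtain ⟨u₀, hu₀⟩ := hL (u - ⌊u⌋) ⟨by linarith [Int.floor_le u], by linarith [Int.lt_floor_add_one u]⟩
  have h2 := h u₀ _ _ h1 (hu₀ (Metric.mem_ball_self hδ)) (hu₀ (by
    rw [Metric.mem_ball, Real.dist_eq, abs_lt]
    constructor <;> linarith [huv.lt]))
  have h3 : loopMap j 0 1 '' Ioo (u - ⌊u⌋) (v - ⌊u⌋) = loopMap j 0 1 '' Ioo u v := by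
    rw [← image_sub_const_Ioo, image_image]
    simp only [hper]
  rwa [h3] at h2
end

/-! ### A side with only thin crosscuts is small -/

section
variable {M : Type*} [TopologicalSpace M]

theorem loopMap_exp (j : ℂ → M) {z : ℂ} (hz : z.re = 0) :
    j (Complex.exp z) = loopMap j 0 1 (z.im / (2 * Real.pi)) := by
  unfold loopMap
  have h1 : 2 * Real.pi * (z.im / (2 * Real.pi)) = z.im := by field_simp
  rw [h1, zero_add, Complex.ofReal_one, one_mul]
  congr 2
  apply Complex.ext <;> simp [hz]

/-- A neighbourhood `N` of a point of the unit circle, cut by that circle into a connected inner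
part `Ni` and a connected outer part `No`. -/
theorem local_cross {j : ℂ → M} (hj : IsOpenEmbedding j) {s : ℝ} {G : Set M} (hG : IsOpen G)
    (hs : loopMap j 0 1 s ∈ G) {ε : ℝ} (hε : 0 < ε) :
    ∃ N Ni No : Set M, IsOpen N ∧ loopMap j 0 1 s ∈ N ∧ N ⊆ G ∧ IsPreconnected N ∧
      IsPreconnected Ni ∧ IsPreconnected No ∧
      N ⊆ Ni ∪ No ∪ loopMap j 0 1 '' Ioo (s - ε) (s + ε) ∧ Ni ⊆ N ∧ No ⊆ N ∧
      Ni ⊆ j '' Metric.ball 0 1 ∧ Disjoint No (j '' Metric.closedBall 0 1) ∧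
      N ∩ j '' Metric.sphere 0 1 ⊆ closure Ni := by
  set E : ℂ → M := fun z => j (Complex.exp z) with hE
  have hEc : Continuous E := hj.continuous.comp Complex.continuous_exp
  have hEo : IsOpenMap E := hj.isOpenMap.comp Complex.isOpenMap_exp
  set w : ℂ := (2 * Real.pi * s : ℝ) * Complex.I with hw
  have hwre : w.re = 0 := by simp [hw]
  have hwim : w.im = 2 * Real.pi * s := by simp [hw]
  have hpi := Real.pi_pos
  have hEw : E w = loopMap j 0 1 s := by
    rw [hE]; simp only; rw [loopMap_exp j hwre, hwim]; congr 1; field_simp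
  obtain ⟨r, hr, hrG⟩ := Metric.mem_nhds_iff.1
    (hEc.continuousAt.preimage_mem_nhds (x := w) (hG.mem_nhds (by rw [hEw]; exact hs)))
  set r' := min r (2 * Real.pi * ε) with hr'
  have hr'0 : 0 < r' := lt_min hr (by positivity)
  have hnorm : ∀ z : ℂ, ‖Complex.exp z‖ = Real.exp z.re := Complex.norm_exp
  refine ⟨E '' Metric.ball w r', E '' (Metric.ball w r' ∩ {z | z.re < 0}),
    E '' (Metric.ball w r' ∩ {z | 0 < z.re}), hEo _ Metric.isOpen_ball,
    ⟨w, Metric.mem_ball_self hr'0, hEw⟩, ?_, ?_, ?_, ?_, ?_, image_mono inter_subset_left,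
    image_mono inter_subset_left, ?_, ?_, ?_⟩
  · rintro _ ⟨z, hz, rfl⟩
    exact hrG (Metric.ball_subset_ball (min_le_left _ _) hz)
  · exact (convex_ball w r').isPreconnected.image _ hEc.continuousOn
  · exact ((convex_ball w r').inter (convex_halfSpace_re_lt 0)).isPreconnected.image _ hEc.continuousOn
  · exact ((convex_ball w r').inter (convex_halfSpace_re_gt 0)).isPreconnected.image _ hEc.continuousOn
  · rintro _ ⟨z, hz, rfl⟩
    rcases lt_trichotomy z.re 0 with h | h | h
    · exact Or.inl (Or.inl ⟨z, ⟨hz, h⟩, rfl⟩)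
    · refine Or.inr ⟨z.im / (2 * Real.pi), ?_, (loopMap_exp j h).symm⟩
      have h1 : |z.im - 2 * Real.pi * s| < 2 * Real.pi * ε := by
        rw [← hwim, ← Complex.sub_im]
        refine (Complex.abs_im_le_norm _).trans_lt ?_
        rw [← mem_ball_iff_norm]
        exact Metric.ball_subset_ball (min_le_right _ _) hz
      rw [abs_lt] at h1
      constructor
      · rw [lt_div_iff₀ (by positivity)]; linarith
      · rw [div_lt_iff₀ (by positivity)]; linarith
    · exact Or.inl (Or.inr ⟨z, ⟨hz, h⟩, rfl⟩)
  · rintro _ ⟨z, ⟨hz, hz'⟩, rfl⟩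
    refine ⟨Complex.exp z, ?_, rfl⟩
    rw [mem_ball_zero_iff, hnorm, Real.exp_lt_one_iff]; exact hz'
  · rw [Set.disjoint_left]
    rintro _ ⟨z, ⟨hz, hz'⟩, rfl⟩ ⟨z', hz'', h⟩
    have := hj.injective h
    subst this
    rw [mem_closedBall_zero_iff, hnorm, Real.exp_le_one_iff] at hz''
    exact absurd hz'' (not_le.2 hz')
  · rintro _ ⟨⟨z, hz, rfl⟩, ⟨z', hz', h⟩⟩
    have := hj.injective h
    subst this
    rw [mem_sphere_zero_iff_norm, hnorm, Real.exp_eq_one_iff] at hz'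
    have h1 : z ∈ closure (Metric.ball w r' ∩ {z | z.re < 0}) := by
      refine Metric.isOpen_ball.inter_closure ⟨hz, ?_⟩
      rw [Complex.closure_setOfPred_re_lt]
      exact hz'.le
    exact image_closure_subset_closure_image hEc ⟨z, h1, rfl⟩

variable [T2Space M]

/-- Let `P'` be a connected open subset of `P` that meets the half disc of a chart, and suppose
that every point of `P'` on the unit circle of the chart lies on a thin crosscut contained in `P'`.
Then `P'` lies in the disc of radius `2`. In fact `P'` is covered by the component `V` of a point
`z₀` of the half disc in `P'` minus the unit circle, the crosscuts adherent to `V`, and the thin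
pieces behind them. -/
theorem small_of_thin (hM : HasCharts M) {j : ℂ → M} (hj : IsOpenEmbedding j) {P P' : Set M}
    (hP'o : IsOpen P') (hP' : IsPreconnected P') (hPP : P' ⊆ P)
    (hcr : ∀ y ∈ P', y ∈ j '' Metric.sphere 0 1 → ∃ u v s, s ∈ Ioo u v ∧ loopMap j 0 1 s = y ∧
      loopMap j 0 1 '' Ioo u v ⊆ P' ∧ Thin j P (loopMap j 0 1 '' Ioo u v))
    {z₀ : M} (hz₀ : z₀ ∈ P') (hz₀' : z₀ ∈ j '' Metric.closedBall 0 (1 / 2)) :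
    P' ⊆ j '' Metric.ball 0 2 := by
  have := hM.locallyPathConnectedSpace
  set S := j '' Metric.sphere (0 : ℂ) 1 with hS
  have hSc : IsClosed S := ((isCompact_sphere 0 1).image hj.continuous).isClosed
  have hzS : z₀ ∉ S := by
    rintro ⟨a, ha, h⟩
    obtain ⟨b, hb, rfl⟩ := hz₀'
    obtain rfl := hj.injective h
    rw [mem_sphere_zero_iff_norm] at ha
    rw [mem_closedBall_zero_iff, ha] at hb
    norm_num at hb
  have hLS : ∀ s, loopMap j 0 1 s ∈ S := fun s => by
    rw [hS, ← range_loopMap j 0 one_pos]; exact mem_range_self _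
  have hQS : ∀ u v, loopMap j 0 1 '' Ioo u v ⊆ S := by
    rintro u v _ ⟨s, _, rfl⟩; exact hLS s
  have hGo : IsOpen (P' \ S) := hP'o.sdiff hSc
  set V := connectedComponentIn (P' \ S) z₀ with hV
  have hVo : IsOpen V := hGo.connectedComponentIn
  have hVp : IsPreconnected V := isPreconnected_connectedComponentIn
  have hVs : V ⊆ P' \ S := connectedComponentIn_subset _ _
  have hzV : z₀ ∈ V := mem_connectedComponentIn ⟨hz₀, hzS⟩
  have hVmax : ∀ T, IsPreconnected T → T ⊆ P' \ S → (T ∩ V).Nonempty → T ⊆ V := by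
    rintro T hT hTs ⟨t, ht, htV⟩
    rw [hV, connectedComponentIn_eq htV]
    exact hT.subset_connectedComponentIn ht hTs
  have hVB : V ⊆ j '' Metric.ball 0 1 := by
    refine (isSide_ball hj 0 one_pos).subset hVp
      (Set.disjoint_left.2 fun z hz => (hVs hz).2) ⟨z₀, hzV, ?_⟩
    have hsub := Metric.closedBall_subset_ball (x := (0 : ℂ)) (by norm_num : (1 / 2 : ℝ) < 1)
    have hz := image_mono (f := j) hsub hz₀'
    exact hz
  -- a thin piece never meets the inner component
  have hVX : ∀ Q X, Q ⊆ S → X ⊆ j '' {z | 1 / 2 < ‖z‖ ∧ ‖z‖ < 2} → frontier X ∩ P ⊆ Q →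
      Disjoint V X := by
    intro Q X hQ hX hf
    by_contra h
    rw [Set.not_disjoint_iff_nonempty_inter] at h
    have : V ⊆ X := conn_subset hVp (Set.disjoint_left.2 fun z hz hzf =>
      (hVs hz).2 (hQ (hf ⟨hzf, hPP (hVs hz).1⟩))) h
    obtain ⟨a, ha, h'⟩ := hX (this hzV)
    obtain ⟨b, hb, rfl⟩ := hz₀'
    obtain rfl := hj.injective h'
    rw [mem_closedBall_zero_iff] at hb
    linarith [ha.1]
  -- near a point of the circle adherent to `V`
  have hloc : ∀ u v s, s ∈ Ioo u v → loopMap j 0 1 '' Ioo u v ⊆ P' → loopMap j 0 1 s ∈ closure V →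
      ∃ N No, IsOpen N ∧ loopMap j 0 1 s ∈ N ∧ IsPreconnected No ∧ No ⊆ P' \ S ∧
        N ⊆ V ∪ No ∪ loopMap j 0 1 '' Ioo u v ∧ N ∩ S ⊆ closure V := by
    intro u v s hs hQ hcl
    obtain ⟨N, Ni, No, h1, h2, h3, h4, h5, h6, h7, h8, h9, h10, h11, h12⟩ :=
      local_cross hj hP'o (hQ ⟨s, hs, rfl⟩) (lt_min (sub_pos.2 hs.1) (sub_pos.2 hs.2))
    have hNiS : Ni ⊆ P' \ S := fun z hz => ⟨h3 (h8 hz), fun hz' =>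
      Set.disjoint_left.1 (isSide_ball hj 0 one_pos).disjoint (h10 hz) hz'⟩
    have hNiV : Ni ⊆ V := by
      refine hVmax _ h5 hNiS ?_
      obtain ⟨w, hwN, hwV⟩ := mem_closure_iff.1 hcl N h1 h2
      refine ⟨w, ?_, hwV⟩
      rcases h7 hwN with (h | h) | h
      · exact h
      · exact absurd (image_mono Metric.ball_subset_closedBall (hVB hwV)) (Set.disjoint_left.1 h11 h)
      · exact absurd (hQS _ _ h) (hVs hwV).2
    refine ⟨N, No, h1, h2, h6, fun z hz => ⟨h3 (h9 hz), fun hz' => Set.disjoint_left.1 h11 hz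
      (image_mono Metric.sphere_subset_closedBall hz')⟩, ?_, h12.trans (closure_mono hNiV)⟩
    intro z hz
    rcases h7 hz with (h | h) | ⟨t, ht, rfl⟩
    · exact Or.inl (Or.inl (hNiV h))
    · exact Or.inl (Or.inr h)
    · refine Or.inr ⟨t, ⟨?_, ?_⟩, rfl⟩
      · linarith [ht.1, min_le_left (s - u) (v - s)]
      · linarith [ht.2, min_le_right (s - u) (v - s)]
  -- adherence propagates along crosscuts
  have hQV : ∀ u v s, s ∈ Ioo u v → loopMap j 0 1 '' Ioo u v ⊆ P' → loopMap j 0 1 s ∈ closure V →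
      loopMap j 0 1 '' Ioo u v ⊆ closure V := by
    intro u v s hs hQ hcl
    refine clopen_in (isPreconnected_Ioo.image _ (loopMap_continuous hj.continuous 0 1).continuousOn)
      ?_ ?_ ⟨_, ⟨s, hs, rfl⟩, hcl⟩
    · rintro _ ⟨t, ht, rfl⟩ hycl
      obtain ⟨N, No, h1, h2, -, -, -, h6⟩ := hloc u v t ht hQ hycl
      exact ⟨N, h1.mem_nhds h2, fun z hz hzQ => h6 ⟨hz, hQS _ _ hzQ⟩⟩
    · intro y _ h
      rw [← closure_closure, mem_closure_iff_nhds]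
      intro U hU
      obtain ⟨z, hz, -, hz'⟩ := h U hU
      exact ⟨z, hz, hz'⟩
  let D : Set M := {y | y ∈ V ∨ (y ∈ S ∧ y ∈ closure V) ∨ ∃ Q X : Set M, Q ⊆ S ∧ Q ⊆ closure V ∧
    IsOpen X ∧ X ⊆ j '' {z | 1 / 2 < ‖z‖ ∧ ‖z‖ < 2} ∧ frontier X ∩ P ⊆ Q ∧ y ∈ X}
  have hD : P' ⊆ D := by
    refine clopen_in hP' ?_ ?_ ⟨z₀, hz₀, Or.inl hzV⟩
    · rintro y hy (hyV | ⟨hyS, hyV⟩ | ⟨Q, X, hQ, hQV', hXo, hX, hf, hyX⟩)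
      · exact ⟨V, hVo.mem_nhds hyV, fun z hz _ => Or.inl hz⟩
      · obtain ⟨u, v, s, hs, rfl, hQP, X, hXo, hXP, hX, hQX, hf, hXQ⟩ := hcr y hy hyS
        obtain ⟨N, No, h1, h2, h3, h4, h5, h6⟩ := hloc u v s hs hQP hyV
        refine ⟨N, h1.mem_nhds h2, fun z hz _ => ?_⟩
        rcases h5 hz with (h | h) | h
        · exact Or.inl h
        · refine Or.inr (Or.inr ⟨_, X, hQS u v, hQV u v s hs hQP hyV, hXo, hX, hf, ?_⟩)
          refine conn_subset h3 (Set.disjoint_left.2 fun w hw hwf => (h4 hw).2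
            (hQS _ _ (hf ⟨hwf, hPP (h4 hw).1⟩))) ?_ h
          obtain ⟨w, hwN, hwX⟩ := mem_closure_iff.1 (hQX ⟨s, hs, rfl⟩) N h1 h2
          refine ⟨w, ?_, hwX⟩
          rcases h5 hwN with (h | h) | h
          · exact absurd hwX (Set.disjoint_left.1 (hVX _ X (hQS u v) hX hf) h)
          · exact h
          · exact absurd h (Set.disjoint_left.1 hXQ hwX)
        · exact Or.inr (Or.inl ⟨hQS _ _ h, hQV u v s hs hQP hyV h⟩)
      · exact ⟨X, hXo.mem_nhds hyX, fun z hz _ =>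
          Or.inr (Or.inr ⟨Q, X, hQ, hQV', hXo, hX, hf, hz⟩)⟩
    · intro y hy h
      by_cases hyS : y ∈ S
      · by_cases hyV : y ∈ closure V
        · exact Or.inr (Or.inl ⟨hyS, hyV⟩)
        obtain ⟨u, v, s, hs, rfl, hQP, -⟩ := hcr y hy hyS
        obtain ⟨N, Ni, No, h1, h2, h3, h4, -⟩ := local_cross hj (hP'o.sdiff isClosed_closure)
          (s := s) ⟨hy, hyV⟩ one_pos
        obtain ⟨z, hz, -, hzV | ⟨-, hzV⟩ | ⟨Q, X, hQ, hQV', hXo, hX, hf, hzX⟩⟩ := h N (h1.mem_nhds h2)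
        · exact absurd (subset_closure hzV) (h3 hz).2
        · exact absurd hzV (h3 hz).2
        · refine Or.inr (Or.inr ⟨Q, X, hQ, hQV', hXo, hX, hf, ?_⟩)
          exact conn_subset h4 (Set.disjoint_left.2 fun w hw hwf => (h3 hw).2
            (hQV' (hf ⟨hwf, hPP (h3 hw).1⟩))) ⟨z, hz, hzX⟩ h2
      · have hWs := connectedComponentIn_subset (P' \ S) y
        have hyW : y ∈ connectedComponentIn (P' \ S) y := mem_connectedComponentIn ⟨hy, hyS⟩
        obtain ⟨z, hz, -, hzV | ⟨hzS, -⟩ | ⟨Q, X, hQ, hQV', hXo, hX, hf, hzX⟩⟩ :=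
          h _ (hGo.connectedComponentIn.mem_nhds hyW)
        · exact Or.inl (hVmax _ isPreconnected_connectedComponentIn hWs ⟨z, hz, hzV⟩ hyW)
        · exact absurd hzS (hWs hz).2
        · refine Or.inr (Or.inr ⟨Q, X, hQ, hQV', hXo, hX, hf, ?_⟩)
          exact conn_subset isPreconnected_connectedComponentIn (Set.disjoint_left.2
            fun w hw hwf => (hWs hw).2 (hQ (hf ⟨hwf, hPP (hWs hw).1⟩))) ⟨z, hz, hzX⟩ hyW
  intro y hy
  rcases hD hy with h | ⟨⟨z, hz, h⟩, -⟩ | ⟨Q, X, hQ, hQV', hXo, hX, hf, hyX⟩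
  · exact image_mono (Metric.ball_subset_ball (by norm_num)) (hVB h)
  · refine ⟨z, ?_, h⟩
    rw [mem_sphere_zero_iff_norm] at hz
    rw [mem_ball_zero_iff, hz]; norm_num
  · exact image_mono (fun z hz => mem_ball_zero_iff.2 hz.2) (hX hyX)
end

/-! ### Every circle is null-homotopic -/

section
variable {M : Type*} [TopologicalSpace M]

/-- Crosscuts that meet coincide. -/
theorem IsCross.image_subset {j : ℂ → M} (hj : IsOpenEmbedding j) {C P : Set M} (hd : Disjoint P C)
    {u v u' v' : ℝ} (h : IsCross j C P u v) (h' : IsCross j C P u' v')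
    (hne : (loopMap j 0 1 '' Ioo u' v' ∩ loopMap j 0 1 '' Ioo u v).Nonempty) :
    loopMap j 0 1 '' Ioo u' v' ⊆ loopMap j 0 1 '' Ioo u v := by
  have hit := loopMap_eq_iff hj.injective 0 one_pos
  obtain ⟨_, ⟨t, ht, rfl⟩, ⟨s, hs, hst⟩⟩ := hne
  obtain ⟨n, rfl⟩ := (hit s t).1 hst
  have hper : ∀ r, loopMap j 0 1 (r + n) = loopMap j 0 1 r := fun r =>
    (hit _ _).2 ⟨-n, by push_cast; ring⟩
  have h1 : u + n ≤ u' := by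
    by_contra hlt
    have := h'.mem (u + n) ⟨not_le.1 hlt, by linarith [hs.1, ht.2]⟩
    rw [hper] at this
    exact Set.disjoint_left.1 hd this h.left
  have h2 : v' ≤ v + n := by
    by_contra hlt
    have := h'.mem (v + n) ⟨by linarith [hs.2, ht.1], not_le.1 hlt⟩
    rw [hper] at this
    exact Set.disjoint_left.1 hd this h.right
  rintro _ ⟨r, hr, rfl⟩
  refine ⟨r - n, ⟨by linarith [hr.1], by linarith [hr.2]⟩, ?_⟩
  rw [← hper]; congr 1; ring

/-- Each point of the unit circle that lies in `P` is on a crosscut, if the unit circle meets `C`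
in at least two points. -/
theorem exists_cross {j : ℂ → M} (hj : IsOpenEmbedding j) {C P : Set M} (hC : IsClosed C)
    (hP : IsSide C P) {c₁ c₂ : M} (h₁ : c₁ ∈ C ∩ j '' Metric.sphere 0 1)
    (h₂ : c₂ ∈ C ∩ j '' Metric.sphere 0 1) (hne : c₁ ≠ c₂) {s : ℝ} (hs : loopMap j 0 1 s ∈ P) :
    ∃ u v, IsCross j C P u v ∧ s ∈ Ioo u v := by
  have hit := loopMap_eq_iff hj.injective 0 one_pos
  have hc := loopMap_continuous hj.continuous 0 1
  set A : Set ℝ := loopMap j 0 1 ⁻¹' C with hA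
  have hAc : IsClosed A := hC.preimage hc
  have hsA : s ∉ A := Set.disjoint_left.1 hP.disjoint hs
  have hrep : ∀ c ∈ C ∩ j '' Metric.sphere 0 1, ∃ a, a ∈ A ∧ a + 1 ∈ A ∧ a ≤ s ∧ s ≤ a + 1 ∧
      loopMap j 0 1 a = c := by
    rintro c ⟨hcC, hcS⟩
    rw [← range_loopMap j 0 one_pos] at hcS
    obtain ⟨t, rfl⟩ := hcS
    have hmem := toIcoMod_mem_Ico (zero_lt_one' ℝ) (s - 1) t
    have heq : loopMap j 0 1 (toIcoMod (zero_lt_one' ℝ) (s - 1) t) = loopMap j 0 1 t :=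
      (hit _ _).2 ⟨toIcoDiv (zero_lt_one' ℝ) (s - 1) t, by simp [toIcoMod]⟩
    have heq1 : loopMap j 0 1 (toIcoMod (zero_lt_one' ℝ) (s - 1) t + 1) = loopMap j 0 1 t := by
      rw [← heq]; exact (hit _ _).2 ⟨-1, by push_cast; ring⟩
    refine ⟨_, ?_, ?_, by linarith [hmem.2], by linarith [hmem.1], heq⟩
    · rw [hA, mem_preimage, heq]; exact hcC
    · rw [hA, mem_preimage, heq1]; exact hcC
  obtain ⟨a, ha, ha', has, has', hac⟩ := hrep c₁ h₁
  obtain ⟨b, hb, hb', hbs, hbs', hbc⟩ := hrep c₂ h₂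
  have hL : sSup (A ∩ Iic s) ∈ A ∩ Iic s :=
    (hAc.inter isClosed_Iic).csSup_mem ⟨a, ha, has⟩ ⟨s, fun _ h => h.2⟩
  have hR : sInf (A ∩ Ici s) ∈ A ∩ Ici s :=
    (hAc.inter isClosed_Ici).csInf_mem ⟨a + 1, ha', has'⟩ ⟨s, fun _ h => h.2⟩
  have hLle : ∀ t ∈ A, t ≤ s → t ≤ sSup (A ∩ Iic s) := fun t ht hts =>
    le_csSup ⟨s, fun _ h => h.2⟩ ⟨ht, hts⟩
  have hRle : ∀ t ∈ A, s ≤ t → sInf (A ∩ Ici s) ≤ t := fun t ht hts =>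
    csInf_le ⟨s, fun _ h => h.2⟩ ⟨ht, hts⟩
  generalize sSup (A ∩ Iic s) = u at *
  generalize sInf (A ∩ Ici s) = v at *
  have hus : u < s := lt_of_le_of_ne hL.2 fun h => hsA (h ▸ hL.1)
  have hsv : s < v := lt_of_le_of_ne hR.2 fun h => hsA (h ▸ hR.1)
  refine ⟨u, v, ⟨hus.trans hsv, ?_, hL.1, hR.1, ?_⟩, hus, hsv⟩
  · by_contra hge
    rw [not_lt] at hge
    have e1 : a = u := le_antisymm (hLle a ha has) (by linarith [hRle _ ha' has'])
    have e2 : b = u := le_antisymm (hLle b hb hbs) (by linarith [hRle _ hb' hbs'])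
    exact hne (by rw [← hac, ← hbc, e1, e2])
  · intro t ht
    refine hP.subset (T := loopMap j 0 1 '' Ioo u v)
      (isPreconnected_Ioo.image _ hc.continuousOn) ?_ ⟨_, ⟨s, ⟨hus, hsv⟩, rfl⟩, hs⟩ ⟨t, ht, rfl⟩
    rw [Set.disjoint_left]
    rintro _ ⟨r, hr, rfl⟩ hrC
    rcases le_total r s with h | h
    · linarith [hLle r hrC h, hr.1]
    · linarith [hRle r hrC h, hr.2]

variable [T2Space M]

/-- A circle that is not null and meets the half disc of a chart leaves the unit disc of that
chart, and so it meets the unit circle at least twice. -/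
theorem exists_two_points {j : ℂ → M} (hj : IsOpenEmbedding j) {C : Set M} (hC : IsCircle C)
    (hnn : ¬ Null C) {x : M} (hx : x ∈ C) (hx' : x ∈ j '' Metric.closedBall 0 (1 / 2)) :
    ∃ c₁ ∈ C ∩ j '' Metric.sphere 0 1, ∃ c₂ ∈ C ∩ j '' Metric.sphere 0 1, c₁ ≠ c₂ := by
  have : ∃ y ∈ C, y ∉ j '' Metric.closedBall 0 1 := by
    by_contra! h
    exact hnn ((null_of_chart hj).mono fun y hy => image_subset_range _ _ (h y hy))
  obtain ⟨y, hy, hy'⟩ := this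
  have hxB : x ∈ j '' Metric.ball 0 1 := image_mono (Metric.closedBall_subset_ball (by norm_num)) hx'
  have hyB : y ∉ j '' Metric.ball 0 1 := fun h => hy' (image_mono Metric.ball_subset_closedBall h)
  have hyS : y ∉ j '' Metric.sphere 0 1 := fun h => hy' (image_mono Metric.sphere_subset_closedBall h)
  have hxS : x ∉ j '' Metric.sphere 0 1 := Set.disjoint_left.1 (isSide_ball hj 0 one_pos).disjoint hxB
  obtain ⟨α, β, hα, hβ, hU, hI⟩ := hC.arcs hx hy (by rintro rfl; exact hyB hxB)
  have hmeet : ∀ γ : Path x y, ∃ z ∈ range γ, z ∈ j '' Metric.sphere 0 1 := by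
    intro γ
    by_contra! h
    exact hyB ((isSide_ball hj 0 one_pos).subset (T := range γ) (isPreconnected_range γ.continuous)
      (Set.disjoint_left.2 h) ⟨x, ⟨0, γ.source⟩, hxB⟩ ⟨1, γ.target⟩)
  obtain ⟨c₁, h1, hs₁⟩ := hmeet α
  obtain ⟨c₂, h2, hs₂⟩ := hmeet β
  refine ⟨c₁, ⟨by rw [← hU]; exact Or.inl h1, hs₁⟩, c₂, ⟨by rw [← hU]; exact Or.inr h2, hs₂⟩, ?_⟩
  rintro rfl
  rcases hI ⟨h1, h2⟩ with rfl | rfl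
  exacts [hxS hs₁, hyS hs₁]

/-- A circle `C` that is not null and meets the half disc of a chart can be replaced by one that is
not null and has a side, contained in the given side `P` of `C`, that misses the half disc. -/
theorem reduction [ConnectedSpace M] (hS : Separating M) (hM : HasCharts M) {j : ℂ → M}
    (hj : IsOpenEmbedding j) {C P : Set M} (hC : IsCircle C) (hnn : ¬ Null C) (hP : IsSide C P)
    {x : M} (hx : x ∈ C) (hx' : x ∈ j '' Metric.closedBall 0 (1 / 2)) :
    ∃ C' P', IsCircle C' ∧ ¬ Null C' ∧ IsSide C' P' ∧ P' ⊆ P ∧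
      Disjoint P' (j '' Metric.closedBall 0 (1 / 2)) := by
  classical
  by_contra hno
  have hmeet : ∀ C' P', IsCircle C' → ¬ Null C' → IsSide C' P' → P' ⊆ P →
      ∃ z ∈ P', z ∈ j '' Metric.closedBall 0 (1 / 2) := by
    intro C' P' h1 h2 h3 h4
    by_contra! h
    exact hno ⟨C', P', h1, h2, h3, h4, Set.disjoint_left.2 h⟩
  obtain ⟨c₁, hc₁, c₂, hc₂, hne⟩ := exists_two_points hj hC hnn hx hx'
  obtain ⟨δ, hδ, hthin⟩ := thin_uniform hS hM hj hC hP
  obtain ⟨k, hk⟩ := exists_nat_one_div_lt hδ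
  -- a grid on the circle that meets every crosscut of length at least `δ`
  let N : ℕ := k + 1
  have hN : (0 : ℝ) < N := by positivity
  let m : Set M → Finset ℕ := fun P' =>
    (Finset.range N).filter fun i => loopMap j 0 1 ((i : ℝ) / N) ∈ P'
  have hgrid : ∀ u v : ℝ, δ ≤ v - u → ∃ i ∈ Finset.range N,
      loopMap j 0 1 ((i : ℝ) / N) ∈ loopMap j 0 1 '' Ioo u v := by
    intro u v huv
    set l : ℤ := ⌊N * u⌋ + 1 with hl
    have h1 : N * u < l := by rw [hl]; push_cast; exact Int.lt_floor_add_one _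
    have h2 : (l : ℝ) ≤ N * u + 1 := by
      rw [hl]; push_cast; linarith [Int.floor_le (N * u)]
    have h3 : 1 < N * (v - u) := by
      have : 1 / (N : ℝ) < v - u := by
        have := hk.trans_le huv
        simpa [N] using this
      rw [div_lt_iff₀ hN] at this
      linarith
    have hN' : (0 : ℤ) < N := by exact_mod_cast hN
    refine ⟨(l % N).toNat, ?_, l / N, ⟨?_, ?_⟩, ?_⟩
    · rw [Finset.mem_range]
      have := Int.emod_lt_of_pos l hN'
      have := Int.emod_nonneg l hN'.ne'
      omega
    · rw [lt_div_iff₀ hN]; linarith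
    · rw [div_lt_iff₀ hN]; linarith
    · rw [loopMap_eq_iff hj.injective 0 one_pos]
      refine ⟨-(l / N), ?_⟩
      have h4 : (((l % N).toNat : ℤ) : ℝ) = ((l % N : ℤ) : ℝ) := by
        rw [Int.toNat_of_nonneg (Int.emod_nonneg l hN'.ne')]
      have h5 : ((l % N : ℤ) : ℝ) + N * ((l / N : ℤ) : ℝ) = l := by
        exact_mod_cast Int.emod_add_mul_ediv l N
      rw [Int.cast_natCast] at h4
      rw [h4]
      push_cast
      field_simp
      linarith
  -- descent on the number of grid points in `P'`, where each crosscut of `P` by the unit circle is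
  -- either contained in `P'` or disjoint from it
  have main : ∀ n : ℕ, ∀ C' P' : Set M, IsCircle C' → ¬ Null C' → IsSide C' P' → P' ⊆ P →
      (∀ u v, IsCross j C P u v → loopMap j 0 1 '' Ioo u v ⊆ P' ∨
        Disjoint (loopMap j 0 1 '' Ioo u v) P') → (m P').card = n → False := by
    intro n
    induction n using Nat.strong_induction_on with
    | _ n ih =>
    intro C' P' hC' hnn' hP' hPP hinv hn
    by_cases hall : ∀ u v, IsCross j C P u v → loopMap j 0 1 '' Ioo u v ⊆ P' →
        Thin j P (loopMap j 0 1 '' Ioo u v)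
    · obtain ⟨z₀, hz₀, hz₀'⟩ := hmeet C' P' hC' hnn' hP' hPP
      have hsm : P' ⊆ j '' Metric.ball 0 2 := by
        refine small_of_thin hM hj hP'.isOpen hP'.isPreconnected hPP ?_ hz₀ hz₀'
        intro y hy hyS
        rw [← range_loopMap j 0 one_pos] at hyS
        obtain ⟨s, rfl⟩ := hyS
        obtain ⟨u, v, huv, hs⟩ := exists_cross hj hC.isClosed hP hc₁ hc₂ hne (hPP hy)
        have hsub := (hinv u v huv).resolve_right fun h => Set.disjoint_left.1 h ⟨s, hs, rfl⟩ hy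
        exact ⟨u, v, s, hs, rfl, hsub, hall u v huv hsub⟩
      have hcl : IsClosed (j '' Metric.closedBall (0 : ℂ) 2) :=
        ((isCompact_closedBall 0 2).image hj.continuous).isClosed
      refine hnn' ((null_of_chart hj).mono ?_)
      refine (subset_closure_of_frontier hM hC' hP'.isOpen hP'.nonempty hP'.disjoint
        hP'.frontier_subset).trans (Subset.trans ?_ (image_subset_range j (Metric.closedBall 0 2)))
      exact closure_minimal (hsm.trans (image_mono Metric.ball_subset_closedBall)) hcl
    · push Not at hall
      obtain ⟨u, v, huv, hQP, hnt⟩ := hall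
      obtain ⟨i, hi, hiQ⟩ := hgrid u v (by
        by_contra h
        exact hnt (hthin u v huv (not_le.1 h)))
      obtain ⟨κ, hk, hkr, hkP, hkP'⟩ := huv.exists_path hj
      have hκQ : range κ ⊆ loopMap j 0 1 '' Ioo u v ∪ {loopMap j 0 1 u, loopMap j 0 1 v} := fun z hz =>
        (hkP hz).elim (fun h => hkP' ⟨hz, h⟩) Or.inr
      have hQκ : loopMap j 0 1 '' Ioo u v ⊆ range κ := by
        rw [hkr]; exact image_mono Ioo_subset_Icc_self
      have hcs := loopMap_continuous hj.continuous 0 1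
      -- the ends of the crosscut lie in `C` and are adherent to `P'`, so they are on `C'`
      have hend : ∀ t ∈ Icc u v, loopMap j 0 1 t ∈ C → loopMap j 0 1 t ∈ C' := by
        intro t ht htC
        have h1 : loopMap j 0 1 t ∈ closure P' := by
          refine closure_mono hQP (image_closure_subset_closure_image hcs ⟨t, ?_, rfl⟩)
          rwa [closure_Ioo huv.lt.ne]
        exact (hP'.closure_subset h1).resolve_left fun h =>
          Set.disjoint_left.1 hP.disjoint (hPP h) htC
      have hpq : loopMap j 0 1 u ≠ loopMap j 0 1 v := fun h => by
        have := hk (κ.source.trans (h.trans κ.target.symm))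
        exact absurd this (by simp)
      obtain ⟨α, β, hα, hβ, hU, hI⟩ := hC'.arcs (hend u ⟨le_rfl, huv.lt.le⟩ huv.left)
        (hend v ⟨huv.lt.le, le_rfl⟩ huv.right) hpq
      obtain ⟨P₁, P₂, h1, h2, h1P, h2P, -⟩ := theta hS hM hC' hP' α β κ hα hβ hk hU hI
        (hκQ.trans (union_subset_union_left _ hQP))
      -- the side of `κ ∪ γ` in `P'` loses the grid point on the crosscut, so the descent shows that
      -- this circle is null; for both arcs of `C'` this makes `C'` null, through homotopies to `κ`
      have hstep : ∀ (γ : Path (loopMap j 0 1 u) (loopMap j 0 1 v)) (X : Set M), Function.Injective γ →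
          range γ ⊆ C' → IsSide (range κ ∪ range γ) X → X ⊆ P' → Null (range κ ∪ range γ) := by
        intro γ X hγi hγ hX hXP
        by_contra hnull
        have hcirc : IsCircle (range κ ∪ range γ) := isCircle_of_arcs κ γ hk hγi fun z hz =>
          (hκQ hz.1).resolve_left fun h => Set.disjoint_left.1 hP'.disjoint (hQP h) (hγ hz.2)
        have hXQ : Disjoint X (loopMap j 0 1 '' Ioo u v) :=
          hX.disjoint.mono_right (hQκ.trans subset_union_left)
        refine ih (m X).card ?_ _ X hcirc hnull hX (hXP.trans hPP) ?_ rfl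
        · rw [← hn]
          refine Finset.card_lt_card (Finset.ssubset_iff_of_subset ?_ |>.2 ⟨i, ?_, ?_⟩)
          · intro l hl
            simp only [m, Finset.mem_filter] at hl ⊢
            exact ⟨hl.1, hXP hl.2⟩
          · exact Finset.mem_filter.2 ⟨hi, hQP hiQ⟩
          · intro h
            exact Set.disjoint_left.1 hXQ (Finset.mem_filter.1 h).2 hiQ
        · intro u' v' huv'
          rcases hinv u' v' huv' with h | h
          swap
          · exact Or.inr (h.mono_right hXP)
          by_cases hQQ : (loopMap j 0 1 '' Ioo u' v' ∩ loopMap j 0 1 '' Ioo u v).Nonempty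
          · exact Or.inr (hXQ.symm.mono_left (huv.image_subset hj hP.disjoint huv' hQQ))
          by_cases hTX : (loopMap j 0 1 '' Ioo u' v' ∩ X).Nonempty
          · refine Or.inl (hX.subset (isPreconnected_Ioo.image _ hcs.continuousOn) ?_ hTX)
            rw [Set.disjoint_left]
            rintro z hz (hz' | hz')
            · rcases hκQ hz' with h' | h'
              · exact hQQ ⟨z, hz, h'⟩
              · have : z ∈ C := by
                  rcases h' with rfl | rfl
                  exacts [huv.left, huv.right]
                exact Set.disjoint_left.1 hP.disjoint (hPP (h hz)) this
            · exact Set.disjoint_left.1 hP'.disjoint (h hz) (hγ hz')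
          · exact Or.inr (Set.disjoint_iff_inter_eq_empty.2 (not_nonempty_iff_eq_empty.1 hTX))
      have n1 := hstep α P₁ hα (subset_union_left.trans hU.subset) h1 h1P
      have n2 := hstep β P₂ hβ (subset_union_right.trans hU.subset) h2 h2P
      refine hnn' ?_
      rw [← hU]
      refine null_of_arcs α β hα hβ hI (Path.Homotopic.trans (p₁ := κ) ?_ ?_)
      · exact n1 α κ subset_union_right subset_union_left
      · exact n2 κ β subset_union_left subset_union_right
  exact main _ C P hC hnn hP subset_rfl (fun u v huv => Or.inl (by
    rintro _ ⟨t, ht, rfl⟩; exact huv.mem t ht)) rfl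

/-- If every circle separates a compact surface, then every circle is null. Otherwise choose a
circle that is not null and one of its sides `P`, such that `P` meets as few half discs of a fixed
finite cover as possible. By `reduction` no half disc that meets `P` meets the circle, so `P` is
open and closed. -/
theorem all_null [ConnectedSpace M] [CompactSpace M] (hS : Separating M) (hM : HasCharts M) {C : Set M}
    (hC : IsCircle C) : Null C := by
  classical
  by_contra hnn
  choose j hj hj0 using hM
  obtain ⟨t, ht⟩ := isCompact_univ.elim_finite_subcover
    (fun x : M => j x '' Metric.ball 0 (1 / 2)) (fun x => (hj x).isOpenMap _ Metric.isOpen_ball)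
    (fun x _ => mem_iUnion.2 ⟨x, 0, Metric.mem_ball_self (by norm_num), hj0 x⟩)
  have hM : HasCharts M := fun x => ⟨j x, hj x, hj0 x⟩
  let D : M → Set M := fun x => j x '' Metric.closedBall 0 (1 / 2)
  have main : ∀ n : ℕ, ∀ C P : Set M, IsCircle C → ¬ Null C → IsSide C P →
      (t.filter fun x => (D x ∩ P).Nonempty).card = n → False := by
    intro n
    induction n using Nat.strong_induction_on with
    | _ n ih =>
    intro C P hC hnn hP hn
    by_cases hall : ∀ x ∈ t, (D x ∩ P).Nonempty → D x ⊆ P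
    · have hcl : IsClosed P := by
        refine isClosed_of_closure_subset fun y hy => ?_
        obtain ⟨x, hx, hxy⟩ := mem_iUnion₂.1 (ht (mem_univ y))
        obtain ⟨w, hw, hwP⟩ := mem_closure_iff.1 hy _ ((hj x).isOpenMap _ Metric.isOpen_ball) hxy
        exact hall x hx ⟨w, image_mono Metric.ball_subset_closedBall hw, hwP⟩
          (image_mono Metric.ball_subset_closedBall hxy)
      have huniv : P = univ := IsClopen.eq_univ ⟨hcl, hP.isOpen⟩ hP.nonempty
      obtain ⟨c, hc⟩ := hC.isConnected.nonempty
      exact Set.disjoint_left.1 hP.disjoint (huniv ▸ mem_univ c) hc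
    · push Not at hall
      obtain ⟨x, hx, hne, hnot⟩ := hall
      have hxC : ¬ Disjoint (D x) C := fun hd => hnot (hP.subset
        ((convex_closedBall 0 (1 / 2)).isPreconnected.image _ (hj x).continuous.continuousOn) hd hne)
      obtain ⟨y, hy, hyC⟩ := Set.not_disjoint_iff.1 hxC
      obtain ⟨C', P', h1, h2, h3, h4, h5⟩ := reduction hS hM (hj x) hC hnn hP hyC hy
      refine ih _ ?_ C' P' h1 h2 h3 rfl
      rw [← hn]
      refine Finset.card_lt_card (Finset.ssubset_iff_of_subset ?_ |>.2 ⟨x, ?_, ?_⟩)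
      · intro z hz
        rw [Finset.mem_filter] at hz ⊢
        exact ⟨hz.1, hz.2.mono (inter_subset_inter_right _ h4)⟩
      · exact Finset.mem_filter.2 ⟨hx, hne⟩
      · intro h
        obtain ⟨w, hw, hw'⟩ := (Finset.mem_filter.1 h).2
        exact Set.disjoint_left.1 h5 hw' hw
  obtain ⟨A, B, hA, -⟩ := hS.sides hM hC
  exact main _ C A hC hnn hA rfl
end

/-! ### Every path is homotopic to a simple arc -/

section
variable {M : Type*} [TopologicalSpace M]

/-- The image under `j` of the straight segment from `a` to `b`. -/
noncomputable def chartLine {j : ℂ → M} (hj : Continuous j) (a b : ℂ) {p q : M} (hp : j a = p)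
    (hq : j b = q) : Path p q :=
  seg (f := fun t : ℝ => j (a + t * (b - a))) (hj.comp (by fun_prop)) 0 1 (by simpa using hp)
    (by simpa using hq)

theorem range_chartLine {j : ℂ → M} (hj : Continuous j) {a b : ℂ} {p q : M} (hp : j a = p)
    (hq : j b = q) {S : Set ℂ} (hS : Convex ℝ S) (ha : a ∈ S) (hb : b ∈ S) :
    range (chartLine hj a b hp hq) ⊆ j '' S := by
  rw [chartLine, range_seg, uIcc_of_le zero_le_one]
  rintro _ ⟨t, ht, rfl⟩
  refine ⟨_, ?_, rfl⟩
  have := hS.add_smul_sub_mem ha hb ht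
  simpa using this

theorem chartLine_injective {j : ℂ → M} (hj : IsOpenEmbedding j) {a b : ℂ} (hab : a ≠ b) {p q : M}
    (hp : j a = p) (hq : j b = q) : Function.Injective (chartLine hj.continuous a b hp hq) := by
  intro x y hxy
  have h : a + ((0 + x * (1 - 0) : ℝ) : ℂ) * (b - a) = a + ((0 + y * (1 - 0) : ℝ) : ℂ) * (b - a) :=
    hj.injective hxy
  have h1 := mul_right_cancel₀ (sub_ne_zero.2 hab.symm) (add_left_cancel h)
  have h2 := Complex.ofReal_injective h1
  exact Subtype.ext (by linarith)

theorem injective_seg_of_injOn {f : ℝ → M} (hf : Continuous f) {s t : ℝ} (hst : s < t)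
    (hi : InjOn f (Icc s t)) {p q : M} (hp : f s = p) (hq : f t = q) :
    Function.Injective (seg hf s t hp hq) := by
  intro x y hxy
  have hm : ∀ x : unitInterval, s + x * (t - s) ∈ Icc s t := fun x =>
    ⟨by nlinarith [x.2.1], by nlinarith [x.2.2]⟩
  have h := hi (hm x) (hm y) hxy
  exact Subtype.ext (mul_right_cancel₀ (sub_ne_zero.2 hst.ne') (add_left_cancel h))

/-- An excursion of a simple arc from the image of a convex set `S` of the chart closes up, by a
straight segment in `S`, to a circle; as circles are null, the excursion is homotopic to every path
of the chart with the same endpoints. -/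
theorem homotopic_of_excursion {j : ℂ → M} (hj : IsOpenEmbedding j)
    (hN : ∀ C : Set M, IsCircle C → Null C) {f : ℝ → M} (hf : Continuous f) {S : Set ℂ}
    (hS : Convex ℝ S) {s t : ℝ} (hst : s ≤ t) (hi : InjOn f (Icc s t)) (hs : f s ∈ j '' S)
    (ht : f t ∈ j '' S) (hgap : ∀ r ∈ Ioo s t, f r ∉ j '' S) (γ : Path (f s) (f t))
    (hγ : range γ ⊆ range j) : (seg hf s t rfl rfl).Homotopic γ := by
  rcases hst.eq_or_lt with rfl | hlt
  · refine null_of_chart hj _ _ ?_ hγ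
    rw [range_seg, uIcc_self, image_singleton, singleton_subset_iff]
    exact image_subset_range _ _ hs
  obtain ⟨a, ha, hja⟩ := hs
  obtain ⟨b, hb, hjb⟩ := ht
  have hne : a ≠ b := by
    rintro rfl
    exact hlt.ne (hi ⟨le_rfl, hst⟩ ⟨hst, le_rfl⟩ (hja.symm.trans hjb))
  have hκ := range_chartLine hj.continuous hja hjb hS ha hb
  have hc := isCircle_of_arcs _ _ (injective_seg_of_injOn hf hlt hi rfl rfl)
    (chartLine_injective hj hne hja hjb) (by
      rw [range_seg, uIcc_of_le hst]
      rintro _ ⟨⟨r, hr, rfl⟩, h⟩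
      rcases hr.1.eq_or_lt with rfl | h1
      · exact Or.inl rfl
      rcases hr.2.eq_or_lt with rfl | h2
      · exact Or.inr rfl
      exact absurd (hκ h) (hgap r ⟨h1, h2⟩))
  exact (hN _ hc _ _ subset_union_left subset_union_right).trans
    (null_of_chart hj _ _ (hκ.trans (image_subset_range _ _)) hγ)

/-- A simple arc with both ends in the image of a compact convex set `S` of a chart is homotopic to
every path of the chart with these endpoints. -/
theorem homotopic_of_injOn [T2Space M] {j : ℂ → M} (hj : IsOpenEmbedding j)
    (hN : ∀ C : Set M, IsCircle C → Null C) {f : ℝ → M} (hf : Continuous f) {S : Set ℂ}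
    (hS : Convex ℝ S) (hSc : IsCompact S) {s₀ τ : ℝ} (hi : InjOn f (Icc s₀ τ))
    (hs₀ : f s₀ ∈ j '' S) {t : ℝ} (ht : t ∈ Icc s₀ τ) (htS : f t ∈ j '' S)
    (γ : Path (f s₀) (f t)) (hγ : range γ ⊆ range j) : (seg hf s₀ t rfl rfl).Homotopic γ := by
  have hK : IsClosed (j '' S) := (hSc.image hj.continuous).isClosed
  set T : Set ℝ := f ⁻¹' (j '' S) with hT
  have hTc : IsClosed T := hK.preimage hf
  obtain ⟨δ, hδ, hsub⟩ := (isCompact_Icc.inter_right hTc).exists_thickening_subset_open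
    (hj.isOpen_range.preimage hf) (s := Icc s₀ τ ∩ T) fun x hx => image_subset_range _ _ hx.2
  have hshort : ∀ r ∈ Icc s₀ τ, r ∈ T → ∀ r', |r' - r| < δ → f r' ∈ range j := fun r hr hrT r' h =>
    hsub (Metric.mem_thickening_iff.2 ⟨r, ⟨hr, hrT⟩, by rwa [Real.dist_eq]⟩)
  -- induction in parameter steps of length `δ / 2`: an excursion from `S` may last long, but within
  -- `δ` of a visit to `S` the arc stays in the chart
  have main : ∀ n : ℕ, ∀ t ∈ Icc s₀ τ, f t ∈ j '' S → t - s₀ ≤ n * (δ / 2) →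
      ∀ γ : Path (f s₀) (f t), range γ ⊆ range j → (seg hf s₀ t rfl rfl).Homotopic γ := by
    intro n
    induction n with
    | zero =>
      intro t ht htS hle γ hγ
      obtain rfl : t = s₀ := by
        have := ht.1
        simp only [CharP.cast_eq_zero, zero_mul] at hle
        linarith
      refine null_of_chart hj _ _ ?_ hγ
      rw [range_seg, uIcc_self, image_singleton, singleton_subset_iff]
      exact image_subset_range _ _ htS
    | succ n ih =>
      intro t ht htS hle γ hγ
      have hch : ∀ r, t - δ / 2 ≤ r → r ≤ t → range (seg hf r t rfl rfl) ⊆ range j := by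
        intro r hr hrt
        rw [range_seg, uIcc_of_le hrt]
        rintro _ ⟨x, hx, rfl⟩
        exact hshort t ht htS x (by rw [abs_lt]; constructor <;> linarith [hx.1, hx.2])
      by_cases hcase : s₀ < t - δ / 2
      swap
      · exact null_of_chart hj _ _ (hch s₀ (not_lt.1 hcase) ht.1) hγ
      obtain ⟨x, hx, hxmax⟩ := (isCompact_Icc.inter_right hTc).exists_isMaxOn
        (s := Icc s₀ (t - δ / 2) ∩ T) ⟨s₀, ⟨le_rfl, hcase.le⟩, hs₀⟩ continuousOn_id
      obtain ⟨y, hy, hymin⟩ := (isCompact_Icc.inter_right hTc).exists_isMinOn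
        (s := Icc (t - δ / 2) t ∩ T) ⟨t, ⟨by linarith, le_rfl⟩, htS⟩ continuousOn_id
      have hxy : x ≤ y := hx.1.2.trans hy.1.1
      have hgap : ∀ r ∈ Ioo x y, f r ∉ j '' S := by
        intro r hr hrS
        rcases le_total r (t - δ / 2) with h | h
        · have : r ≤ x := hxmax ⟨⟨hx.1.1.trans hr.1.le, h⟩, hrS⟩
          linarith [hr.1]
        · have : y ≤ r := hymin ⟨⟨h, hr.2.le.trans hy.1.2⟩, hrS⟩
          linarith [hr.2]
      obtain ⟨a, ha, hja⟩ := hs₀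
      obtain ⟨b, hb, hjb⟩ := hx.2
      obtain ⟨c, hc, hjc⟩ := hy.2
      have h1 := ih x ⟨hx.1.1, by linarith [hx.1.2, ht.2]⟩ hx.2
        (by push_cast at hle; linarith [hx.1.2]) (chartLine hj.continuous a b hja hjb)
        ((range_chartLine hj.continuous hja hjb hS ha hb).trans (image_subset_range _ _))
      have h2 := homotopic_of_excursion hj hN hf hS hxy
        (hi.mono (Icc_subset_Icc hx.1.1 (hy.1.2.trans ht.2))) hx.2 hy.2 hgap
        (chartLine hj.continuous b c hjb hjc)
        ((range_chartLine hj.continuous hjb hjc hS hb hc).trans (image_subset_range _ _))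
      refine (seg_trans hf rfl rfl rfl).symm.trans ((Path.Homotopic.hcomp
        ((seg_trans hf rfl rfl rfl).symm.trans (Path.Homotopic.hcomp h1 h2))
        (Path.Homotopic.refl (seg hf y t rfl rfl))).trans (null_of_chart hj _ _ ?_ hγ))
      rw [Path.trans_range, Path.trans_range]
      refine union_subset (union_subset ?_ ?_) (hch y hy.1.1 hy.1.2)
      · exact (range_chartLine hj.continuous hja hjb hS ha hb).trans (image_subset_range _ _)
      · exact (range_chartLine hj.continuous hjb hjc hS hb hc).trans (image_subset_range _ _)
  obtain ⟨n, hn⟩ := exists_nat_ge ((t - s₀) / (δ / 2))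
  exact main n t ht htS ((div_le_iff₀ (by linarith)).1 hn) γ hγ

/-- A path that is homotopic to a simple arc; the arc may degenerate to a point, which is the case
`τ = 0`. -/
def Tame {p q : M} (γ : Path p q) : Prop :=
  ∃ (f : ℝ → M) (hf : Continuous f) (τ : ℝ) (hp : f 0 = p) (hq : f τ = q),
    0 ≤ τ ∧ InjOn f (Icc 0 τ) ∧ γ.Homotopic (seg hf 0 τ hp hq)

theorem Tame.congr {p q : M} {γ γ' : Path p q} (h : Tame γ) (h' : γ'.Homotopic γ) : Tame γ' := by
  obtain ⟨f, hf, τ, hp, hq, h0, hi, hh⟩ := h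
  exact ⟨f, hf, τ, hp, hq, h0, hi, h'.trans hh⟩

theorem Tame.homotopic_refl {p : M} {γ : Path p p} (h : Tame γ) : γ.Homotopic (Path.refl p) := by
  obtain ⟨f, hf, τ, hp, hq, h0, hi, hh⟩ := h
  obtain rfl : 0 = τ := hi ⟨le_rfl, h0⟩ ⟨h0, le_rfl⟩ (hp.trans hq.symm)
  exact hh.trans (seg_self hf hp)

/-- A tame path followed by a path in a chart is tame: cut the simple arc where it first meets the
straight segment between the ends of the second path, and continue along that segment. -/
theorem Tame.trans [T2Space M] {j : ℂ → M} (hj : IsOpenEmbedding j)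
    (hN : ∀ C : Set M, IsCircle C → Null C) {p q r : M} {γ : Path p q} (h : Tame γ) (δ : Path q r)
    (hδ : range δ ⊆ range j) : Tame (γ.trans δ) := by
  obtain ⟨f, hf, τ, hp, hq, h0, hi, hh⟩ := h
  obtain ⟨b, hb⟩ := hδ ⟨0, δ.source⟩
  obtain ⟨c, hc⟩ := hδ ⟨1, δ.target⟩
  set S : Set ℂ := segment ℝ b c with hS
  have hSv : Convex ℝ S := convex_segment b c
  have hSc : IsCompact S := by
    rw [hS, segment_eq_image]
    exact isCompact_Icc.image (by fun_prop)
  have hT : IsClosed (f ⁻¹' (j '' S)) := ((hSc.image hj.continuous).isClosed).preimage hf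
  obtain ⟨t, ht, htmin⟩ := (isCompact_Icc.inter_right hT).exists_isMinOn
    (s := Icc 0 τ ∩ f ⁻¹' (j '' S)) ⟨τ, ⟨h0, le_rfl⟩, b, left_mem_segment ℝ b c, hb.trans hq.symm⟩
    continuousOn_id
  have hbefore : ∀ r ∈ Ico 0 t, f r ∉ j '' S := fun r hr hrS => by
    have : t ≤ r := htmin ⟨⟨hr.1, hr.2.le.trans ht.1.2⟩, hrS⟩
    linarith [hr.2]
  obtain ⟨w, hw, hjw⟩ := ht.2
  have hbS : b ∈ S := left_mem_segment ℝ b c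
  have hcS : c ∈ S := right_mem_segment ℝ b c
  -- the part of the arc after its first point on the segment is pushed into the chart
  have key : ∀ κ : Path (f t) r, range κ ⊆ range j →
      (γ.trans δ).Homotopic ((seg hf 0 t hp rfl).trans κ) := by
    intro κ hκ
    subst hq
    have h1 := homotopic_of_injOn hj hN hf hSv hSc (hi.mono (Icc_subset_Icc ht.1.1 le_rfl)) ht.2
      ⟨ht.1.2, le_rfl⟩ ⟨b, hbS, hb⟩ (chartLine hj.continuous w b hjw hb)
      ((range_chartLine hj.continuous hjw hb hSv hw hbS).trans (image_subset_range _ _))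
    have h2 := hh.trans (seg_trans hf hp (rfl : f t = f t) rfl).symm
    refine (Path.Homotopic.hcomp (h2.trans (Path.Homotopic.hcomp (Path.Homotopic.refl _) h1))
      (Path.Homotopic.refl δ)).trans (Path.Homotopic.trans ⟨Path.Homotopy.transAssoc _ _ _⟩
        (Path.Homotopic.hcomp (Path.Homotopic.refl _) (null_of_chart hj _ _ ?_ hκ)))
    rw [Path.trans_range]
    exact union_subset ((range_chartLine hj.continuous hjw hb hSv hw hbS).trans
      (image_subset_range _ _)) hδ
  by_cases hwc : w = c
  · subst hwc
    have htr : f t = r := hjw.symm.trans hc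
    subst htr
    refine ⟨f, hf, t, hp, rfl, ht.1.1, hi.mono (Icc_subset_Icc le_rfl ht.1.2), ?_⟩
    refine (key (Path.refl _) ?_).trans ⟨Path.Homotopy.transRefl _⟩
    rintro _ ⟨_, rfl⟩
    exact ⟨w, hjw⟩
  have hl : Continuous fun s : ℝ => j (w + (s - t : ℝ) * (c - w)) := hj.continuous.comp (by fun_prop)
  let g : ℝ → M := fun s => if s ≤ t then f s else j (w + (s - t : ℝ) * (c - w))
  have hg : Continuous g := Continuous.if_le hf hl continuous_id continuous_const (by
    rintro s (rfl : s = t); simp [hjw])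
  have hg1 : ∀ s ≤ t, g s = f s := fun s hs => if_pos hs
  have hg2 : ∀ s, t ≤ s → g s = j (w + (s - t : ℝ) * (c - w)) := by
    intro s hs
    rcases hs.eq_or_lt with rfl | h
    · rw [hg1 _ le_rfl]; simp [hjw]
    · exact if_neg (not_le.2 h)
  have hgS : ∀ s ∈ Icc t (t + 1), g s ∈ j '' S := by
    intro s hs
    rw [hg2 s hs.1]
    refine ⟨_, ?_, rfl⟩
    have := hSv.add_smul_sub_mem hw hcS (t := s - t) ⟨by linarith [hs.1], by linarith [hs.2]⟩
    simpa using this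
  have hgr : g (t + 1) = r := by rw [hg2 _ (by linarith)]; simp [hc]
  have hgp : g 0 = p := by rw [hg1 _ ht.1.1, hp]
  have hinj : ∀ s ∈ Icc 0 (t + 1), ∀ s' ∈ Icc 0 (t + 1), s ≤ s' → g s = g s' → s = s' := by
    intro s hs s' hs' hle heq
    rcases le_total s' t with h | h
    · rw [hg1 _ (hle.trans h), hg1 _ h] at heq
      exact hi ⟨hs.1, (hle.trans h).trans ht.1.2⟩ ⟨hs'.1, h.trans ht.1.2⟩ heq
    rcases lt_or_ge s t with h' | h'
    · refine absurd (hgS s' ⟨h, hs'.2⟩) ?_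
      rw [← heq, hg1 _ h'.le]
      exact hbefore s ⟨hs.1, h'⟩
    · rw [hg2 _ h, hg2 _ h'] at heq
      have h1 := mul_right_cancel₀ (sub_ne_zero.2 (Ne.symm hwc)) (add_left_cancel (hj.injective heq))
      have h2 := Complex.ofReal_injective h1
      linarith
  refine ⟨g, hg, t + 1, hgp, hgr, by linarith [ht.1.1], fun s hs s' hs' heq => ?_, ?_⟩
  · rcases le_total s s' with h | h
    · exact hinj s hs s' hs' h heq
    · exact (hinj s' hs' s hs h heq.symm).symm
  · have hgt : g t = f t := hg1 t le_rfl
    refine (key (seg hg t (t + 1) hgt hgr) ?_).trans ?_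
    · rw [range_seg, uIcc_of_le (by linarith)]
      rintro _ ⟨s, hs, rfl⟩
      exact image_subset_range _ _ (hgS s hs)
    · have : seg hf 0 t hp rfl = seg hg 0 t hgp hgt := by
        ext x
        refine (hg1 _ ?_).symm
        nlinarith [x.2.2, ht.1.1]
      rw [this]
      exact seg_trans hg hgp hgt hgr

/-- If all circles are null, every path is tame, because it is a finite concatenation of paths in
charts. -/
theorem tame_path [T2Space M] (hM : HasCharts M) (hN : ∀ C : Set M, IsCircle C → Null C) {p q : M}
    (γ : Path p q) : Tame γ := by
  choose j hj hj0 using hM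
  have hf : Continuous γ.extend := γ.continuous_extend
  obtain ⟨t, ht0, htm, ⟨n, hn⟩, ht⟩ := exists_monotone_Icc_subset_open_cover_unitInterval
    (c := fun x : M => γ ⁻¹' range (j x)) (fun x => (hj x).isOpen_range.preimage γ.continuous)
    (fun s _ => mem_iUnion.2 ⟨γ s, 0, hj0 _⟩)
  have h0 : γ.extend 0 = p := γ.extend_zero
  have main : ∀ (n : ℕ) (z : M) (hz : γ.extend (t n) = z), Tame (seg hf 0 (t n) h0 hz) := by
    intro n
    induction n with
    | zero =>
      rintro z hz
      exact ⟨γ.extend, hf, t 0, h0, hz, (t 0).2.1, by simp [ht0], Path.Homotopic.refl _⟩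
    | succ n ih =>
      rintro z hz
      obtain ⟨x, hx⟩ := ht n
      refine (Tame.trans (hj x) hN (ih _ rfl) (seg hf (t n) (t (n + 1)) rfl hz) ?_).congr
        (seg_trans hf h0 rfl hz).symm
      have hle : (t n : ℝ) ≤ t (n + 1) := htm n.le_succ
      rw [range_seg, uIcc_of_le hle]
      rintro _ ⟨s, hs, rfl⟩
      have hsI : s ∈ Icc (0:ℝ) 1 := ⟨(t n).2.1.trans hs.1, hs.2.trans (t (n + 1)).2.2⟩
      rw [γ.extend_apply hsI]
      exact hx (a := ⟨s, hsI⟩) ⟨hs.1, hs.2⟩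
  have h1 : γ.extend (t n) = q := by rw [hn n le_rfl]; exact γ.extend_one
  refine (main n q h1).congr ?_
  refine homotopic_seg hf (s := 0) (t := t n) ⟨⟨fun x => (x : ℝ), by fun_prop⟩, rfl, ?_⟩ _ _ _ ?_
  · rw [hn n le_rfl]
  · intro x
    exact (γ.extend_apply x.2).symm

theorem simplyConnected_of_null [T2Space M] [ConnectedSpace M] (hM : HasCharts M)
    (hN : ∀ C : Set M, IsCircle C → Null C) : SimplyConnectedSpace M := by
  have := hM.locallyPathConnectedSpace
  have : PathConnectedSpace M := PathConnectedSpace.of_locallyPathConnectedSpace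
  rw [simply_connected_iff_loops_nullhomotopic]
  exact ⟨this, fun x γ => (tame_path hM hN γ).homotopic_refl⟩
end

/-! ### Conclusion -/

section
variable {M : Type*} [TopologicalSpace M]

theorem IsLocEuclidean.hasCharts (hM : IsLocEuclidean 2 M) : HasCharts M := by
  intro x
  obtain ⟨U, hU, hx, ⟨e⟩⟩ := hM x
  let e' : ℂ ≃ₜ U := (Complex.orthonormalBasisOneI.repr.toHomeomorph).trans e.symm
  refine ⟨fun z => e' (z + e'.symm ⟨x, hx⟩), ?_, by simp⟩
  exact hU.isOpenEmbedding_subtypeVal.comp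
    (e'.isOpenEmbedding.comp (Homeomorph.addRight (e'.symm ⟨x, hx⟩)).isOpenEmbedding)

/-- The circle `ℝ / ℤ` is homeomorphic to the unit circle of the Euclidean plane. -/
noncomputable def addCircleHomeo : AddCircle (1 : ℝ) ≃ₜ Metric.sphere (0 : EuclideanSpace ℝ (Fin 2)) 1 :=
  (AddCircle.homeomorphCircle one_ne_zero).trans
    (Complex.orthonormalBasisOneI.repr.toHomeomorph.subtype (p := fun z => z ∈ Submonoid.unitSphere ℂ)
      (q := fun z => z ∈ Metric.sphere (0 : EuclideanSpace ℝ (Fin 2)) 1) (fun z => by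
        change z ∈ Metric.sphere (0 : ℂ) 1 ↔ _
        simp))

/-- The parametrized circles are exactly the subsets homeomorphic to the unit circle. -/
theorem isCircle_iff [T2Space M] {C : Set M} :
    IsCircle C ↔ Nonempty (C ≃ₜ Metric.sphere (0 : EuclideanSpace ℝ (Fin 2)) 1) := by
  constructor
  · rintro ⟨φ, hc, hp, hr⟩
    obtain ⟨e, -⟩ := exists_circle_equiv hc hp hr
    exact ⟨e.symm.trans addCircleHomeo⟩
  · rintro ⟨e⟩
    let e' : AddCircle (1 : ℝ) ≃ₜ C := addCircleHomeo.trans e.symm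
    refine ⟨fun s => e' (s : AddCircle (1 : ℝ)), ?_, fun s t => ?_, ?_⟩
    · exact continuous_subtype_val.comp (e'.continuous.comp (AddCircle.continuous_mk' 1))
    · rw [Subtype.val_inj, e'.injective.eq_iff, eq_comm, ← sub_eq_zero, ← AddCircle.coe_sub,
        AddCircle.coe_eq_zero_iff]
      refine exists_congr fun n => ?_
      rw [zsmul_eq_mul, mul_one, eq_sub_iff_add_eq, add_comm, eq_comm]
    · ext y
      constructor
      · rintro ⟨s, rfl⟩; exact (e' s).2
      · intro hy
        obtain ⟨s, hs⟩ := QuotientAddGroup.mk_surjective (e'.symm ⟨y, hy⟩)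
        refine ⟨s, ?_⟩
        change (e' (QuotientAddGroup.mk s) : M) = y
        rw [hs, e'.apply_symm_apply]
end

/-- A compact connected topological 2-manifold without boundary is simply connected if
and only if every subset homeomorphic to the circle separates it into exactly two
connected components. -/
theorem simply_connected_iff_every_circle_separates
    (M : Type*) [TopologicalSpace M] [T2Space M] [SecondCountableTopology M]
    (hM : IsLocEuclidean 2 M) [CompactSpace M] [ConnectedSpace M] :
    SimplyConnectedSpace M ↔
      ∀ C : Set M, Nonempty (C ≃ₜ Metric.sphere (0 : EuclideanSpace ℝ (Fin 2)) 1) →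
        Nat.card (ConnectedComponents ↥(Cᶜ)) = 2 := by
  have hM' := hM.hasCharts
  constructor
  · intro _ C hC
    exact forward_dir hM' (isCircle_iff.2 hC)
  · intro h
    have hS : Separating M := fun C hC => h C (isCircle_iff.1 hC)
    exact simplyConnected_of_null hM' fun C hC => all_null hS hM' hC
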